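/- Let Ω be a bounded open convex set in ℝ² containing the origin in its interior, and suppose that sup_{θ∈S¹} sup_{δ>0} δ^{-1/2} μ(θ,δ) < ∞ (curvature bounded below in the generalized sense). Then there is a constant C_Ω such that for all R ≥ 2 and all h with R^{1/2} ≤ h ≤ R one has 𝒢_Ω(R,h) ≤ C_Ω R^{1/2}. -/

import Mathlib

/-!
Write `R = Q ^ 4`.  It is enough to show `∫ |E|² ≪ R √R` over `[R, R + √R]`, since a longer interval is
cut into pieces of length `√R` (`Body.long_bound`), and only large `R` matters (`Body.short_all`).

*Smoothing.*  By convexity, the count in `tΩ` lies between the averages of the counts in translates of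
`(t ± ε)Ω` over a copy of `±εΩ`, with `ε = R^(-1/2)`.  By Parseval's identity on the torus these averages
are absolutely convergent series `∑ₖ T² χ̂(Tk) aₖ` with `T = t ± ε`, `|aₖ| ≪ min(1, √R / |k|)`
(`Body.count_le`, `Body.le_count`).  The term `k = 0` is the area of `TΩ`, within `O(√R)` of that of `tΩ`.

*Chord lengths.*  `χ̂(Tk)` is the one-dimensional Fourier transform at `T` of the function `S k` of chord
lengths orthogonal to `k` (`Body.J_eq_ft`).  This function is concave on its support, whose right end is
`ρ*(k)`, and the curvature hypothesis bounds it by a multiple of `|k|^(-3/2) √s` at depth `s`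
(`Body.profile`).  For `T` near `R`, replacing `S k` by its second difference with step `1 / (2R)` only
changes the transform by a factor close to `-4`.  The second difference has `L¹` mass
`≪ R^(-3/2) |k|^(-3/2)`, concentrated near the two ends of the support; the part at distance more than
`R^(-1/2)` from both ends is so small that it may be summed trivially (`Profile.right_mass`,
`Profile.mid_mass`, `Sys.d2_split`).

*Large sieve.*  Smoothing the integral over an interval of length about `√R` by a band-limited majorant,
only pairs of frequencies with `|ρ*(k) - ρ*(l)| ≪ R^(-1/2)` contribute (`large_sieve`).  On a dyadic block
`|k| ~ r` the frequencies are divided into about `r / J` angular sectors, with Cauchy–Schwarz over the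
sectors, so that the remaining pairs satisfy `|k - l| ≤ J` (`Sys.block`).  For `r > √R` take `J = 1`; the
decay of `aₖ` makes the sum over blocks converge.

*Gain for small frequencies.*  For `r ≤ √R`, `J` is a small power of `r`, and the loss from Cauchy–Schwarz
is beaten if the pairs `(k, k + j)` with `0 < |j| ≤ J` contribute no more than the diagonal.  The mass at
the right end of `S k` is governed by a chord at depth `1 / R`.  A long chord forces the second
difference `ρ*(k + j) + ρ*(k - j) - 2 ρ*(k)` to be large (`Body.chordLen_mul_le`), because `j` is transversal
to `k` whenever `ρ*(k + j)` is close to `ρ*(k)` (`Sys.cross_ge`).  After truncating `ρ*(k + j) - ρ*(k)` at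
height `≪ R^(-1/2)`, the second differences telescope along `j`, so their sum over a box is small
(`box_telescope`, `Sys.close_sum`).  The blocks are combined by a weighted Cauchy–Schwarz inequality
(`Sys.right_bound`, `Sys.main_bound`), and `Sys.short_bound` translates the result back to the lattice rest.
-/

open MeasureTheory Set
open scoped Pointwise RealInnerProductSpace NNReal ENNReal

noncomputable section

abbrev E2 := EuclideanSpace ℝ (Fin 2)

/-- The embedding of an integer vector into the Euclidean plane. -/
def ek (k : Fin 2 → ℤ) : E2 := (WithLp.equiv 2 (Fin 2 → ℝ)).symm fun i => (k i : ℝ)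

/-- Number of lattice points in a set. -/
def latticeCount (S : Set E2) : ℕ := Nat.card {k : Fin 2 → ℤ | ek k ∈ S}

/-- The lattice rest `E_Ω(t) = card(tΩ ∩ ℤ²) − t²·area(Ω)`. -/
def latticeRest (Ω : Set E2) (t : ℝ) : ℝ :=
  (latticeCount (t • Ω) : ℝ) - t ^ 2 * (volume Ω).toReal

/-- The mean square discrepancy `𝒢_Ω(R,h) = ((1/h)∫_R^{R+h} |E_Ω(t)|² dt)^{1/2}`. -/
def meanSquare (Ω : Set E2) (R h : ℝ) : ℝ :=
  Real.sqrt ((1 / h) * ∫ t in R..(R + h), (latticeRest Ω t) ^ 2)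

/-- The support function `ρ*(ξ) = sup {⟨x,ξ⟩ : x ∈ Ω}`. -/
def suppFn (Ω : Set E2) (ξ : E2) : ℝ := sSup ((fun x => ⟪x, ξ⟫) '' Ω)

/-- `μ(θ,δ)`, the diameter of the cap `𝒞(θ,δ) = {x ∈ ∂Ω : ⟨x,θ⟩ ≥ ρ*(θ) − δ}`. -/
def capDiam (Ω : Set E2) (θ : E2) (δ : ℝ) : ℝ :=
  Metric.diam {x ∈ frontier Ω | suppFn Ω θ - δ ≤ ⟪x, θ⟫}

/-- Curvature bounded below in the generalized sense:
`sup_{θ∈S¹} sup_{δ>0} δ^{-1/2} μ(θ,δ) < ∞`. -/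
def CurvBddBelow (Ω : Set E2) : Prop :=
  ∃ K : ℝ, ∀ θ : E2, ‖θ‖ = 1 → ∀ δ : ℝ, 0 < δ → capDiam Ω θ δ ≤ K * Real.sqrt δ

/-! ### A band-limited majorant -/

/-- The additive character `e(x) = exp(2πix)`. -/
def ee (x : ℝ) : ℂ := Complex.exp (2 * Real.pi * x * Complex.I)

lemma ee_add (x y : ℝ) : ee (x + y) = ee x * ee y := by
  unfold ee
  rw [← Complex.exp_add]
  push_cast
  ring_nf

@[simp] lemma norm_ee (x : ℝ) : ‖ee x‖ = 1 := by
  unfold ee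
  have : (2 * Real.pi * x * Complex.I : ℂ) = ((2 * Real.pi * x : ℝ) : ℂ) * Complex.I := by
    push_cast; ring
  rw [this, Complex.norm_exp_ofReal_mul_I]

@[simp] lemma ee_zero : ee 0 = 1 := by simp [ee]

lemma conj_ee (x : ℝ) : (starRingEnd ℂ) (ee x) = ee (-x) := by
  unfold ee
  rw [← Complex.exp_conj]
  simp [Complex.conj_ofNat]

lemma continuous_ee : Continuous ee := by
  unfold ee
  fun_prop

lemma ee_re (x : ℝ) : (ee x).re = Real.cos (2 * Real.pi * x) := by
  unfold ee
  have : (2 * Real.pi * x * Complex.I : ℂ) = ((2 * Real.pi * x : ℝ) : ℂ) * Complex.I := by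
    push_cast; ring
  rw [this, Complex.exp_ofReal_mul_I_re]

lemma fourier_eq_ee (f : ℝ → ℂ) (y : ℝ) :
    FourierTransform.fourier f y = ∫ x, f x * ee (-(x * y)) := by
  rw [Real.fourier_real_eq_integral_exp_smul]
  congr 1
  ext x
  rw [smul_eq_mul, mul_comm]
  unfold ee
  congr 2
  push_cast
  ring

open FourierTransform SchwartzMap in
/-- A nonnegative integrable majorant of the indicator function of `[-1,1]` whose Fourier transform
is bounded and supported in `[-1,1]`. It is a multiple of `|b̂|²` for a small bump function `b`. -/
lemma exists_majorant : ∃ η : ℝ → ℝ, ∃ A : ℝ, 0 ≤ A ∧ Continuous η ∧ Integrable η ∧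
    (∀ x, 0 ≤ η x) ∧ (∀ x, |x| ≤ 1 → 1 ≤ η x) ∧
    (∀ y, ‖∫ x, (η x : ℂ) * ee (-(x * y))‖ ≤ A) ∧
    (∀ y, 1 ≤ |y| → ∫ x, (η x : ℂ) * ee (-(x * y)) = 0) := by
  let b : ContDiffBump (0 : ℝ) := ⟨1 / 12, 1 / 6, by norm_num, by norm_num⟩
  let f : ℝ → ℂ := fun x => (b x : ℂ)
  have hfc : HasCompactSupport f := b.hasCompactSupport.comp_left (g := fun x : ℝ => (x : ℂ)) rfl
  have hfd : ContDiff ℝ (⊤ : ℕ∞) f := Complex.ofRealCLM.contDiff.comp b.contDiff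
  let B : SchwartzMap ℝ ℂ := hfc.toSchwartzMap hfd
  have hBf : ∀ x, B x = (b x : ℂ) := fun x => rfl
  let g := convolution (ContinuousLinearMap.mul ℂ ℂ) B B
  have hF : ∀ x, 𝓕 g x = (𝓕 B x) * (𝓕 B x) := by
    intro x
    simp [g, fourier_convolution]
  have hreal : ∀ x, ((𝓕 B x).re : ℂ) = 𝓕 B x := by
    intro x
    rw [← Complex.conj_eq_iff_re]
    rw [SchwartzMap.fourier_coe, fourier_eq_ee, ← integral_conj, ← integral_neg_eq_self]
    congr 1
    ext y
    rw [map_mul, conj_ee, hBf, hBf, b.neg, Complex.conj_ofReal]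
    congr 2
    ring
  let I0 : ℝ := ∫ x, b x
  have hI0 : 0 < I0 := b.integral_pos
  have hlow : ∀ x, |x| ≤ 1 → I0 / 2 ≤ (𝓕 B x).re := by
    intro x hx
    rw [SchwartzMap.fourier_coe, fourier_eq_ee]
    have hInt : Integrable (fun y => B y * ee (-(y * x))) := by
      refine (B.integrable (μ := volume)).mul_bdd (c := 1) ?_ ?_
      · exact (continuous_ee.comp (by fun_prop)).aestronglyMeasurable
      · filter_upwards with y using by simp
    rw [← RCLike.re_eq_complex_re, ← integral_re hInt]
    have h2 : I0 / 2 = ∫ y, b y / 2 := by rw [integral_div]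
    rw [h2]
    refine integral_mono (b.integrable.div_const 2) hInt.re ?_
    intro y
    simp only [RCLike.re_eq_complex_re]
    rw [hBf, Complex.re_ofReal_mul, ee_re]
    by_cases hy : |y| < 1 / 6
    · have hc : 1 / 2 ≤ Real.cos (2 * Real.pi * -(y * x)) := by
        rw [← Real.cos_abs, ← Real.cos_pi_div_three]
        have hpi := Real.pi_pos
        refine Real.cos_le_cos_of_nonneg_of_le_pi (abs_nonneg _) (by linarith) ?_
        have h3 : |y * x| ≤ 1 / 6 := by
          rw [abs_mul]
          nlinarith [abs_nonneg x, abs_nonneg y]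
        rw [abs_mul, abs_neg, abs_of_pos (by positivity : (0 : ℝ) < 2 * Real.pi)]
        nlinarith
      have := b.nonneg (x := y)
      nlinarith
    · have : b y = 0 := b.zero_of_le_dist (by simpa using not_lt.mp hy : (1 / 6 : ℝ) ≤ dist y 0)
      simp [this]
  have hgi : ∀ y, ∫ x, (𝓕 g x) * ee (-(x * y)) = g (-y) := by
    intro y
    rw [← fourier_eq_ee]
    have h1 : (𝓕⁻ (𝓕 g : SchwartzMap ℝ ℂ) : SchwartzMap ℝ ℂ) = g := by simp
    have h2 : g (-y) = (𝓕⁻ (fun x : ℝ => ((𝓕 g : SchwartzMap ℝ ℂ) x : ℂ)) : ℝ → ℂ) (-y) := by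
      rw [← SchwartzMap.fourierInv_coe, h1]
    rw [h2, Real.fourierInv_eq_fourier_neg, neg_neg]
  refine ⟨fun x => 4 / I0 ^ 2 * ((𝓕 B x).re) ^ 2,
    4 / I0 ^ 2 * SchwartzMap.seminorm ℝ 0 0 g, by positivity, ?_, ?_, ?_, ?_, ?_, ?_⟩
  · exact continuous_const.mul ((Complex.continuous_re.comp (𝓕 B).continuous).pow 2)
  · have : Integrable (fun x => (𝓕 g x).re) := (𝓕 g).integrable.re
    refine (this.const_mul (4 / I0 ^ 2)).congr ?_
    filter_upwards with x
    rw [hF, ← hreal]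
    simp [← Complex.ofReal_mul, sq]
  · intro x; positivity
  · intro x hx
    have := hlow x hx
    beta_reduce
    rw [div_mul_eq_mul_div, le_div_iff₀ (by positivity)]
    nlinarith
  all_goals
    have key : ∀ y, ∫ x, ((4 / I0 ^ 2 * ((𝓕 B x).re) ^ 2 : ℝ) : ℂ) * ee (-(x * y))
        = ((4 / I0 ^ 2 : ℝ) : ℂ) * g (-y) := by
      intro y
      rw [← hgi, ← integral_const_mul]
      congr 1
      ext x
      rw [hF, ← hreal]
      push_cast
      simp only [Complex.ofReal_re]
      ring
  · intro y
    rw [key, norm_mul, Complex.norm_real, Real.norm_of_nonneg (by positivity)]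
    gcongr
    exact norm_le_seminorm ℝ g (-y)
  · intro y hy
    rw [key]
    suffices g (-y) = 0 by simp [this]
    simp only [g]
    rw [convolution_apply]
    unfold MeasureTheory.convolution
    refine integral_eq_zero_of_ae ?_
    filter_upwards with t
    rw [ContinuousLinearMap.mul_apply', hBf, hBf]
    by_cases ht : |t| < 1 / 6
    · have : b (-y - t) = 0 := by
        apply b.zero_of_le_dist
        simp only [dist_zero_right, Real.norm_eq_abs]
        have h1 := abs_sub_abs_le_abs_sub (-y) t
        rw [abs_neg] at h1
        show 1 / 6 ≤ _
        linarith
      simp [this]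
    · have : b t = 0 := b.zero_of_le_dist (by simpa using not_lt.mp ht : (1 / 6 : ℝ) ≤ dist t 0)
      simp [this]

/-! ### The large sieve inequality -/

/-- The Fourier transform `T ↦ ∫ G(u) e(-uT) du` of a real function. -/
def ft (G : ℝ → ℝ) (T : ℝ) : ℂ := ∫ u, (G u : ℂ) * ee (-(u * T))

lemma norm_ft_le (G : ℝ → ℝ) (T : ℝ) : ‖ft G T‖ ≤ ∫ u, |G u| := by
  refine (norm_integral_le_integral_norm _).trans (le_of_eq ?_)
  simp

lemma integrable_ft_integrand {G : ℝ → ℝ} (hG : Integrable G) (T : ℝ) :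
    Integrable (fun u => (G u : ℂ) * ee (-(u * T))) := by
  refine hG.ofReal.mul_bdd (c := 1) ?_ ?_
  · exact (continuous_ee.comp (by fun_prop)).aestronglyMeasurable
  · filter_upwards with y using by simp

lemma ft_add {G₁ G₂ : ℝ → ℝ} (h₁ : Integrable G₁) (h₂ : Integrable G₂) (T : ℝ) :
    ft (fun u => G₁ u + G₂ u) T = ft G₁ T + ft G₂ T := by
  unfold ft
  rw [← integral_add (integrable_ft_integrand h₁ T) (integrable_ft_integrand h₂ T)]
  congr 1
  ext u
  push_cast
  ring

lemma continuous_ft {G : ℝ → ℝ} (hG : Integrable G) : Continuous (ft G) := by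
  unfold ft
  refine continuous_of_dominated (bound := fun u => |G u|) ?_ ?_ hG.abs ?_
  · intro T; exact (integrable_ft_integrand hG T).aestronglyMeasurable
  · intro T; filter_upwards with u using by simp
  · filter_upwards with u
    exact continuous_const.mul (continuous_ee.comp (by fun_prop))

lemma ft_mul_conj {G₁ G₂ : ℝ → ℝ} (T : ℝ) :
    ft G₁ T * (starRingEnd ℂ) (ft G₂ T)
      = ∫ z : ℝ × ℝ, ((G₁ z.1 : ℂ) * (G₂ z.2 : ℂ)) * ee (-((z.1 - z.2) * T)) := by
  unfold ft
  rw [← integral_conj, ← integral_prod_mul]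
  congr 1
  ext z
  rw [map_mul, conj_ee, Complex.conj_ofReal,
    show -((z.1 - z.2) * T) = -(z.1 * T) + - -(z.2 * T) by ring, ee_add]
  ring

/-- Integrating the product of two transforms against the rescaled majorant moves its Fourier
transform onto the difference variable. -/
lemma pair_identity {G₁ G₂ : ℝ → ℝ} (h₁ : Integrable G₁) (h₂ : Integrable G₂)
    {η : ℝ → ℝ} (hi : Integrable η) {L : ℝ} (hL : 0 < L) (T₀ : ℝ) :
    ∫ T, ft G₁ T * (starRingEnd ℂ) (ft G₂ T) * (η ((T - T₀) / L) : ℂ)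
      = ∫ z : ℝ × ℝ, ((G₁ z.1 : ℂ) * (G₂ z.2 : ℂ)) *
          (L * ee (-((z.1 - z.2) * T₀)) *
            ∫ x, (η x : ℂ) * ee (-(x * (L * (z.1 - z.2))))) := by
  have hiL : Integrable (fun T => η ((T - T₀) / L)) :=
    (hi.comp_div hL.ne').comp_sub_right T₀
  have hGG : Integrable (fun z : ℝ × ℝ => (G₁ z.1 : ℂ) * (G₂ z.2 : ℂ)) :=
    h₁.ofReal.mul_prod h₂.ofReal
  have hInt : Integrable (fun q : ℝ × (ℝ × ℝ) => ((G₁ q.2.1 : ℂ) * (G₂ q.2.2 : ℂ)) *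
      ee (-((q.2.1 - q.2.2) * q.1)) * (η ((q.1 - T₀) / L) : ℂ)) := by
    have h0 : Integrable (fun q : ℝ × (ℝ × ℝ) => (η ((q.1 - T₀) / L) : ℂ) *
      ((G₁ q.2.1 : ℂ) * (G₂ q.2.2 : ℂ))) := hiL.ofReal.mul_prod hGG
    have := h0.mul_bdd (c := 1) (g := fun q : ℝ × (ℝ × ℝ) => ee (-((q.2.1 - q.2.2) * q.1)))
      (continuous_ee.comp (by fun_prop)).aestronglyMeasurable
      (by filter_upwards with y using by simp)
    refine this.congr ?_
    filter_upwards with q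
    ring
  calc _ = ∫ T, ∫ z : ℝ × ℝ, ((G₁ z.1 : ℂ) * (G₂ z.2 : ℂ)) *
      ee (-((z.1 - z.2) * T)) * (η ((T - T₀) / L) : ℂ) := by
        congr 1
        ext T
        rw [ft_mul_conj, integral_mul_const]
    _ = ∫ z : ℝ × ℝ, ∫ T, ((G₁ z.1 : ℂ) * (G₂ z.2 : ℂ)) *
      ee (-((z.1 - z.2) * T)) * (η ((T - T₀) / L) : ℂ) :=
        integral_integral_swap hInt
    _ = _ := by
        congr 1
        ext z
        simp_rw [mul_assoc]
        rw [integral_const_mul, integral_const_mul]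
        congr 2
        rw [← integral_sub_right_eq_self (fun T => ee (-((z.1 - z.2) * T)) *
          (η ((T - T₀) / L) : ℂ)) (-T₀)]
        have h := Measure.integral_comp_mul_left (fun T => ee (-((z.1 - z.2) * (T - -T₀))) *
          (η ((T - -T₀ - T₀) / L) : ℂ)) L
        rw [abs_of_pos (inv_pos.mpr hL)] at h
        have h' := congrArg (fun c : ℂ => (L : ℂ) * c) h
        simp only [Complex.real_smul] at h'
        rw [← mul_assoc, Complex.ofReal_inv,
          mul_inv_cancel₀ (by exact_mod_cast hL.ne'), one_mul] at h'
        rw [← h']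
        congr 1
        rw [← integral_const_mul]
        congr 1
        ext x
        have e1 : (L * x - -T₀ - T₀) / L = x := by field_simp; ring
        rw [e1, show -((z.1 - z.2) * (L * x - -T₀))
          = -((z.1 - z.2) * T₀) + -(x * (L * (z.1 - z.2))) by ring, ee_add]
        ring

lemma integrable_pair {G₁ G₂ : ℝ → ℝ} (h₁ : Integrable G₁) (h₂ : Integrable G₂)
    {η : ℝ → ℝ} (hi : Integrable η) {L : ℝ} (hL : 0 < L) (T₀ : ℝ) :
    Integrable (fun T => ft G₁ T * (starRingEnd ℂ) (ft G₂ T) * (η ((T - T₀) / L) : ℂ)) := by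
  have hiL : Integrable (fun T => η ((T - T₀) / L)) :=
    (hi.comp_div hL.ne').comp_sub_right T₀
  refine hiL.ofReal.bdd_mul (c := (∫ u, |G₁ u|) * ∫ u, |G₂ u|) ?_ ?_
  · exact ((continuous_ft h₁).mul (Complex.continuous_conj.comp
      (continuous_ft h₂))).aestronglyMeasurable
  · filter_upwards with T
    rw [norm_mul, RCLike.norm_conj]
    gcongr
    · exact norm_ft_le _ _
    · exact norm_ft_le _ _

/-- Large sieve inequality for measures: if `G i` lives in `[c i - w, c i + p]`, only the pairs with
`|c i - c j| < w + p + 1/L` contribute to the mean square over an interval of length `2L`. -/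
lemma large_sieve {ι : Type*} {η : ℝ → ℝ} {A : ℝ} (hi : Integrable η)
    (h0 : ∀ x, 0 ≤ η x) (h1 : ∀ x, |x| ≤ 1 → 1 ≤ η x)
    (hA : ∀ y, ‖∫ x, (η x : ℂ) * ee (-(x * y))‖ ≤ A)
    (hz : ∀ y, 1 ≤ |y| → ∫ x, (η x : ℂ) * ee (-(x * y)) = 0)
    (s : Finset ι) (a : ι → ℂ) (G : ι → ℝ → ℝ) (hG : ∀ i ∈ s, Integrable (G i))
    (m c : ι → ℝ) (hm : ∀ i ∈ s, ∫ u, |G i u| ≤ m i) {w p : ℝ}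
    (hs : ∀ i ∈ s, ∀ u, G i u ≠ 0 → c i - w ≤ u ∧ u ≤ c i + p)
    {L : ℝ} (hL : 0 < L) (T₀ : ℝ) :
    ∫ T in (T₀ - L)..(T₀ + L), ‖∑ i ∈ s, a i * ft (G i) T‖ ^ 2
      ≤ A * L * ∑ i ∈ s, ∑ j ∈ s, if |c i - c j| < w + p + 1 / L then
          (‖a i‖ * m i) * (‖a j‖ * m j) else 0 := by
  have hA0 : 0 ≤ A := (norm_nonneg _).trans (hA 0)
  set F : ℝ → ℂ := fun T => ∑ i ∈ s, a i * ft (G i) T with hF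
  have hFc : Continuous F := by
    refine continuous_finsetSum _ fun i his => continuous_const.mul (continuous_ft (hG i his))
  have hexp : ∀ T, ((‖F T‖ ^ 2 * η ((T - T₀) / L) : ℝ) : ℂ) = ∑ i ∈ s, ∑ j ∈ s,
      (a i * (starRingEnd ℂ) (a j)) *
        (ft (G i) T * (starRingEnd ℂ) (ft (G j) T) * (η ((T - T₀) / L) : ℂ)) := by
    intro T
    push_cast
    rw [← Complex.mul_conj']
    simp only [hF, map_sum, map_mul]
    rw [Finset.sum_mul_sum, Finset.sum_mul]
    refine Finset.sum_congr rfl fun i _ => ?_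
    rw [Finset.sum_mul]
    exact Finset.sum_congr rfl fun j _ => by ring
  have hintC : Integrable (fun T => ((‖F T‖ ^ 2 * η ((T - T₀) / L) : ℝ) : ℂ)) := by
    simp_rw [hexp]
    refine integrable_finsetSum _ fun i hi' => integrable_finsetSum _ fun j hj => ?_
    exact (integrable_pair (hG i hi') (hG j hj) hi hL T₀).const_mul _
  have hintR : Integrable (fun T => ‖F T‖ ^ 2 * η ((T - T₀) / L)) := by
    refine hintC.re.congr ?_
    filter_upwards with T
    exact Complex.ofReal_re _
  have step1 : ∫ T in (T₀ - L)..(T₀ + L), ‖F T‖ ^ 2 ≤ ∫ T, ‖F T‖ ^ 2 * η ((T - T₀) / L) := by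
    rw [intervalIntegral.integral_of_le (by linarith)]
    calc _ ≤ ∫ T in Ioc (T₀ - L) (T₀ + L), ‖F T‖ ^ 2 * η ((T - T₀) / L) := by
          refine setIntegral_mono_on ?_ hintR.integrableOn measurableSet_Ioc ?_
          · exact ((hFc.norm.pow 2).integrableOn_Icc).mono_set Ioc_subset_Icc_self
          · intro T hT
            refine le_mul_of_one_le_right (by positivity) (h1 _ ?_)
            rw [abs_div, abs_of_pos hL, div_le_one hL, abs_le]
            constructor <;> linarith [hT.1, hT.2]
      _ ≤ _ := setIntegral_le_integral hintR (by
          filter_upwards with T using mul_nonneg (by positivity) (h0 _))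
  refine step1.trans ?_
  have hre : (∫ T, ‖F T‖ ^ 2 * η ((T - T₀) / L)) ≤ ‖∫ T, ((‖F T‖ ^ 2 * η ((T - T₀) / L) : ℝ) : ℂ)‖ := by
    rw [integral_complex_ofReal, Complex.norm_real]
    exact le_abs_self _
  refine hre.trans ?_
  simp_rw [hexp]
  rw [integral_finsetSum _ fun i hi' => integrable_finsetSum _ fun j hj =>
    (integrable_pair (hG i hi') (hG j hj) hi hL T₀).const_mul _, Finset.mul_sum]
  refine (norm_sum_le _ _).trans (Finset.sum_le_sum fun i hi' => ?_)
  rw [integral_finsetSum _ fun j hj =>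
    (integrable_pair (hG i hi') (hG j hj) hi hL T₀).const_mul _, Finset.mul_sum]
  refine (norm_sum_le _ _).trans (Finset.sum_le_sum fun j hj => ?_)
  rw [integral_const_mul, norm_mul, norm_mul, RCLike.norm_conj,
    pair_identity (hG i hi') (hG j hj) hi hL T₀]
  split_ifs with hclose
  · have hb : ‖∫ z : ℝ × ℝ, ((G i z.1 : ℂ) * (G j z.2 : ℂ)) *
          (L * ee (-((z.1 - z.2) * T₀)) *
            ∫ x, (η x : ℂ) * ee (-(x * (L * (z.1 - z.2)))))‖ ≤ m i * m j * (L * A) := by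
      calc _ ≤ ∫ z : ℝ × ℝ, (|G i z.1| * |G j z.2|) * (L * A) := by
            refine norm_integral_le_of_norm_le ?_ ?_
            · exact ((hG i hi').abs.mul_prod (hG j hj).abs).mul_const _
            · filter_upwards with z
              rw [norm_mul, norm_mul, norm_mul, norm_mul, norm_ee, mul_one]
              simp only [Complex.norm_real, Real.norm_eq_abs, abs_of_pos hL]
              gcongr
              exact hA _
        _ = (∫ u, |G i u|) * (∫ u, |G j u|) * (L * A) := by
            rw [integral_mul_const]
            congr 1
            exact integral_prod_mul (fun u => |G i u|) (fun u => |G j u|)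
        _ ≤ _ := by
            gcongr
            · exact (integral_nonneg fun u => abs_nonneg _).trans (hm i hi')
            · exact hm i hi'
            · exact hm j hj
    calc _ ≤ ‖a i‖ * ‖a j‖ * (m i * m j * (L * A)) := by gcongr
      _ = _ := by ring
  · have : ∀ z : ℝ × ℝ, ((G i z.1 : ℂ) * (G j z.2 : ℂ)) *
          (L * ee (-((z.1 - z.2) * T₀)) *
            ∫ x, (η x : ℂ) * ee (-(x * (L * (z.1 - z.2))))) = 0 := by
      intro z
      by_cases hz1 : G i z.1 = 0
      · simp [hz1]
      by_cases hz2 : G j z.2 = 0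
      · simp [hz2]
      rw [hz, mul_zero, mul_zero]
      have e1 := hs i hi' _ hz1
      have e2 := hs j hj _ hz2
      rw [abs_mul, abs_of_pos hL, ← div_le_iff₀' hL]
      rw [not_lt] at hclose
      rcases le_total 0 (c i - c j) with h | h
      · rw [abs_of_nonneg h] at hclose
        rw [le_abs]; left; linarith
      · rw [abs_of_nonpos h] at hclose
        rw [le_abs]; right; linarith
    simp_rw [this]
    simp

/-! ### Second differences of chord length functions -/

/-- The features of the chord length function `S` of a planar convex body that matter: it is
supported in `(lo, hi)`, concave there, and bounded by `M√s` at distance `s` from either end. -/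
structure Profile (S : ℝ → ℝ) (lo hi M : ℝ) : Prop where
  nonneg : ∀ u, 0 ≤ S u
  integrable : Integrable S
  lt : lo < hi
  zero_left : ∀ u, u ≤ lo → S u = 0
  zero_right : ∀ u, hi ≤ u → S u = 0
  conc : ConcaveOn ℝ (Ioo lo hi) S
  M_nonneg : 0 ≤ M
  right : ∀ s, 0 < s → S (hi - s) ≤ M * √s
  left : ∀ s, 0 < s → S (lo + s) ≤ M * √s

/-- The symmetric second difference with step `p`. -/
def d2 (S : ℝ → ℝ) (p u : ℝ) : ℝ := S (u + p) + S (u - p) - 2 * S u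

lemma integrable_d2 {S : ℝ → ℝ} (hS : Integrable S) (p : ℝ) : Integrable (d2 S p) :=
  ((hS.comp_add_right p).add (hS.comp_sub_right p)).sub (hS.const_mul 2)

/-- A second difference with step `p` multiplies the transform by `2 cos(2πpT) - 2`, which is `-4` when
`p = 1 / (2T)`. -/
lemma ft_d2 {S : ℝ → ℝ} (hS : Integrable S) (p T : ℝ) :
    ft (d2 S p) T = ((2 * Real.cos (2 * Real.pi * (p * T)) - 2 : ℝ) : ℂ) * ft S T := by
  have e1 : ∀ q, ∫ u, (S (u + q) : ℂ) * ee (-(u * T)) = ee (q * T) * ft S T := by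
    intro q
    have := integral_add_right_eq_self (μ := (volume : Measure ℝ))
      (fun u => (S u : ℂ) * ee (-((u - q) * T))) q
    simp only [add_sub_cancel_right] at this
    rw [this, ft, ← integral_const_mul]
    congr 1
    ext u
    rw [show -((u - q) * T) = q * T + -(u * T) by ring, ee_add]
    ring
  have e2 : ∀ q, Integrable fun u => (S (u + q) : ℂ) * ee (-(u * T)) := fun q =>
    integrable_ft_integrand (hS.comp_add_right q) T
  have e3 : ft (d2 S p) T = ∫ u, ((S (u + p) : ℂ) * ee (-(u * T))
      + (S (u + -p) : ℂ) * ee (-(u * T))) - 2 * ((S u : ℂ) * ee (-(u * T))) := by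
    unfold ft d2
    congr 1
    ext u
    push_cast
    rw [sub_eq_add_neg u p]
    ring
  have i12 : Integrable fun u => (S (u + p) : ℂ) * ee (-(u * T))
      + (S (u + -p) : ℂ) * ee (-(u * T)) := (e2 p).add (e2 (-p))
  rw [e3, integral_sub i12 ((integrable_ft_integrand hS T).const_mul 2),
    integral_add (e2 p) (e2 (-p)), e1, e1, integral_const_mul]
  change _ - 2 * ft S T = _
  have hcos : ee (p * T) + ee (-p * T) = ((2 * Real.cos (2 * Real.pi * (p * T)) : ℝ) : ℂ) := by
    unfold ee
    push_cast
    rw [Complex.two_cos]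
    congr 2
    ring
  push_cast at hcos ⊢
  linear_combination (ft S T) * hcos

namespace Profile
variable {S : ℝ → ℝ} {lo hi M : ℝ}

/-- Reflection of a profile. -/
lemma neg (h : Profile S lo hi M) : Profile (fun u => S (-u)) (-hi) (-lo) M where
  nonneg u := h.nonneg _
  integrable := h.integrable.comp_neg
  lt := neg_lt_neg h.lt
  zero_left u hu := h.zero_right _ (by linarith)
  zero_right u hu := h.zero_left _ (by linarith)
  conc := by
    refine ⟨convex_Ioo _ _, fun x hx y hy a b ha hb hab => ?_⟩
    have := h.conc.2 (x := -x) (y := -y) ⟨by linarith [hx.2], by linarith [hx.1]⟩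
      ⟨by linarith [hy.2], by linarith [hy.1]⟩ ha hb hab
    simp only [smul_eq_mul] at this ⊢
    convert this using 2
    ring
  M_nonneg := h.M_nonneg
  right s hs := by
    have := h.left s hs
    rwa [show -(-lo - s) = lo + s by ring]
  left s hs := by
    have := h.right s hs
    rwa [show -(-hi + s) = hi - s by ring]

lemma d2_nonpos (h : Profile S lo hi M) {p u : ℝ} (hp : 0 < p) (h1 : lo < u - p)
    (h2 : u + p < hi) : d2 S p u ≤ 0 := by
  have := h.conc.2 (show u + p ∈ Ioo lo hi from ⟨by linarith, h2⟩)
    (show u - p ∈ Ioo lo hi from ⟨h1, by linarith⟩)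
    (show (0 : ℝ) ≤ 1 / 2 by norm_num) (show (0 : ℝ) ≤ 1 / 2 by norm_num) (by norm_num)
  simp only [smul_eq_mul] at this
  rw [show 1 / 2 * (u + p) + 1 / 2 * (u - p) = u by ring] at this
  unfold d2
  linarith

/-- Second differences are positive only within `p` of the ends of the support. -/
lemma d2_pos_le (h : Profile S lo hi M) {p : ℝ} (hp : 0 < p) {τ τ' : ℝ}
    (hτ : ∀ u, hi - 2 * p ≤ u → S u ≤ τ) (hτ' : ∀ u, u ≤ lo + 2 * p → S u ≤ τ') (u : ℝ) :
    max (d2 S p u) 0 ≤ (Icc (hi - p) (hi + p)).indicator (fun _ => τ) u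
      + (Icc (lo - p) (lo + p)).indicator (fun _ => τ') u := by
  have t0 : 0 ≤ τ := (h.nonneg hi).trans (hτ hi (by linarith))
  have t0' : 0 ≤ τ' := (h.nonneg lo).trans (hτ' lo (by linarith))
  have i1 : 0 ≤ (Icc (hi - p) (hi + p)).indicator (fun _ => τ) u :=
    indicator_nonneg (fun _ _ => t0) _
  have i2 : 0 ≤ (Icc (lo - p) (lo + p)).indicator (fun _ => τ') u :=
    indicator_nonneg (fun _ _ => t0') _
  refine max_le ?_ (by linarith)
  have hu := h.nonneg u
  by_cases a1 : hi ≤ u + p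
  · have z1 := h.zero_right _ a1
    by_cases a2 : u ≤ hi + p
    · rw [indicator_of_mem (show u ∈ Icc (hi - p) (hi + p) from ⟨by linarith, a2⟩)]
      have := hτ (u - p) (by linarith)
      unfold d2
      linarith
    · have z2 := h.zero_right (u - p) (by linarith)
      unfold d2
      linarith
  · by_cases b1 : u - p ≤ lo
    · have z1 := h.zero_left _ b1
      by_cases b2 : lo - p ≤ u
      · rw [indicator_of_mem (show u ∈ Icc (lo - p) (lo + p) from ⟨b2, by linarith⟩)]
        have := hτ' (u + p) (by linarith)
        unfold d2
        linarith
      · have z2 := h.zero_left (u + p) (by linarith)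
        unfold d2
        linarith
    · have := h.d2_nonpos (u := u) hp (by linarith) (by linarith)
      linarith

lemma le_right (h : Profile S lo hi M) {p : ℝ} (u : ℝ) (hu : hi - p ≤ u) : S u ≤ M * √p := by
  rcases lt_or_ge u hi with h1 | h1
  · have := h.right (hi - u) (by linarith)
    rw [sub_sub_cancel] at this
    refine this.trans ?_
    have := h.M_nonneg
    gcongr
    linarith
  · rw [h.zero_right u h1]
    exact mul_nonneg h.M_nonneg (Real.sqrt_nonneg _)

lemma le_left (h : Profile S lo hi M) {p : ℝ} (u : ℝ) (hu : u ≤ lo + p) : S u ≤ M * √p := by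
  have := h.neg.le_right (p := p) (-u) (by linarith)
  simpa using this

lemma abs_eq (x : ℝ) : |x| = 2 * max x 0 - x := by
  rcases le_total 0 x with h | h
  · rw [abs_of_nonneg h, max_eq_left h]; ring
  · rw [abs_of_nonpos h, max_eq_right h]; ring

lemma integral_d2 (h : Profile S lo hi M) (p : ℝ) : ∫ u, d2 S p u = 0 := by
  unfold d2
  have i1 := h.integrable.comp_add_right p
  have i2 := h.integrable.comp_sub_right p
  have i12 : Integrable fun u => S (u + p) + S (u - p) := i1.add i2
  rw [integral_sub i12 (h.integrable.const_mul 2), integral_add i1 i2,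
    integral_add_right_eq_self S, integral_sub_right_eq_self S, integral_const_mul]
  ring

/-- Since the integral of the second difference vanishes, its `L¹` norm is controlled by its
positive part, hence by the size of `S` near the ends. -/
lemma integral_abs_d2_le (h : Profile S lo hi M) {p : ℝ} (hp : 0 < p) :
    ∫ u, |d2 S p u| ≤ 8 * p * (M * √(2 * p)) := by
  set τ := M * √(2 * p)
  have hd := integrable_d2 h.integrable p
  have hmax : Integrable (fun u => max (d2 S p u) 0) := hd.pos_part
  simp_rw [abs_eq]
  rw [integral_sub (hmax.const_mul 2) hd, h.integral_d2, sub_zero, integral_const_mul]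
  have i1 : Integrable ((Icc (hi - p) (hi + p)).indicator (fun _ => τ)) :=
    (integrable_indicator_iff measurableSet_Icc).2 (by simp)
  have i2 : Integrable ((Icc (lo - p) (lo + p)).indicator (fun _ => τ)) :=
    (integrable_indicator_iff measurableSet_Icc).2 (by simp)
  have := integral_mono hmax (i1.add i2)
    (fun u => h.d2_pos_le hp (fun u hu => h.le_right u hu) (fun u hu => h.le_left u hu) u)
  simp only [Pi.add_apply] at this
  rw [integral_add i1 i2, integral_indicator measurableSet_Icc,
    integral_indicator measurableSet_Icc, setIntegral_const, setIntegral_const] at this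
  simp only [measureReal_def, Real.volume_Icc, smul_eq_mul] at this
  rw [ENNReal.toReal_ofReal (by linarith), ENNReal.toReal_ofReal (by linarith)] at this
  linarith

/-- The decay `T^(-3/2)`, by taking the second difference with step `1 / (2T)`. -/
lemma norm_ft_le (h : Profile S lo hi M) {T : ℝ} (hT : 0 < T) :
    ‖ft S T‖ ≤ M / (T * √T) := by
  have h1 := ft_d2 h.integrable (1 / (2 * T)) T
  rw [show 2 * Real.pi * (1 / (2 * T) * T) = Real.pi by field_simp, Real.cos_pi] at h1
  have h2 := (_root_.norm_ft_le (d2 S (1 / (2 * T))) T).trans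
    (h.integral_abs_d2_le (by positivity))
  rw [h1, norm_mul, Complex.norm_real] at h2
  have e : √(2 * (1 / (2 * T))) = 1 / √T := by
    rw [show 2 * (1 / (2 * T)) = T⁻¹ by field_simp, Real.sqrt_inv, one_div]
  have e4 : ‖(2 * -1 - 2 : ℝ)‖ = 4 := by norm_num
  rw [e, e4] at h2
  have hs : 0 < √T := Real.sqrt_pos.2 hT
  calc ‖ft S T‖ ≤ 8 * (1 / (2 * T)) * (M * (1 / √T)) / 4 := by linarith
    _ = _ := by field_simp; ring

/-- Concavity and nonnegativity bound the forward increment of `S`. -/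
lemma incr_le (h : Profile S lo hi M) {p u : ℝ} (hp : 0 < p) (h1 : lo < u) (h2 : u + p < hi) :
    S (u + p) - S u ≤ p * M / √(u - lo) := by
  have key : ∀ u0 ∈ Ioo lo u, (u - u0) * (S (u + p) - S u) ≤ p * S u := by
    intro u0 hu0
    have hpos : 0 < u + p - u0 := by linarith [hu0.2]
    have := h.conc.2 (show u0 ∈ Ioo lo hi from ⟨hu0.1, by linarith [hu0.2]⟩)
      (show u + p ∈ Ioo lo hi from ⟨by linarith, h2⟩)
      (show 0 ≤ p / (u + p - u0) by positivity)
      (show 0 ≤ (u - u0) / (u + p - u0) from div_nonneg (by linarith [hu0.2]) hpos.le)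
      (by field_simp; ring)
    simp only [smul_eq_mul] at this
    rw [show p / (u + p - u0) * u0 + (u - u0) / (u + p - u0) * (u + p) = u by
      field_simp; ring] at this
    have h3 := h.nonneg u0
    have h4 : p * S u0 + (u - u0) * S (u + p) ≤ (u + p - u0) * S u := by
      have := mul_le_mul_of_nonneg_left this hpos.le
      calc _ = (u + p - u0) * (p / (u + p - u0) * S u0 + (u - u0) / (u + p - u0) * S (u + p)) := by
            field_simp
        _ ≤ _ := this
    nlinarith
  have lim : (u - lo) * (S (u + p) - S u) ≤ p * S u := by
    have ht : Filter.Tendsto (fun u0 => (u - u0) * (S (u + p) - S u)) (nhdsWithin lo (Ioi lo))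
        (nhds ((u - lo) * (S (u + p) - S u))) :=
      (Continuous.tendsto (by fun_prop) lo).mono_left nhdsWithin_le_nhds
    refine le_of_tendsto ht ?_
    filter_upwards [Ioo_mem_nhdsGT h1] with x hx using key x hx
  have hl := h.left (u - lo) (by linarith)
  rw [add_sub_cancel] at hl
  have hs : 0 < √(u - lo) := Real.sqrt_pos.2 (by linarith)
  have hss : √(u - lo) * √(u - lo) = u - lo := Real.mul_self_sqrt (by linarith)
  rw [le_div_iff₀ hs]
  have : √(u - lo) * ((S (u + p) - S u) * √(u - lo)) ≤ √(u - lo) * (p * M) := by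
    calc _ = (√(u - lo) * √(u - lo)) * (S (u + p) - S u) := by ring
      _ = (u - lo) * (S (u + p) - S u) := by rw [hss]
      _ ≤ p * S u := lim
      _ ≤ p * (M * √(u - lo)) := by gcongr
      _ = _ := by ring
  exact le_of_mul_le_mul_left this hs

lemma decr_le (h : Profile S lo hi M) {p u : ℝ} (hp : 0 < p) (h1 : lo < u) (h2 : u + p < hi) :
    S u - S (u + p) ≤ p * M / √(hi - (u + p)) := by
  have := h.neg.incr_le (u := -(u + p)) hp (by linarith) (by linarith)
  rwa [show -(u + p) - -hi = hi - (u + p) by ring, neg_neg,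
    show -(-(u + p) + p) = u by ring] at this

lemma integral_Ioi_d2 (h : Profile S lo hi M) (p x : ℝ) :
    ∫ u in Ioi x, d2 S p u = ∫ u in (x - p)..x, (S u - S (u + p)) := by
  have hS := h.integrable
  have i1 := (hS.comp_add_right p)
  have i2 := (hS.comp_sub_right p)
  unfold d2
  have i12 : Integrable fun u => S (u + p) + S (u - p) := i1.add i2
  rw [integral_sub i12.integrableOn (hS.const_mul 2).integrableOn,
    integral_add i1.integrableOn i2.integrableOn, integral_const_mul,
    intervalIntegral.integral_sub hS.intervalIntegrable i1.intervalIntegrable,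
    intervalIntegral.integral_comp_add_right, sub_add_cancel]
  have e1 : ∫ u in Ioi x, S (u + p) = ∫ u in Ioi (x + p), S u := by
    have := (measurePreserving_add_right volume p).setIntegral_preimage_emb
      (measurableEmbedding_addRight p) S (Ioi (x + p))
    rw [← this]
    congr 2
    simp
  have e2 : ∫ u in Ioi x, S (u - p) = ∫ u in Ioi (x - p), S u := by
    have := (measurePreserving_add_right volume (-p)).setIntegral_preimage_emb
      (measurableEmbedding_addRight (-p)) S (Ioi (x - p))
    rw [← this]
    simp [sub_eq_add_neg]
  rw [e1, e2]
  have f1 := intervalIntegral.integral_interval_add_Ioi (a := x - p) (b := x) (μ := volume) (f := S)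
    hS.integrableOn hS.integrableOn
  have f2 := intervalIntegral.integral_interval_add_Ioi (a := x) (b := x + p) (μ := volume) (f := S)
    hS.integrableOn hS.integrableOn
  linarith

/-- Mass of the second difference near the right end. -/
lemma right_mass (h : Profile S lo hi M) {p w : ℝ} (hp : 0 < p) (hpw : 2 * p ≤ w)
    (hw : 2 * w ≤ hi - lo) {τ : ℝ} (hτ : ∀ u, hi - 2 * p ≤ u → S u ≤ τ) :
    ∫ u, |(Ioi (hi - w)).indicator (d2 S p) u| ≤ 4 * p * τ + p ^ 2 * M / √(w / 2) := by
  have hd := integrable_d2 h.integrable p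
  have hmax : Integrable (fun u => max (d2 S p u) 0) := hd.pos_part
  have e0 : ∀ u, |(Ioi (hi - w)).indicator (d2 S p) u|
      = (Ioi (hi - w)).indicator (fun u => |d2 S p u|) u := by
    intro u
    by_cases hu : u ∈ Ioi (hi - w) <;> simp [hu]
  simp_rw [e0]
  rw [integral_indicator measurableSet_Ioi]
  simp_rw [abs_eq]
  rw [integral_sub (hmax.const_mul 2).integrableOn hd.integrableOn, integral_const_mul,
    h.integral_Ioi_d2 p]
  have i1 : Integrable ((Icc (hi - p) (hi + p)).indicator (fun _ => τ)) :=
    (integrable_indicator_iff measurableSet_Icc).2 (by simp)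
  have t0 : 0 ≤ τ := (h.nonneg hi).trans (hτ hi (by linarith))
  have b1 : ∫ u in Ioi (hi - w), max (d2 S p u) 0 ≤ 2 * p * τ := by
    calc _ ≤ ∫ u in Ioi (hi - w), (Icc (hi - p) (hi + p)).indicator (fun _ => τ) u := by
          refine setIntegral_mono_on hmax.integrableOn i1.integrableOn measurableSet_Ioi ?_
          intro u hu
          have := h.d2_pos_le hp hτ (fun u hu => h.le_left u hu) u
          rwa [indicator_of_notMem (s := Icc (lo - p) (lo + p)), add_zero] at this
          intro hu'
          linarith [hu'.2, mem_Ioi.1 hu]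
      _ ≤ ∫ u, (Icc (hi - p) (hi + p)).indicator (fun _ => τ) u :=
          setIntegral_le_integral i1 (by
            filter_upwards with u using indicator_nonneg (fun _ _ => t0) _)
      _ = 2 * p * τ := by
          rw [integral_indicator measurableSet_Icc, setIntegral_const]
          simp only [measureReal_def, Real.volume_Icc, smul_eq_mul]
          rw [ENNReal.toReal_ofReal (by linarith)]
          ring
  have b2 : -∫ u in (hi - w - p)..(hi - w), (S u - S (u + p)) ≤ p ^ 2 * M / √(w / 2) := by
    rw [← intervalIntegral.integral_neg]
    have hii : IntervalIntegrable (fun u => -(S u - S (u + p))) volume (hi - w - p) (hi - w) :=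
      (h.integrable.sub (h.integrable.comp_add_right p)).neg.intervalIntegrable
    calc _ ≤ ∫ u in (hi - w - p)..(hi - w), p * M / √(w / 2) := by
          refine intervalIntegral.integral_mono_on (by linarith) hii (by simp) ?_
          intro u hu
          have := h.incr_le (u := u) hp (by linarith [hu.1]) (by linarith [hu.2])
          have hM := h.M_nonneg
          calc _ = S (u + p) - S u := by ring
            _ ≤ _ := this
            _ ≤ _ := by
              gcongr
              · exact Real.sqrt_pos.2 (by linarith)
              · linarith [hu.1]
      _ = _ := by
        rw [intervalIntegral.integral_const, smul_eq_mul]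
        ring
  linarith

/-- Mass of the second difference away from both ends. -/
lemma mid_mass (h : Profile S lo hi M) {p w : ℝ} (hp : 0 < p) (hpw : 2 * p ≤ w)
    (hw : 2 * w ≤ hi - lo) :
    ∫ u, |(Icc (lo + w) (hi - w)).indicator (d2 S p) u| ≤ 2 * (p ^ 2 * M / √(w / 2)) := by
  have hd := integrable_d2 h.integrable p
  have hM := h.M_nonneg
  have e0 : ∀ u, |(Icc (lo + w) (hi - w)).indicator (d2 S p) u|
      = (Icc (lo + w) (hi - w)).indicator (fun u => - d2 S p u) u := by
    intro u
    by_cases hu : u ∈ Icc (lo + w) (hi - w)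
    · rw [indicator_of_mem hu, indicator_of_mem hu, abs_of_nonpos]
      exact h.d2_nonpos hp (by linarith [hu.1]) (by linarith [hu.2])
    · simp [hu]
  simp_rw [e0]
  rw [integral_indicator measurableSet_Icc, integral_neg, integral_Icc_eq_integral_Ioc,
    ← intervalIntegral.integral_of_le (by linarith)]
  have f1 := intervalIntegral.integral_interval_add_Ioi (a := lo + w) (b := hi - w) (μ := volume)
    (f := d2 S p) hd.integrableOn hd.integrableOn
  rw [h.integral_Ioi_d2 p, h.integral_Ioi_d2 p] at f1
  have hsub := h.integrable.sub (h.integrable.comp_add_right p)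
  have c1 : ∫ u in (hi - w - p)..(hi - w), (S u - S (u + p)) ≤ p ^ 2 * M / √(w / 2) := by
    calc _ ≤ ∫ u in (hi - w - p)..(hi - w), p * M / √(w / 2) := by
          refine intervalIntegral.integral_mono_on (by linarith) hsub.intervalIntegrable
            (by simp) ?_
          intro u hu
          refine (h.decr_le (u := u) hp (by linarith [hu.1]) (by linarith [hu.2])).trans ?_
          gcongr
          · exact Real.sqrt_pos.2 (by linarith)
          · linarith [hu.2]
      _ = _ := by
        rw [intervalIntegral.integral_const, smul_eq_mul]
        ring
  have c2 : -∫ u in (lo + w - p)..(lo + w), (S u - S (u + p)) ≤ p ^ 2 * M / √(w / 2) := by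
    rw [← intervalIntegral.integral_neg]
    calc _ ≤ ∫ u in (lo + w - p)..(lo + w), p * M / √(w / 2) := by
          refine intervalIntegral.integral_mono_on (by linarith) hsub.neg.intervalIntegrable
            (by simp) ?_
          intro u hu
          have := h.incr_le (u := u) hp (by linarith [hu.1]) (by linarith [hu.2])
          calc _ = S (u + p) - S u := by ring
            _ ≤ _ := this
            _ ≤ _ := by
              gcongr
              · exact Real.sqrt_pos.2 (by linarith)
              · linarith [hu.1]
      _ = _ := by
        rw [intervalIntegral.integral_const, smul_eq_mul]
        ring
  linarith

end Profile

/-! ### The support function -/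

/-- The standing hypotheses on the domain. -/
structure Body (Ω : Set E2) : Prop where
  conv : Convex ℝ Ω
  isOpen : IsOpen Ω
  bdd : Bornology.IsBounded Ω
  zero_mem : (0 : E2) ∈ Ω

namespace Body
variable {Ω : Set E2}

lemma bddAbove (h : Body Ω) (ξ : E2) : BddAbove ((fun x => ⟪x, ξ⟫) '' Ω) := by
  obtain ⟨r, hr⟩ := h.bdd.exists_norm_le
  refine ⟨r * ‖ξ‖, ?_⟩
  rintro _ ⟨x, hx, rfl⟩
  exact (real_inner_le_norm x ξ).trans (by gcongr; exact hr x hx)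

lemma le_supp (h : Body Ω) {x : E2} (hx : x ∈ Ω) (ξ : E2) : ⟪x, ξ⟫ ≤ suppFn Ω ξ :=
  le_csSup (h.bddAbove ξ) ⟨x, hx, rfl⟩

lemma supp_le (h : Body Ω) {ξ : E2} {c : ℝ} (hc : ∀ x ∈ Ω, ⟪x, ξ⟫ ≤ c) : suppFn Ω ξ ≤ c :=
  csSup_le ⟨_, 0, h.zero_mem, rfl⟩ (by rintro _ ⟨x, hx, rfl⟩; exact hc x hx)

lemma exists_lt_inner (h : Body Ω) {ξ : E2} {c : ℝ} (hc : c < suppFn Ω ξ) :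
    ∃ x ∈ Ω, c < ⟪x, ξ⟫ := by
  obtain ⟨_, ⟨x, hx, rfl⟩, h2⟩ := exists_lt_of_lt_csSup (Set.Nonempty.image _ ⟨0, h.zero_mem⟩) hc
  exact ⟨x, hx, h2⟩

lemma inner_lt_supp (h : Body Ω) {x ξ : E2} (hx : x ∈ Ω) (hξ : ξ ≠ 0) :
    ⟪x, ξ⟫ < suppFn Ω ξ := by
  obtain ⟨r, hr, hb⟩ := Metric.isOpen_iff.1 h.isOpen x hx
  have hn : 0 < ‖ξ‖ := norm_pos_iff.2 hξ
  have hm : x + (r / 2 / ‖ξ‖) • ξ ∈ Ω := hb (by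
    rw [Metric.mem_ball, dist_eq_norm, add_sub_cancel_left, norm_smul, Real.norm_of_nonneg
      (by positivity), div_mul_cancel₀ _ hn.ne']
    linarith)
  have := h.le_supp hm ξ
  rw [inner_add_left, inner_smul_left, real_inner_self_eq_norm_sq] at this
  have h2 : 0 < (r / 2 / ‖ξ‖) * ‖ξ‖ ^ 2 := by positivity
  simp only [conj_trivial] at this
  linarith

lemma supp_add_le (h : Body Ω) (ξ η : E2) : suppFn Ω (ξ + η) ≤ suppFn Ω ξ + suppFn Ω η :=
  h.supp_le fun x hx => by
    rw [inner_add_right]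
    exact add_le_add (h.le_supp hx ξ) (h.le_supp hx η)

lemma supp_smul (h : Body Ω) {c : ℝ} (hc : 0 ≤ c) (ξ : E2) :
    suppFn Ω (c • ξ) = c * suppFn Ω ξ := by
  have key : ∀ {c : ℝ}, 0 ≤ c → ∀ ξ, suppFn Ω (c • ξ) ≤ c * suppFn Ω ξ := fun {c} hc ξ =>
    h.supp_le fun x hx => by
      rw [inner_smul_right]
      exact mul_le_mul_of_nonneg_left (h.le_supp hx ξ) hc
  refine le_antisymm (key hc ξ) ?_
  rcases hc.eq_or_lt with rfl | hc
  · simp only [zero_mul]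
    simpa using h.le_supp h.zero_mem ((0 : ℝ) • ξ)
  · have := key (inv_nonneg.2 hc.le) (c • ξ)
    rw [smul_smul, inv_mul_cancel₀ hc.ne', one_smul] at this
    calc c * suppFn Ω ξ ≤ c * (c⁻¹ * suppFn Ω (c • ξ)) := by gcongr
      _ = _ := by field_simp

/-- The support function is comparable with the norm. -/
lemma supp_bounds (h : Body Ω) : ∃ c C : ℝ, 0 < c ∧ 0 < C ∧ ∀ ξ : E2,
    c * ‖ξ‖ ≤ suppFn Ω ξ ∧ suppFn Ω ξ ≤ C * ‖ξ‖ := by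
  obtain ⟨r, hr⟩ := h.bdd.exists_norm_le
  obtain ⟨s, hs, hb⟩ := Metric.isOpen_iff.1 h.isOpen 0 h.zero_mem
  have hr0 : 0 ≤ r := (norm_nonneg _).trans (hr 0 h.zero_mem)
  refine ⟨s / 2, r + 1, by positivity, by linarith, fun ξ => ⟨?_, ?_⟩⟩
  · rcases eq_or_ne ξ 0 with rfl | hξ
    · simpa using h.le_supp h.zero_mem 0
    have hn : 0 < ‖ξ‖ := norm_pos_iff.2 hξ
    have hm : (s / 2 / ‖ξ‖) • ξ ∈ Ω := hb (by
      rw [Metric.mem_ball, dist_zero_right, norm_smul, Real.norm_of_nonneg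
        (by positivity), div_mul_cancel₀ _ hn.ne']
      linarith)
    have := h.le_supp hm ξ
    rw [inner_smul_left, real_inner_self_eq_norm_sq] at this
    refine le_trans (le_of_eq ?_) this
    simp only [conj_trivial]
    field_simp
  · refine h.supp_le fun x hx => (real_inner_le_norm x ξ).trans ?_
    have := hr x hx
    gcongr
    linarith

end Body

/-! ### Chords orthogonal to a direction -/

/-- Rotation by a right angle. -/
def perp (ξ : E2) : E2 := !₂[-ξ 1, ξ 0]

/-- The point with coordinates `(u, v)` in the unimodular frame attached to `ξ`: `u` is the inner
product with `ξ`, and `v` runs along the line orthogonal to `ξ`. -/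
def pt (ξ : E2) (u v : ℝ) : E2 := (u / ‖ξ‖ ^ 2) • ξ + v • perp ξ

lemma inner_perp (ξ : E2) : ⟪perp ξ, ξ⟫ = 0 := by
  simp [perp, PiLp.inner_apply, Fin.sum_univ_two]; ring

lemma norm_sq_E2 (ξ : E2) : ‖ξ‖ ^ 2 = ξ 0 ^ 2 + ξ 1 ^ 2 := by
  rw [EuclideanSpace.norm_sq_eq]; simp [Fin.sum_univ_two]

lemma norm_perp (ξ : E2) : ‖perp ξ‖ = ‖ξ‖ := by
  rw [← sq_eq_sq₀ (norm_nonneg _) (norm_nonneg _), norm_sq_E2, norm_sq_E2]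
  simp [perp]; ring

lemma perp_neg (ξ : E2) : perp (-ξ) = -perp ξ := by
  ext i; fin_cases i <;> simp [perp]

lemma pt_neg (ξ : E2) (u v : ℝ) : pt (-ξ) u v = pt ξ (-u) (-v) := by
  simp [pt, perp_neg, neg_div]

lemma inner_pt {ξ : E2} (hξ : ξ ≠ 0) (u v : ℝ) : ⟪pt ξ u v, ξ⟫ = u := by
  have hn : ‖ξ‖ ≠ 0 := norm_ne_zero_iff.2 hξ
  rw [pt, inner_add_left, inner_smul_left, inner_smul_left, inner_perp, real_inner_self_eq_norm_sq]
  simp only [conj_trivial, mul_zero, add_zero]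
  field_simp

lemma continuous_pt (ξ : E2) : Continuous fun z : ℝ × ℝ => pt ξ z.1 z.2 := by
  unfold pt; fun_prop

lemma pt_comb (ξ : E2) (a b u v u' v' : ℝ) :
    pt ξ (a * u + b * u') (a * v + b * v') = a • pt ξ u v + b • pt ξ u' v' := by
  simp only [pt]
  module

lemma pt_surj {ξ : E2} (hξ : ξ ≠ 0) (x : E2) : ∃ v, x = pt ξ ⟪x, ξ⟫ v := by
  have hn : ‖ξ‖ ^ 2 ≠ 0 := by simpa using hξ
  have hq := norm_sq_E2 ξ
  refine ⟨⟪x, perp ξ⟫ / ‖ξ‖ ^ 2, ?_⟩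
  unfold pt
  ext i
  fin_cases i <;> simp [perp, PiLp.inner_apply, Fin.sum_univ_two] <;>
    (field_simp; rw [hq]; ring)

lemma measurePreserving_pt {ξ : E2} (hξ : ξ ≠ 0) :
    MeasurePreserving (fun z : ℝ × ℝ => pt ξ z.1 z.2) := by
  have hn : ‖ξ‖ ^ 2 ≠ 0 := by simpa using hξ
  have hq := norm_sq_E2 ξ
  set A : Matrix (Fin 2) (Fin 2) ℝ :=
    !![ξ 0 / ‖ξ‖ ^ 2, -ξ 1; ξ 1 / ‖ξ‖ ^ 2, ξ 0] with hA
  have hdet : A.det = 1 := by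
    rw [hA, Matrix.det_fin_two_of]
    field_simp
    rw [hq]; ring
  have hlin : MeasurePreserving (Matrix.toLin' A) := by
    refine ⟨(LinearMap.continuous_of_finiteDimensional _).measurable, ?_⟩
    rw [Real.map_matrix_volume_pi_eq_smul_volume_pi (by rw [hdet]; norm_num), hdet]
    simp
  have := (PiLp.volume_preserving_toLp (Fin 2)).comp
    (hlin.comp ((volume_preserving_finTwoArrow ℝ).symm))
  have e : (fun z : ℝ × ℝ => pt ξ z.1 z.2)
      = WithLp.toLp 2 ∘ Matrix.toLin' A ∘ MeasurableEquiv.finTwoArrow.symm := by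
    funext z
    ext i
    fin_cases i <;>
      simp [pt, perp, hA, Matrix.toLin'_apply,
        MeasurableEquiv.finTwoArrow] <;> ring
  rw [e]
  exact this

/-- The chord of `Ω` at height `u` in direction `ξ`, in the `v` coordinate. -/
def chord (Ω : Set E2) (ξ : E2) (u : ℝ) : Set ℝ := {v | pt ξ u v ∈ Ω}

/-- The normalised length of that chord. -/
def chordLen (Ω : Set E2) (ξ : E2) (u : ℝ) : ℝ := (volume (chord Ω ξ u)).toReal

/-- The Fourier transform of the indicator function of `Ω` at frequency `Tξ`. -/
def J (Ω : Set E2) (ξ : E2) (T : ℝ) : ℂ := ∫ x in Ω, ee (-(⟪x, ξ⟫ * T))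

/-- A bounded interval has measure `sup - inf`. -/
lemma volume_interval {I : Set ℝ} (hc : Convex ℝ I) (hb : Bornology.IsBounded I)
    (hne : I.Nonempty) : (volume I).toReal = sSup I - sInf I := by
  have hbb := isBounded_iff_bddBelow_bddAbove.1 hb
  have h1 := IsConnected.Ioo_csInf_csSup_subset ⟨hne, hc.isPreconnected⟩ hbb.1 hbb.2
  have h2 : I ⊆ Icc (sInf I) (sSup I) := fun x hx => ⟨csInf_le hbb.1 hx, le_csSup hbb.2 hx⟩
  have h3 : volume I = ENNReal.ofReal (sSup I - sInf I) :=
    le_antisymm ((measure_mono h2).trans_eq Real.volume_Icc)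
      (Real.volume_Ioo.symm.trans_le (measure_mono h1))
  obtain ⟨x, hx⟩ := hne
  rw [h3, ENNReal.toReal_ofReal (by linarith [(h2 hx).1, (h2 hx).2])]

namespace Body
variable {Ω : Set E2}

lemma chord_convex (h : Body Ω) (ξ : E2) (u : ℝ) : Convex ℝ (chord Ω ξ u) := by
  intro v hv v' hv' a b ha hb hab
  have := h.conv hv hv' ha hb hab
  rw [← pt_comb, ← add_mul, hab, one_mul] at this
  exact this

lemma chord_isOpen (h : Body Ω) (ξ : E2) (u : ℝ) : IsOpen (chord Ω ξ u) :=
  h.isOpen.preimage ((continuous_pt ξ).comp (by fun_prop : Continuous fun v : ℝ => (u, v)))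

lemma chord_bdd (h : Body Ω) {ξ : E2} (hξ : ξ ≠ 0) (u : ℝ) :
    Bornology.IsBounded (chord Ω ξ u) := by
  obtain ⟨r, hr⟩ := h.bdd.exists_norm_le
  have hn : 0 < ‖ξ‖ := norm_pos_iff.2 hξ
  refine (isBounded_iff_forall_norm_le).2 ⟨(r + ‖(u / ‖ξ‖ ^ 2) • ξ‖) / ‖ξ‖, fun v hv => ?_⟩
  rw [le_div_iff₀ hn]
  have h1 := hr _ hv
  calc ‖v‖ * ‖ξ‖ = ‖v • perp ξ‖ := by rw [norm_smul, norm_perp]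
    _ = ‖pt ξ u v - (u / ‖ξ‖ ^ 2) • ξ‖ := by rw [pt, add_sub_cancel_left]
    _ ≤ _ := (norm_sub_le _ _).trans (by linarith)

lemma chordLen_eq (h : Body Ω) {ξ : E2} (hξ : ξ ≠ 0) {u : ℝ} (hne : (chord Ω ξ u).Nonempty) :
    chordLen Ω ξ u = sSup (chord Ω ξ u) - sInf (chord Ω ξ u) :=
  volume_interval (h.chord_convex ξ u) (h.chord_bdd hξ u) hne

lemma sub_le_chordLen (h : Body Ω) {ξ : E2} (hξ : ξ ≠ 0) {u v v' : ℝ} (hv : v ∈ chord Ω ξ u)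
    (hv' : v' ∈ chord Ω ξ u) : v' - v ≤ chordLen Ω ξ u := by
  have hbb := isBounded_iff_bddBelow_bddAbove.1 (h.chord_bdd hξ u)
  rw [h.chordLen_eq hξ ⟨v, hv⟩]
  exact sub_le_sub (le_csSup hbb.2 hv') (csInf_le hbb.1 hv)

lemma exists_chord (h : Body Ω) {ξ : E2} (hξ : ξ ≠ 0) {u : ℝ} (hne : (chord Ω ξ u).Nonempty)
    {η : ℝ} (hη : 0 < η) :
    ∃ v ∈ chord Ω ξ u, ∃ v' ∈ chord Ω ξ u, chordLen Ω ξ u - η < v' - v := by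
  rw [h.chordLen_eq hξ hne]
  obtain ⟨v', hv', h1⟩ := exists_lt_of_lt_csSup hne
    (show sSup (chord Ω ξ u) - η / 2 < sSup (chord Ω ξ u) by linarith)
  obtain ⟨v, hv, h2⟩ := exists_lt_of_csInf_lt hne
    (show sInf (chord Ω ξ u) < sInf (chord Ω ξ u) + η / 2 by linarith)
  exact ⟨v, hv, v', hv', by linarith⟩

lemma chord_nonempty (h : Body Ω) {ξ : E2} (hξ : ξ ≠ 0) {u : ℝ}
    (hu : u ∈ Ioo (-suppFn Ω (-ξ)) (suppFn Ω ξ)) : (chord Ω ξ u).Nonempty := by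
  obtain ⟨x, hx, h1⟩ := h.exists_lt_inner hu.2
  obtain ⟨y, hy, h2⟩ := h.exists_lt_inner (show -u < suppFn Ω (-ξ) by linarith [hu.1])
  rw [inner_neg_right] at h2
  have hd : 0 < ⟪x, ξ⟫ - ⟪y, ξ⟫ := by linarith
  have hm := h.conv hx hy (show 0 ≤ (u - ⟪y, ξ⟫) / (⟪x, ξ⟫ - ⟪y, ξ⟫) from
    div_nonneg (by linarith) hd.le) (show 0 ≤ (⟪x, ξ⟫ - u) / (⟪x, ξ⟫ - ⟪y, ξ⟫) from
    div_nonneg (by linarith) hd.le) (by field_simp; ring)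
  obtain ⟨v, hv⟩ := pt_surj hξ (((u - ⟪y, ξ⟫) / (⟪x, ξ⟫ - ⟪y, ξ⟫)) • x +
    ((⟪x, ξ⟫ - u) / (⟪x, ξ⟫ - ⟪y, ξ⟫)) • y)
  refine ⟨v, ?_⟩
  rw [hv] at hm
  have e : ⟪((u - ⟪y, ξ⟫) / (⟪x, ξ⟫ - ⟪y, ξ⟫)) • x +
    ((⟪x, ξ⟫ - u) / (⟪x, ξ⟫ - ⟪y, ξ⟫)) • y, ξ⟫ = u := by
    rw [inner_add_left, inner_smul_left, inner_smul_left]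
    simp only [conj_trivial]
    field_simp
    ring
  rw [e] at hm
  exact hm

lemma chord_empty (h : Body Ω) {ξ : E2} (hξ : ξ ≠ 0) {u : ℝ} (hu : suppFn Ω ξ ≤ u) :
    chord Ω ξ u = ∅ := by
  refine eq_empty_of_forall_notMem fun v hv => ?_
  have := h.inner_lt_supp hv hξ
  rw [inner_pt hξ] at this
  linarith

lemma chordLen_neg (ξ : E2) (u : ℝ) : chordLen Ω (-ξ) u = chordLen Ω ξ (-u) := by
  have : chord Ω (-ξ) u = -chord Ω ξ (-u) := by
    ext v; simp [chord, pt_neg]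
  rw [chordLen, this, Measure.measure_neg, chordLen]

/-- The two endpoints of a chord lie on the boundary and in the cap cut off by the chord. -/
lemma chordLen_le_cap (h : Body Ω) {ξ : E2} (hξ : ξ ≠ 0) {K : ℝ}
    (hK : ∀ θ : E2, ‖θ‖ = 1 → ∀ δ : ℝ, 0 < δ → capDiam Ω θ δ ≤ K * √δ) {s : ℝ} (hs : 0 < s) :
    chordLen Ω ξ (suppFn Ω ξ - s) ≤ K / (‖ξ‖ * √‖ξ‖) * √s := by
  have hn : 0 < ‖ξ‖ := norm_pos_iff.2 hξ
  have hcap := hK (‖ξ‖⁻¹ • ξ) (by rw [norm_smul, norm_inv, norm_norm, inv_mul_cancel₀ hn.ne'])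
    (s / ‖ξ‖) (by positivity)
  have hK' : ‖ξ‖ * (K / (‖ξ‖ * √‖ξ‖) * √s) = K * √(s / ‖ξ‖) := by
    rw [Real.sqrt_div hs.le]
    field_simp
  refine le_of_mul_le_mul_left (a := ‖ξ‖) ?_ hn
  rw [hK']
  refine le_trans ?_ hcap
  rcases (chord Ω ξ (suppFn Ω ξ - s)).eq_empty_or_nonempty with he | hne
  · rw [chordLen, he]
    simp [capDiam, Metric.diam_nonneg]
  set u := suppFn Ω ξ - s with hu
  have hbb := isBounded_iff_bddBelow_bddAbove.1 (h.chord_bdd hξ u)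
  have hcont : Continuous fun v => pt ξ u v :=
    (continuous_pt ξ).comp (by fun_prop : Continuous fun v : ℝ => (u, v))
  have hcl : ∀ v ∈ closure (chord Ω ξ u), pt ξ u v ∈ closure Ω := fun v hv =>
    map_mem_closure hcont hv fun w hw => hw
  have hsup : sSup (chord Ω ξ u) ∉ chord Ω ξ u := fun hm => by
    obtain ⟨r, hr, hb⟩ := Metric.isOpen_iff.1 (h.chord_isOpen ξ u) _ hm
    have := le_csSup hbb.2 (hb (show sSup (chord Ω ξ u) + r / 2 ∈ _ by
      rw [Metric.mem_ball, Real.dist_eq, add_sub_cancel_left, abs_of_pos] <;> linarith))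
    linarith
  have hinf : sInf (chord Ω ξ u) ∉ chord Ω ξ u := fun hm => by
    obtain ⟨r, hr, hb⟩ := Metric.isOpen_iff.1 (h.chord_isOpen ξ u) _ hm
    have := csInf_le hbb.1 (hb (show sInf (chord Ω ξ u) - r / 2 ∈ _ by
      rw [Metric.mem_ball, Real.dist_eq, sub_sub_cancel_left, abs_neg, abs_of_pos] <;> linarith))
    linarith
  have hmem : ∀ v ∈ closure (chord Ω ξ u), v ∉ chord Ω ξ u → pt ξ u v ∈ {x ∈ frontier Ω |
      suppFn Ω (‖ξ‖⁻¹ • ξ) - s / ‖ξ‖ ≤ ⟪x, ‖ξ‖⁻¹ • ξ⟫} := fun v hv hv' => by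
    refine ⟨⟨hcl v hv, ?_⟩, ?_⟩
    · rw [h.isOpen.interior_eq]; exact hv'
    · rw [h.supp_smul (by positivity), inner_smul_right, inner_pt hξ, hu]
      apply le_of_eq; ring
  have hd := Metric.dist_le_diam_of_mem
    (s := {x ∈ frontier Ω | suppFn Ω (‖ξ‖⁻¹ • ξ) - s / ‖ξ‖ ≤ ⟪x, ‖ξ‖⁻¹ • ξ⟫})
    (h.bdd.closure.subset fun x hx => hx.1.1)
    (hmem _ (csSup_mem_closure hne hbb.2) hsup) (hmem _ (csInf_mem_closure hne hbb.1) hinf)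
  refine le_trans ?_ hd
  rw [h.chordLen_eq hξ hne, dist_eq_norm, pt, pt, add_sub_add_left_eq_sub, ← sub_smul, norm_smul,
    norm_perp, mul_comm]
  gcongr
  exact le_abs_self _

/-- A chord at depth `s` forces the support function to be convex transversally. -/
lemma chordLen_mul_le (h : Body Ω) {ξ : E2} (hξ : ξ ≠ 0) (η : E2) {s : ℝ}
    (hs : suppFn Ω ξ - s ∈ Ioo (-suppFn Ω (-ξ)) (suppFn Ω ξ)) :
    chordLen Ω ξ (suppFn Ω ξ - s) * |⟪perp ξ, η⟫| ≤
      suppFn Ω (ξ + η) + suppFn Ω (ξ - η) - 2 * suppFn Ω ξ + 2 * s := by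
  have hne := h.chord_nonempty hξ hs
  set u := suppFn Ω ξ - s with hu
  have key : ∀ v ∈ chord Ω ξ u, ∀ v' ∈ chord Ω ξ u, (v' - v) * |⟪perp ξ, η⟫| ≤
      suppFn Ω (ξ + η) + suppFn Ω (ξ - η) - 2 * suppFn Ω ξ + 2 * s := by
    have main : ∀ v ∈ chord Ω ξ u, ∀ v' ∈ chord Ω ξ u, (v' - v) * ⟪perp ξ, η⟫ ≤
      suppFn Ω (ξ + η) + suppFn Ω (ξ - η) - 2 * suppFn Ω ξ + 2 * s := by
      intro v hv v' hv'
      have h1 := h.le_supp hv' (ξ + η)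
      have h2 := h.le_supp hv (ξ - η)
      rw [inner_add_right, inner_pt hξ] at h1
      rw [inner_sub_right, inner_pt hξ] at h2
      have h3 : ⟪pt ξ u v', η⟫ - ⟪pt ξ u v, η⟫ = (v' - v) * ⟪perp ξ, η⟫ := by
        rw [← inner_sub_left, pt, pt, add_sub_add_left_eq_sub, ← sub_smul, inner_smul_left]
        simp
      linarith
    intro v hv v' hv'
    rcases abs_choice ⟪perp ξ, η⟫ with e | e
    · rw [e]; exact main v hv v' hv'
    · rw [e]; have := main v' hv' v hv; linarith
  refine le_of_forall_pos_le_add fun τ hτ => ?_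
  obtain ⟨v, hv, v', hv', hl⟩ := h.exists_chord hξ hne
    (show 0 < τ / (|⟪perp ξ, η⟫| + 1) by positivity)
  have := key v hv v' hv'
  have h5 : τ / (|⟪perp ξ, η⟫| + 1) * |⟪perp ξ, η⟫| ≤ τ := by
    rw [div_mul_eq_mul_div, div_le_iff₀ (by positivity)]
    nlinarith [abs_nonneg ⟪perp ξ, η⟫]
  nlinarith [abs_nonneg ⟪perp ξ, η⟫]

lemma J_integrable (h : Body Ω) {ξ : E2} (hξ : ξ ≠ 0) (T : ℝ) :
    Integrable (fun z : ℝ × ℝ => Ω.indicator (fun x => ee (-(⟪x, ξ⟫ * T))) (pt ξ z.1 z.2)) := by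
  have hm := measurePreserving_pt hξ
  refine hm.integrable_comp_of_integrable
    (g := Ω.indicator (fun x => ee (-(⟪x, ξ⟫ * T)))) ?_
  rw [integrable_indicator_iff h.isOpen.measurableSet]
  refine Measure.integrableOn_of_bounded (M := 1) h.bdd.measure_lt_top.ne ?_ ?_
  · exact (continuous_ee.comp (by fun_prop)).aestronglyMeasurable
  · exact Filter.Eventually.of_forall fun x => (norm_ee _).le

lemma J_inner (h : Body Ω) {ξ : E2} (hξ : ξ ≠ 0) (T u : ℝ) :
    ∫ v, Ω.indicator (fun x => ee (-(⟪x, ξ⟫ * T))) (pt ξ u v)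
      = (chordLen Ω ξ u : ℂ) * ee (-(u * T)) := by
  have : (fun v => Ω.indicator (fun x => ee (-(⟪x, ξ⟫ * T))) (pt ξ u v))
      = (chord Ω ξ u).indicator (fun _ => ee (-(u * T))) := by
    ext v
    by_cases hv : v ∈ chord Ω ξ u
    · rw [indicator_of_mem hv, indicator_of_mem (show pt ξ u v ∈ Ω from hv), inner_pt hξ]
    · rw [indicator_of_notMem hv, indicator_of_notMem (show pt ξ u v ∉ Ω from hv)]
  rw [this, integral_indicator (h.chord_isOpen ξ u).measurableSet, setIntegral_const]
  rw [chordLen, measureReal_def, Complex.real_smul]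

lemma chordLen_integrable (h : Body Ω) {ξ : E2} (hξ : ξ ≠ 0) : Integrable (chordLen Ω ξ) := by
  have := (h.J_integrable hξ 0).integral_prod_left
  simp only [h.J_inner hξ] at this
  simpa [ee_zero] using this.re

/-- By Fubini, the Fourier transform of `Ω` along the ray `Tξ` is that of the chord lengths. -/
lemma J_eq_ft (h : Body Ω) {ξ : E2} (hξ : ξ ≠ 0) (T : ℝ) :
    J Ω ξ T = ft (chordLen Ω ξ) T := by
  have hm := measurePreserving_pt hξ
  rw [J, ← integral_indicator h.isOpen.measurableSet]
  conv_lhs => rw [← hm.map_eq]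
  rw [integral_map hm.measurable.aemeasurable]
  · change ∫ z, _ ∂(volume.prod volume) = _
    rw [integral_prod _ (h.J_integrable hξ T)]
    simp only [h.J_inner hξ]
    rfl
  · exact ((continuous_ee.comp (by fun_prop)).measurable.indicator
      h.isOpen.measurableSet).aestronglyMeasurable

/-- The chord lengths in direction `ξ` form a profile. -/
lemma profile (h : Body Ω) {ξ : E2} (hξ : ξ ≠ 0) {K : ℝ} (hK0 : 0 ≤ K)
    (hK : ∀ θ : E2, ‖θ‖ = 1 → ∀ δ : ℝ, 0 < δ → capDiam Ω θ δ ≤ K * √δ) {M : ℝ}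
    (hM : K / (‖ξ‖ * √‖ξ‖) ≤ M) :
    Profile (chordLen Ω ξ) (-suppFn Ω (-ξ)) (suppFn Ω ξ) M where
  nonneg u := ENNReal.toReal_nonneg
  integrable := h.chordLen_integrable hξ
  lt := by
    have h1 := h.inner_lt_supp h.zero_mem hξ
    have h2 := h.inner_lt_supp h.zero_mem (neg_ne_zero.2 hξ)
    rw [inner_zero_left] at h1 h2
    linarith
  zero_left u hu := by
    rw [← neg_neg ξ, chordLen_neg, chordLen, h.chord_empty (neg_ne_zero.2 hξ) (by linarith)]
    simp
  zero_right u hu := by rw [chordLen, h.chord_empty hξ hu]; simp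
  conc := by
    refine ⟨convex_Ioo _ _, fun u hu u' hu' a b ha hb hab => ?_⟩
    refine le_of_forall_pos_le_add fun τ hτ => ?_
    obtain ⟨v, hv, w, hw, h1⟩ := h.exists_chord hξ (h.chord_nonempty hξ hu) hτ
    obtain ⟨v', hv', w', hw', h2⟩ := h.exists_chord hξ (h.chord_nonempty hξ hu') hτ
    have e1 := h.conv hv hv' ha hb hab
    have e2 := h.conv hw hw' ha hb hab
    rw [← pt_comb] at e1 e2
    have := h.sub_le_chordLen hξ e1 e2
    simp only [smul_eq_mul]
    nlinarith
  M_nonneg := le_trans (by positivity) hM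
  right s hs := (h.chordLen_le_cap hξ hK hs).trans (by gcongr)
  left s hs := by
    have := h.chordLen_le_cap (neg_ne_zero.2 hξ) hK hs
    rw [chordLen_neg, norm_neg, show -(suppFn Ω (-ξ) - s) = -suppFn Ω (-ξ) + s by ring] at this
    exact this.trans (by gcongr)

end Body

/-! ### Parseval's identity on the torus -/

/-- The plane with the supremum norm. -/
abbrev V2 := Fin 2 → ℝ

/-- Integer frequencies. -/
abbrev Z2 := Fin 2 → ℤ

/-- The half-open unit square. -/
def usq : Set V2 := {x | ∀ i, x i ∈ Ioc (0 : ℝ) (0 + 1)}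

/-- The pairing of a point of the plane with a frequency. -/
def dotv (x : V2) (k : Z2) : ℝ := x 0 * k 0 + x 1 * k 1

/-- An integer vector as a point of the plane. -/
def zv (n : Z2) : V2 := fun i => n i

/-- The box of integer vectors with supremum norm at most `m`. -/
def box (m : ℕ) : Finset Z2 := Finset.Icc (fun _ => -(m : ℤ)) (fun _ => (m : ℤ))

lemma mem_box {m : ℕ} {k : Z2} : k ∈ box m ↔ ∀ i, |k i| ≤ m := by
  simp only [box, Finset.mem_Icc, Pi.le_def, abs_le, ← forall_and]

lemma measurableSet_sq : MeasurableSet usq :=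
  MeasurableSet.univ_pi' fun _ => measurableSet_Ioc

section
attribute [local instance] instMeasureSpaceUnitAddCircle

lemma mFourier_neg_eq (k : Z2) (x : V2) :
    UnitAddTorus.mFourier (-k) (fun i => (x i : UnitAddCircle)) = ee (-(dotv x k)) := by
  simp only [UnitAddTorus.mFourier, ContinuousMap.coe_mk, Fin.prod_univ_two, fourier_coe_apply]
  rw [← Complex.exp_add]
  unfold ee dotv
  congr 1
  push_cast
  simp
  ring

/-- Parseval's identity for bounded functions on the unit square. -/
lemma parseval_sq {F G : V2 → ℂ} (hF : Measurable F) (hG : Measurable G) {C : ℝ}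
    (hFC : ∀ x ∈ usq, ‖F x‖ ≤ C) (hGC : ∀ x ∈ usq, ‖G x‖ ≤ C) :
    HasSum (fun k : Z2 => (starRingEnd ℂ) (∫ x in usq, ee (-(dotv x k)) * F x) *
      ∫ x in usq, ee (-(dotv x k)) * G x) (∫ x in usq, (starRingEnd ℂ) (F x) * G x) := by
  have : IsProbabilityMeasure (volume : Measure UnitAddCircle) :=
    inferInstanceAs (IsProbabilityMeasure AddCircle.haarAddCircle)
  have : IsFiniteMeasure (volume : Measure (UnitAddTorus (Fin 2))) := inferInstance
  let e := UnitAddTorus.measurableEquivPiIoc (fun _ : Fin 2 => (0 : ℝ))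
  have he : ∀ x ∈ usq, ((e fun i => (x i : UnitAddCircle)) : V2) = x := by
    intro x hx
    have : (fun i => (x i : UnitAddCircle)) = e.symm ⟨x, hx⟩ := rfl
    rw [this, e.apply_symm_apply]
  have key : ∀ {F : V2 → ℂ}, Measurable F → (∀ x ∈ usq, ‖F x‖ ≤ C) →
      MemLp (fun t => F (e t)) 2 (volume : Measure (UnitAddTorus (Fin 2))) := by
    intro F hF hFC
    refine MemLp.of_bound ?_ C ?_
    · exact (hF.comp (measurable_subtype_coe.comp e.measurable)).aestronglyMeasurable
    · exact Filter.Eventually.of_forall fun t => hFC _ (e t).2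
  have hf := key hF hFC
  have hg := key hG hGC
  have coef : ∀ {F : V2 → ℂ} (hf : MemLp (fun t => F (e t)) 2
      (volume : Measure (UnitAddTorus (Fin 2)))) (k : Z2),
      UnitAddTorus.mFourierCoeff (hf.toLp _) k = ∫ x in usq, ee (-(dotv x k)) * F x := by
    intro F hf k
    have : UnitAddTorus.mFourierCoeff (hf.toLp _) k
        = UnitAddTorus.mFourierCoeff (fun t => F (e t)) k := by
      refine integral_congr_ae ?_
      filter_upwards [hf.coeFn_toLp] with t ht
      rw [ht]
    rw [this, UnitAddTorus.mFourierCoeff_eq_integral _ _ (fun _ => 0)]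
    refine setIntegral_congr_fun measurableSet_sq fun x hx => ?_
    simp only [mFourier_neg_eq, he x hx, smul_eq_mul]
  have main := UnitAddTorus.hasSum_prod_mFourierCoeff (hf.toLp _) (hg.toLp _)
  simp only [coef] at main
  convert main using 1
  rw [integral_congr_ae (g := fun t => (starRingEnd ℂ) (F (e t)) * G (e t)),
    UnitAddTorus.integral_preimage _ (fun _ => 0)]
  · refine setIntegral_congr_fun measurableSet_sq fun x hx => ?_
    simp only [he x hx]
  · filter_upwards [hf.coeFn_toLp, hg.coeFn_toLp] with t ht ht'
    rw [ht, ht']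

end

/-- The integer part of a point relative to the half-open unit square. -/
def ipart (x : V2) : Z2 := fun i => ⌈x i⌉ - 1

lemma sub_mem_sq_iff (x : V2) (n : Z2) : x - zv n ∈ usq ↔ n = ipart x := by
  constructor
  · intro h
    funext i
    have h1 := (h i).1
    have h2 := (h i).2
    simp only [Pi.sub_apply, zv] at h1 h2
    have : ⌈x i⌉ = n i + 1 := by
      rw [Int.ceil_eq_iff]
      push_cast
      constructor <;> linarith
    simp [ipart, this]
  · rintro rfl i
    simp only [Pi.sub_apply, zv, ipart]
    push_cast
    exact ⟨by linarith [Int.ceil_lt_add_one (x i)], by linarith [Int.le_ceil (x i)]⟩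

/-- Unfolding: integrating a periodization over the unit square. -/
lemma unfold_sq {H : V2 → ℂ} (hH : Integrable H) {s : Finset Z2}
    (hs : ∀ x, H x ≠ 0 → ipart x ∈ s) :
    ∫ x in usq, ∑ n ∈ s, H (x + zv n) = ∫ x, H x := by
  classical
  have h1 : ∀ x, H x = ∑ n ∈ s, usq.indicator (fun y => H (y + zv n)) (x - zv n) := by
    intro x
    by_cases hx : H x = 0
    · rw [hx, Finset.sum_eq_zero]
      intro n _
      by_cases hm : x - zv n ∈ usq <;> simp [hm, hx]
    · rw [Finset.sum_eq_single_of_mem (ipart x) (hs x hx)]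
      · rw [indicator_of_mem ((sub_mem_sq_iff _ _).2 rfl), sub_add_cancel]
      · intro n _ hn
        rw [indicator_of_notMem]
        rwa [sub_mem_sq_iff]
  have hi : ∀ n : Z2, Integrable (usq.indicator fun y => H (y + zv n)) := fun n =>
    (hH.comp_add_right (zv n)).indicator measurableSet_sq
  calc ∫ x in usq, ∑ n ∈ s, H (x + zv n)
      = ∑ n ∈ s, ∫ x in usq, H (x + zv n) :=
        integral_finsetSum _ fun n _ => (hH.comp_add_right (zv n)).integrableOn
    _ = ∑ n ∈ s, ∫ x, usq.indicator (fun y => H (y + zv n)) (x - zv n) := by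
        refine Finset.sum_congr rfl fun n _ => ?_
        rw [integral_sub_right_eq_self (usq.indicator fun y => H (y + zv n)),
          integral_indicator measurableSet_sq]
    _ = ∫ x, ∑ n ∈ s, usq.indicator (fun y => H (y + zv n)) (x - zv n) :=
        (integral_finsetSum _ fun n _ => (hi n).comp_sub_right (zv n)).symm
    _ = ∫ x, H x := by simp_rw [← h1]

/-- The number of integer translates of `y` lying in `A`. -/
def cnt (A : Set V2) (y : V2) : ℕ := Nat.card {n : Z2 | y + zv n ∈ A}

lemma zv_add (m n : Z2) : zv (m + n) = zv m + zv n := by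
  ext i; simp [zv]

lemma cnt_add (A : Set V2) (y : V2) (n : Z2) : cnt A (y + zv n) = cnt A y := by
  unfold cnt
  refine Nat.card_congr ⟨fun m => ⟨n + m.1, ?_⟩, fun m => ⟨m.1 - n, ?_⟩, ?_, ?_⟩
  · have := m.2
    simp only [Set.mem_ofPred_eq] at this ⊢
    rwa [zv_add, ← add_assoc]
  · have := m.2
    simp only [Set.mem_ofPred_eq] at this ⊢
    rwa [add_assoc, ← zv_add, add_sub_cancel]
  · intro m; simp
  · intro m; simp

lemma cnt_eq_sum {A : Set V2} {y : V2} {s : Finset Z2} (hs : ∀ n, y + zv n ∈ A → n ∈ s) :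
    (cnt A y : ℂ) = ∑ n ∈ s, A.indicator (fun _ => (1 : ℂ)) (y + zv n) := by
  classical
  have : {n : Z2 | y + zv n ∈ A} = ((s.filter fun n => y + zv n ∈ A : Finset Z2) : Set Z2) := by
    ext n; simp only [Set.mem_ofPred_eq, Finset.coe_filter]; exact ⟨fun h => ⟨hs n h, h⟩, fun h => h.2⟩
  rw [cnt, this, Nat.card_coe_set_eq, Set.ncard_coe_finset, Finset.card_filter]
  push_cast
  rfl

lemma ee_int (n : ℤ) : ee n = 1 := by
  unfold ee
  rw [← Complex.exp_int_mul_two_pi_mul_I n]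
  congr 1
  push_cast
  ring

lemma ee_dotv_add (x : V2) (n k : Z2) : ee (-(dotv (x + zv n) k)) = ee (-(dotv x k)) := by
  have : -(dotv (x + zv n) k) = -(dotv x k) + ((-(n 0 * k 0 + n 1 * k 1) : ℤ) : ℝ) := by
    simp [dotv, zv]; ring
  rw [this, ee_add, ee_int, mul_one]

lemma continuous_dotv (k : Z2) : Continuous fun x : V2 => dotv x k := by
  unfold dotv; fun_prop

/-- Parseval's identity for the periodizations of two bounded sets. -/
lemma parseval_sets {A B : Set V2} (hA : MeasurableSet A) (hB : MeasurableSet B)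
    (bA : Bornology.IsBounded A) (bB : Bornology.IsBounded B) :
    IntegrableOn (fun y => (cnt A y : ℂ)) B ∧
    HasSum (fun k : Z2 => (∫ x in A, ee (-(dotv x k))) *
      (starRingEnd ℂ) (∫ x in B, ee (-(dotv x k)))) (∫ y in B, (cnt A y : ℂ)) := by
  obtain ⟨rA, hrA⟩ := bA.exists_norm_le
  obtain ⟨rB, hrB⟩ := bB.exists_norm_le
  obtain ⟨m, hm⟩ := exists_nat_ge (max rA rB + 1)
  have hmA : rA + 1 ≤ m := by linarith [le_max_left rA rB]
  have hmB : rB + 1 ≤ m := by linarith [le_max_right rA rB]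
  have hco : ∀ {x : V2} {r : ℝ}, ‖x‖ ≤ r → ∀ i, |x i| ≤ r := fun hx i =>
    (norm_le_pi_norm _ i).trans hx
  have hip : ∀ {x : V2} {r : ℝ}, ‖x‖ ≤ r → r + 1 ≤ m → ipart x ∈ box m := by
    intro x r hx hr
    rw [mem_box]
    intro i
    have h1 := abs_le.1 (hco hx i)
    have h2 := Int.ceil_lt_add_one (x i)
    have h3 := Int.le_ceil (x i)
    rw [← @Int.cast_le ℝ, Int.cast_abs]
    simp only [ipart]
    push_cast
    rw [abs_le]
    constructor <;> linarith
  have hsq : ∀ {x : V2} {D : Set V2} {r : ℝ}, (∀ x ∈ D, ‖x‖ ≤ r) → r + 1 ≤ m → x ∈ usq →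
      ∀ n, x + zv n ∈ D → n ∈ box m := by
    intro x D r hD hr hx n hn
    have := hip (hD _ hn) hr
    rwa [← (sub_mem_sq_iff (x + zv n) n).1 (by rwa [add_sub_cancel_right])] at this
  -- periodized indicator functions
  set P : Set V2 → V2 → ℂ := fun D x => ∑ n ∈ box m, D.indicator (fun _ => (1 : ℂ)) (x + zv n)
    with hP
  have hPm : ∀ {D : Set V2}, MeasurableSet D → Measurable (P D) := by
    intro D hD
    refine Finset.measurable_fun_sum _ fun n _ => ?_
    exact (measurable_const.indicator hD).comp (measurable_id.add_const _)
  have hPb : ∀ (D : Set V2) (x : V2), ‖P D x‖ ≤ (box m).card := by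
    intro D x
    refine (norm_sum_le _ _).trans ?_
    rw [Finset.card_eq_sum_ones, Nat.cast_sum]
    refine Finset.sum_le_sum fun n _ => ?_
    by_cases h : x + zv n ∈ D <;> simp [h]
  have hintD : ∀ {D : Set V2}, MeasurableSet D → Bornology.IsBounded D → ∀ {f : V2 → ℂ},
      Measurable f → ∀ {C : ℝ}, (∀ x, ‖f x‖ ≤ C) → Integrable (D.indicator f) := by
    intro D hD bD f hf C hC
    rw [integrable_indicator_iff hD]
    exact Measure.integrableOn_of_bounded (M := C) bD.measure_lt_top.ne hf.aestronglyMeasurable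
      (Filter.Eventually.of_forall hC)
  have hcoef : ∀ {D : Set V2}, MeasurableSet D → Bornology.IsBounded D → ∀ {r : ℝ},
      (∀ x ∈ D, ‖x‖ ≤ r) → r + 1 ≤ m → ∀ k : Z2,
      ∫ x in usq, ee (-(dotv x k)) * P D x = ∫ x in D, ee (-(dotv x k)) := by
    intro D hD bD r hr hrm k
    have hH := hintD hD bD (f := fun x => ee (-(dotv x k)))
      (continuous_ee.comp (continuous_dotv k).neg).measurable (C := 1) (fun x => (norm_ee _).le)
    have := unfold_sq hH (s := box m) (fun x hx => hip (hr x (mem_of_indicator_ne_zero hx)) hrm)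
    rw [integral_indicator hD] at this
    rw [← this]
    refine setIntegral_congr_fun measurableSet_sq fun x _ => ?_
    simp only [hP, Finset.mul_sum]
    refine Finset.sum_congr rfl fun n _ => ?_
    by_cases h : x + zv n ∈ D <;> simp [h, ee_dotv_add]
  have hpar := parseval_sq (hPm hB) (hPm hA) (fun x _ => hPb B x) (fun x _ => hPb A x)
  simp only [hcoef hA bA hrA hmA, hcoef hB bB hrB hmB] at hpar
  have hval : IntegrableOn (fun y => (cnt A y : ℂ)) B ∧
      ∫ y in B, (cnt A y : ℂ) = ∫ x in usq, (starRingEnd ℂ) (P B x) * P A x := by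
    have hc : ∀ y ∈ B, (cnt A y : ℂ)
        = ∑ n ∈ box (2 * m), A.indicator (fun _ => (1 : ℂ)) (y + zv n) := by
      intro y hy
      refine cnt_eq_sum fun n hn => ?_
      rw [mem_box]
      intro i
      have h1 := abs_le.1 (hco (hrA _ hn) i)
      have h2 := abs_le.1 (hco (hrB _ hy) i)
      simp only [Pi.add_apply, zv] at h1
      rw [← @Int.cast_le ℝ, Int.cast_abs]
      push_cast
      rw [abs_le]
      constructor <;> linarith
    have hH : Integrable (B.indicator fun y => (cnt A y : ℂ)) := by
      have : B.indicator (fun y => (cnt A y : ℂ)) = B.indicator fun y =>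
          ∑ n ∈ box (2 * m), A.indicator (fun _ => (1 : ℂ)) (y + zv n) :=
        indicator_congr hc
      rw [this]
      refine hintD hB bB ?_ (C := (box (2 * m)).card) ?_
      · refine Finset.measurable_fun_sum _ fun n _ => ?_
        exact (measurable_const.indicator hA).comp (measurable_id.add_const _)
      · intro x
        refine (norm_sum_le _ _).trans ?_
        rw [Finset.card_eq_sum_ones, Nat.cast_sum]
        refine Finset.sum_le_sum fun n _ => ?_
        by_cases h : x + zv n ∈ A <;> simp [h]
    refine ⟨(integrable_indicator_iff hB).1 hH, ?_⟩
    have := unfold_sq hH (s := box m) (fun x hx => hip (hrB x (mem_of_indicator_ne_zero hx)) hmB)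
    rw [integral_indicator hB] at this
    rw [← this]
    refine setIntegral_congr_fun measurableSet_sq fun x hx => ?_
    have hA' : P A x = cnt A x := (cnt_eq_sum (hsq hrA hmA hx)).symm
    simp only [hA']
    simp only [map_sum, hP, Finset.sum_mul]
    refine Finset.sum_congr rfl fun n _ => ?_
    by_cases h : x + zv n ∈ B <;> simp [h, cnt_add]
  refine ⟨hval.1, ?_⟩
  rw [hval.2]
  refine hpar.congr_fun fun k => ?_
  rw [mul_comm]

/-! ### The data attached to integer frequencies -/

/-- The determinant of two integer vectors. -/
def cross (k j : Z2) : ℤ := k 0 * j 1 - k 1 * j 0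

/-- What the estimates need to know about the domain: a nonsymmetric norm `ρ` (its support
function) and, for each integer frequency `k`, the function `S k` of chord lengths in the direction
`k`.  The field `chord` says that a long chord near the top of the body in the direction `k` forces
the second differences of `ρ` at `k` to be large. -/
structure Sys (ρ : V2 → ℝ) (S : Z2 → ℝ → ℝ) (K c C : ℝ) : Prop where
  K_nonneg : 0 ≤ K
  c_pos : 0 < c
  C_pos : 0 < C
  add_le : ∀ x y, ρ (x + y) ≤ ρ x + ρ y
  smul : ∀ a x, 0 ≤ a → ρ (a • x) = a * ρ x
  lower : ∀ x, c * ‖x‖ ≤ ρ x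
  upper : ∀ x, ρ x ≤ C * ‖x‖
  profile : ∀ k, k ≠ 0 → Profile (S k) (-ρ (-zv k)) (ρ (zv k)) (K / (‖k‖ * √‖k‖))
  neg : ∀ k u, S (-k) u = S k (-u)
  chord : ∀ k j u s, k ≠ 0 → 0 < s → ρ (zv k) - s ≤ u →
    S k u * |(cross k j : ℝ)| ≤ ρ (zv k + zv j) + ρ (zv k - zv j) - 2 * ρ (zv k) + 2 * s

lemma ek_eq (k : Z2) : ek k = WithLp.toLp 2 (zv k) := rfl

lemma zv_neg (k : Z2) : zv (-k) = -zv k := by ext i; simp [zv]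

lemma norm_zv (k : Z2) : ‖zv k‖ = ‖k‖ := by
  have : ∀ i, ‖zv k i‖₊ = ‖k i‖₊ := fun i => NNReal.eq (Int.norm_cast_real (k i))
  simp only [Pi.norm_def, this]

lemma norm_le_toLp (x : V2) : ‖x‖ ≤ ‖(WithLp.toLp 2 x : E2)‖ := by
  refine (pi_norm_le_iff_of_nonneg (norm_nonneg _)).2 fun i => ?_
  exact PiLp.norm_apply_le (WithLp.toLp 2 x : E2) i

lemma toLp_norm_le (x : V2) : ‖(WithLp.toLp 2 x : E2)‖ ≤ 2 * ‖x‖ := by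
  have h0 := norm_le_pi_norm x 0
  have h1 := norm_le_pi_norm x 1
  rw [Real.norm_eq_abs] at h0 h1
  refine abs_le_of_sq_le_sq' ?_ (by positivity) |>.2
  rw [norm_sq_E2]
  have a0 := sq_le_sq' (by linarith [neg_abs_le (x 0)]) ((le_abs_self _).trans h0)
  have a1 := sq_le_sq' (by linarith [neg_abs_le (x 1)]) ((le_abs_self _).trans h1)
  simp only
  nlinarith [norm_nonneg x]

lemma one_le_norm {k : Z2} (hk : k ≠ 0) : 1 ≤ ‖k‖ := by
  obtain ⟨i, hi⟩ : ∃ i, k i ≠ 0 := by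
    by_contra! h
    exact hk (funext h)
  refine le_trans ?_ (norm_le_pi_norm k i)
  rw [Int.norm_eq_abs]
  exact_mod_cast Int.one_le_abs hi

lemma ek_ne_zero {k : Z2} (hk : k ≠ 0) : ek k ≠ 0 := by
  rw [← norm_pos_iff, ek_eq]
  have := norm_le_toLp (zv k)
  rw [norm_zv] at this
  linarith [one_le_norm hk]

/-- The system attached to a convex body with curvature bounded below. -/
lemma Body.exists_sys {Ω : Set E2} (h : Body Ω) (hc : CurvBddBelow Ω) :
    ∃ K c C : ℝ, Sys (fun x => suppFn Ω (WithLp.toLp 2 x)) (fun k => chordLen Ω (ek k)) K c C := by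
  obtain ⟨K₀, hK₀⟩ := hc
  obtain ⟨c, C, hc, hC, hb⟩ := h.supp_bounds
  have hK : ∀ θ : E2, ‖θ‖ = 1 → ∀ δ : ℝ, 0 < δ → capDiam Ω θ δ ≤ max K₀ 0 * √δ := fun θ hθ δ hδ =>
    (hK₀ θ hθ δ hδ).trans (by gcongr; exact le_max_left _ _)
  have hconv : ∀ ξ η : E2, 0 ≤ suppFn Ω (ξ + η) + suppFn Ω (ξ - η) - 2 * suppFn Ω ξ := by
    intro ξ η
    have h1 := h.supp_add_le (ξ + η) (ξ - η)
    rw [show ξ + η + (ξ - η) = (2 : ℝ) • ξ by rw [two_smul]; abel,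
      h.supp_smul (by norm_num)] at h1
    linarith
  refine ⟨max K₀ 0, c, C * 2, le_max_right _ _, hc, by positivity, ?_, ?_, ?_, ?_, ?_, ?_, ?_⟩
  · intro x y; exact h.supp_add_le _ _
  · intro a x ha; exact h.supp_smul ha _
  · intro x
    refine le_trans ?_ (hb _).1
    gcongr
    exact norm_le_toLp x
  · intro x
    refine (hb _).2.trans ?_
    rw [mul_assoc]
    gcongr
    exact toLp_norm_le x
  · intro k hk
    refine h.profile (ek_ne_zero hk) (le_max_right _ _) hK ?_
    have h1 : ‖k‖ ≤ ‖ek k‖ := by rw [← norm_zv]; exact norm_le_toLp _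
    have h2 := one_le_norm hk
    have h3 : (0 : ℝ) ≤ max K₀ 0 := le_max_right _ _
    gcongr
  · intro k u
    rw [show ek (-k) = -ek k by rw [ek_eq, zv_neg]; rfl, Body.chordLen_neg]
  · intro k j u s hk hs hu
    have hp := h.profile (ek_ne_zero hk) (le_max_right _ _) hK le_rfl
    have hcv := hconv (ek k) (ek j)
    simp only
    change chordLen Ω (ek k) u * _ ≤ suppFn Ω (ek k + ek j) + suppFn Ω (ek k - ek j)
      - 2 * suppFn Ω (ek k) + 2 * s
    change suppFn Ω (ek k) - s ≤ u at hu
    by_cases h1 : u ≤ -suppFn Ω (-ek k)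
    · rw [hp.zero_left u h1]; linarith
    by_cases h2 : suppFn Ω (ek k) ≤ u
    · rw [hp.zero_right u h2]; linarith
    push Not at h1 h2
    have := h.chordLen_mul_le (ek_ne_zero hk) (ek j) (s := suppFn Ω (ek k) - u)
      ⟨by linarith, by linarith⟩
    rw [sub_sub_cancel] at this
    have e : ⟪perp (ek k), ek j⟫ = (cross k j : ℝ) := by
      simp [perp, ek, cross, PiLp.inner_apply, Fin.sum_univ_two]; ring
    rw [e] at this
    linarith

namespace Sys
variable {ρ : V2 → ℝ} {S : Z2 → ℝ → ℝ} {K c C : ℝ}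

lemma nonneg (h : Sys ρ S K c C) (x : V2) : 0 ≤ ρ x :=
  (mul_nonneg h.c_pos.le (norm_nonneg x)).trans (h.lower x)

lemma lip (h : Sys ρ S K c C) (x y : V2) : ρ x - ρ y ≤ C * ‖x - y‖ := by
  have h1 := h.add_le (x - y) y
  have h2 := h.upper (x - y)
  rw [sub_add_cancel] at h1
  linarith

lemma abs_lip (h : Sys ρ S K c C) (x y : V2) : |ρ x - ρ y| ≤ C * ‖x - y‖ := by
  rw [abs_le]
  have := h.lip x y
  have h2 := h.lip y x
  rw [norm_sub_rev] at h2
  constructor <;> linarith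

end Sys

/-! ### Comparing the lattice count with its regularizations -/

/-- The number of integer translates of `y` lying in `A`. -/
def cntE (A : Set E2) (y : E2) : ℕ := Nat.card {n : Z2 | y + ek n ∈ A}

lemma isBounded_preimage_toLp {A : Set E2} (bA : Bornology.IsBounded A) :
    Bornology.IsBounded ((WithLp.toLp 2 : V2 → E2) ⁻¹' A) := by
  obtain ⟨r, hr⟩ := bA.exists_norm_le
  exact isBounded_iff_forall_norm_le.2 ⟨r, fun x hx => (norm_le_toLp x).trans (hr _ hx)⟩

lemma parseval_E2 {A B : Set E2} (hA : MeasurableSet A) (hB : MeasurableSet B)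
    (bA : Bornology.IsBounded A) (bB : Bornology.IsBounded B) :
    IntegrableOn (fun y => (cntE A y : ℂ)) B ∧
    HasSum (fun k : Z2 => (∫ x in A, ee (-⟪x, ek k⟫)) *
      (starRingEnd ℂ) (∫ x in B, ee (-⟪x, ek k⟫))) (∫ y in B, (cntE A y : ℂ)) := by
  have mp := PiLp.volume_preserving_toLp (Fin 2)
  have me : MeasurableEmbedding (WithLp.toLp 2 : V2 → E2) :=
    (MeasurableEquiv.toLp 2 V2).measurableEmbedding
  have hd : ∀ (x : V2) (k : Z2), dotv x k = ⟪(WithLp.toLp 2 x : E2), ek k⟫ := by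
    intro x k
    simp [dotv, ek, PiLp.inner_apply, Fin.sum_univ_two]; ring
  obtain ⟨h1, h2⟩ := parseval_sets (mp.measurable hA) (mp.measurable hB)
    (isBounded_preimage_toLp bA) (isBounded_preimage_toLp bB)
  simp only [hd] at h2
  have hI : ∀ (D : Set E2) (k : Z2), ∫ x in (WithLp.toLp 2 : V2 → E2) ⁻¹' D,
      ee (-⟪(WithLp.toLp 2 x : E2), ek k⟫) = ∫ x in D, ee (-⟪x, ek k⟫) := fun D k =>
    mp.setIntegral_preimage_emb me (fun x => ee (-⟪x, ek k⟫)) D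
  simp only [hI] at h2
  have hc : ∀ y : V2, cnt ((WithLp.toLp 2 : V2 → E2) ⁻¹' A) y = cntE A (WithLp.toLp 2 y) :=
    fun y => rfl
  simp only [hc] at h1 h2
  refine ⟨?_, ?_⟩
  · exact (mp.integrableOn_comp_preimage me (f := fun y => (cntE A y : ℂ))).1 h1
  · rwa [mp.setIntegral_preimage_emb me (fun y => (cntE A y : ℂ)) B] at h2

lemma finite_translates {A : Set E2} (bA : Bornology.IsBounded A) (y : E2) :
    {n : Z2 | y + ek n ∈ A}.Finite := by
  obtain ⟨r, hr⟩ := bA.exists_norm_le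
  obtain ⟨m, hm⟩ := exists_nat_ge (r + ‖y‖)
  refine (box m).finite_toSet.subset fun n hn => ?_
  rw [Finset.mem_coe, mem_box]
  intro i
  have h1 := hr _ hn
  have h2 : ‖ek n‖ ≤ r + ‖y‖ := by
    have := norm_sub_le (y + ek n) y
    rw [add_sub_cancel_left] at this
    linarith
  have h3 := PiLp.norm_apply_le (ek n) i
  have h4 : ‖ek n i‖ = |(n i : ℝ)| := rfl
  have : |(n i : ℝ)| ≤ m := by linarith
  exact_mod_cast this

namespace Body
variable {Ω : Set E2}

/-- The area of `Ω`. -/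
def area (Ω : Set E2) : ℝ := (volume Ω).toReal

lemma area_pos (h : Body Ω) : 0 < area Ω :=
  ENNReal.toReal_pos (h.isOpen.measure_pos _ ⟨0, h.zero_mem⟩).ne' h.bdd.measure_lt_top.ne

lemma setIntegral_smul (Ω : Set E2) {T : ℝ} (hT : T ≠ 0) (ξ : E2) :
    ∫ y in T • Ω, ee (-⟪y, ξ⟫) = (T : ℂ) ^ 2 * J Ω ξ T := by
  have := Measure.setIntegral_comp_smul (volume : Measure E2) (fun y => ee (-⟪y, ξ⟫)) Ω hT
  rw [finrank_euclideanSpace_fin, abs_of_nonneg (by positivity)] at this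
  have e : J Ω ξ T = ∫ x in Ω, ee (-⟪T • x, ξ⟫) := by
    unfold J
    congr 1
    ext x
    rw [real_inner_smul_left, mul_comm]
  rw [e, this, Complex.real_smul]
  push_cast
  rw [mul_inv_cancel_left₀]
  exact pow_ne_zero _ (by exact_mod_cast hT)

lemma J_neg (Ω : Set E2) (ξ : E2) (T : ℝ) : J Ω ξ (-T) = (starRingEnd ℂ) (J Ω ξ T) := by
  unfold J
  rw [← integral_conj]
  congr 1
  ext x
  rw [conj_ee]
  congr 1
  ring

lemma J_zero (Ω : Set E2) (T : ℝ) : J Ω 0 T = area Ω := by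
  simp [J, ee_zero, area, measureReal_def]

lemma norm_J_le (Ω : Set E2) (ξ : E2) (T : ℝ) : ‖J Ω ξ T‖ ≤ area Ω := by
  refine (norm_integral_le_integral_norm _).trans ?_
  simp [norm_ee, area, measureReal_def]

lemma measurableSet_smul (h : Body Ω) {T : ℝ} (hT : T ≠ 0) : MeasurableSet (T • Ω) :=
  (h.isOpen.smul₀ hT).measurableSet

/-- Parseval's identity for the counting functions of `TΩ` and `eΩ`, divided by the area of `eΩ`. -/
lemma hasSum_aux (h : Body Ω) {T e : ℝ} (hT : T ≠ 0) (he : e ≠ 0) :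
    IntegrableOn (fun y => (cntE (T • Ω) y : ℝ)) (e • Ω) ∧
    HasSum (fun k : Z2 => (T : ℂ) ^ 2 * J Ω (ek k) T *
      ((starRingEnd ℂ) (J Ω (ek k) e) / area Ω))
      (((∫ y in e • Ω, (cntE (T • Ω) y : ℝ)) / (e ^ 2 * area Ω) : ℝ) : ℂ) := by
  obtain ⟨h1, h2⟩ := parseval_E2 (h.measurableSet_smul hT) (h.measurableSet_smul he)
    (h.bdd.smul₀ T) (h.bdd.smul₀ e)
  have ha := h.area_pos
  refine ⟨by have := Integrable.re h1; simpa [IntegrableOn] using this, ?_⟩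
  have h3 : ∫ y in e • Ω, (cntE (T • Ω) y : ℂ)
      = ((∫ y in e • Ω, (cntE (T • Ω) y : ℝ) : ℝ) : ℂ) := by
    rw [← integral_complex_ofReal]
    simp
  rw [h3] at h2
  have h4 := h2.div_const ((e ^ 2 * area Ω : ℝ) : ℂ)
  rw [← Complex.ofReal_div] at h4
  refine h4.congr_fun fun k => ?_
  rw [setIntegral_smul Ω hT, setIntegral_smul Ω he]
  have : (e : ℂ) ≠ 0 := by exact_mod_cast he
  have : (area Ω : ℂ) ≠ 0 := by exact_mod_cast ha.ne'
  simp only [map_mul, map_pow, Complex.conj_ofReal]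
  push_cast
  field_simp

lemma setIntegral_area (Ω : Set E2) {e : ℝ} (x : ℝ) :
    ∫ _ in e • Ω, x = x * (e ^ 2 * area Ω) := by
  rw [setIntegral_const, measureReal_def, Measure.addHaar_smul, finrank_euclideanSpace_fin,
    ENNReal.toReal_mul, ENNReal.toReal_ofReal (abs_nonneg _), abs_of_nonneg (by positivity), area,
    smul_eq_mul, mul_comm]

/-- The count in `tΩ` is at most the mean over `y ∈ εΩ` of the counts in `(t+ε)Ω - y`. -/
lemma count_le (h : Body Ω) {t e : ℝ} (ht : 0 < t) (he : 0 < e) :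
    ∃ a : ℝ, (latticeCount (t • Ω) : ℝ) ≤ a ∧
    HasSum (fun k : Z2 => ((t + e : ℝ) : ℂ) ^ 2 * J Ω (ek k) (t + e) *
      ((starRingEnd ℂ) (J Ω (ek k) e) / area Ω)) (a : ℂ) := by
  obtain ⟨h1, h2⟩ := h.hasSum_aux (T := t + e) (e := e) (by positivity) he.ne'
  have ha := h.area_pos
  refine ⟨_, ?_, h2⟩
  rw [le_div_iff₀ (by positivity), ← setIntegral_area]
  refine setIntegral_mono_on ?_ h1 (h.measurableSet_smul he.ne') fun y hy => ?_
  · exact integrableOn_const (by exact (h.bdd.smul₀ e).measure_lt_top.ne)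
  · norm_cast
    refine Nat.card_mono (finite_translates (h.bdd.smul₀ _) y) fun n hn => ?_
    have hn' : ek n ∈ t • Ω := hn
    change y + ek n ∈ (t + e) • Ω
    rw [add_comm y, h.conv.add_smul ht.le he.le]
    exact add_mem_add hn' hy

/-- The count in `tΩ` is at least the mean over `y ∈ -εΩ` of the counts in `(t-ε)Ω - y`. -/
lemma le_count (h : Body Ω) {t e : ℝ} (he : 0 < e) (het : e < t) :
    ∃ a : ℝ, a ≤ (latticeCount (t • Ω) : ℝ) ∧
    HasSum (fun k : Z2 => ((t - e : ℝ) : ℂ) ^ 2 * J Ω (ek k) (t - e) *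
      (J Ω (ek k) e / area Ω)) (a : ℂ) := by
  obtain ⟨h1, h2⟩ := h.hasSum_aux (T := t - e) (e := -e) (by linarith) (by linarith)
  have ha := h.area_pos
  simp only [J_neg, Complex.conj_conj] at h2
  refine ⟨_, ?_, h2⟩
  have : (-e) ^ 2 * area Ω > 0 := by rw [neg_sq]; positivity
  rw [div_le_iff₀ this, ← setIntegral_area]
  refine setIntegral_mono_on h1 ?_ (h.measurableSet_smul (by linarith)) fun y hy => ?_
  · exact integrableOn_const (by exact (h.bdd.smul₀ _).measure_lt_top.ne)
  · norm_cast
    have hf := finite_translates (h.bdd.smul₀ t) 0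
    simp only [zero_add] at hf
    refine Nat.card_mono hf fun n hn => ?_
    have hn' : y + ek n ∈ (t - e) • Ω := hn
    change ek n ∈ t • Ω
    have hy' : -y ∈ e • Ω := by
      obtain ⟨x, hx, rfl⟩ := hy
      exact ⟨x, hx, by simp⟩
    have := add_mem_add hn' hy'
    rw [← h.conv.add_smul (by linarith) he.le] at this
    simpa using this

end Body

/-! ### Frequencies with nearly equal values of the support function -/

/-- The `ℓ¹` norm of an integer vector. -/
def n1 (k : Z2) : ℝ := |(k 0 : ℝ)| + |(k 1 : ℝ)|

/-- The angular sector of an integer vector, out of about `4N` sectors. -/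
def cls (N : ℕ) (k : Z2) : Bool × ℤ := (decide (0 ≤ k 1), ⌊(N : ℝ) * ((k 0 : ℝ) / n1 k)⌋)

lemma norm_apply_Z2 (k : Z2) (i : Fin 2) : |(k i : ℝ)| ≤ ‖k‖ := by
  have := norm_le_pi_norm k i
  rwa [Int.norm_eq_abs] at this

lemma norm_Z2_le {k : Z2} {m : ℝ} (h0 : |(k 0 : ℝ)| ≤ m) (h1 : |(k 1 : ℝ)| ≤ m) : ‖k‖ ≤ m := by
  refine (pi_norm_le_iff_of_nonneg ((abs_nonneg _).trans h0)).2 fun i => ?_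
  rw [Int.norm_eq_abs]
  fin_cases i <;> assumption

lemma norm_le_n1 (k : Z2) : ‖k‖ ≤ n1 k :=
  norm_Z2_le (by unfold n1; linarith [abs_nonneg (k 1 : ℝ)])
    (by unfold n1; linarith [abs_nonneg (k 0 : ℝ)])

lemma n1_le (k : Z2) : n1 k ≤ 2 * ‖k‖ := by
  unfold n1; linarith [norm_apply_Z2 k 0, norm_apply_Z2 k 1]

lemma n1_pos {k : Z2} (hk : k ≠ 0) : 0 < n1 k := by
  linarith [one_le_norm hk, norm_le_n1 k]

lemma cls_mem (N : ℕ) (k : Z2) :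
    cls N k ∈ (Finset.univ : Finset Bool) ×ˢ Finset.Icc (-(N : ℤ)) N := by
  have hn : |(k 0 : ℝ) / n1 k| ≤ 1 := by
    rw [abs_div, abs_of_nonneg (a := n1 k) (by unfold n1; positivity)]
    exact div_le_one_of_le₀ (by unfold n1; linarith [abs_nonneg (k 1 : ℝ)])
      (by unfold n1; positivity)
  rw [abs_le] at hn
  have hN : (0 : ℝ) ≤ N := by positivity
  simp only [cls, Finset.mem_product, Finset.mem_univ, true_and, Finset.mem_Icc]
  constructor
  · rw [Int.le_floor]; push_cast; nlinarith
  · rw [← @Int.cast_le ℝ]; push_cast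
    exact (Int.floor_le _).trans (by nlinarith)

namespace Sys
variable {ρ : V2 → ℝ} {S : Z2 → ℝ → ℝ} {K c C : ℝ}

/-- Two frequencies in the same narrow sector on which `ρ` takes nearly equal values are close. -/
lemma close_of_cls (h : Sys ρ S K c C) {k l : Z2} {r δ : ℝ} {N : ℕ} (hN : 0 < N) (hk : k ≠ 0)
    (hl : l ≠ 0) (hlr : ‖l‖ ≤ 2 * r) (hc : cls N k = cls N l)
    (hδ : |ρ (zv k) - ρ (zv l)| ≤ δ) :
    ‖k - l‖ ≤ (8 * C / c + 4 + 2 / c) * (r / N + δ) := by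
  have hcp := h.c_pos
  have hCp := h.C_pos
  have hN' : (0 : ℝ) < N := by exact_mod_cast hN
  have hk1 := n1_pos hk
  have hl1 := n1_pos hl
  have hl2 : n1 l ≤ 4 * r := by linarith [n1_le l]
  have hr : 0 < r := by linarith
  have hδ0 : 0 ≤ δ := (abs_nonneg _).trans hδ
  simp only [cls, Prod.mk.injEq, decide_eq_decide] at hc
  obtain ⟨hs, hf⟩ := hc
  set x : V2 := (n1 k)⁻¹ • zv k with hx
  set y : V2 := (n1 l)⁻¹ • zv l with hy
  have x0 : x 0 = k 0 / n1 k := by simp [hx, zv]; ring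
  have y0 : y 0 = l 0 / n1 l := by simp [hy, zv]; ring
  have x1 : x 1 = k 1 / n1 k := by simp [hx, zv]; ring
  have y1 : y 1 = l 1 / n1 l := by simp [hy, zv]; ring
  have d0 : |x 0 - y 0| ≤ 1 / N := by
    have := Int.abs_sub_lt_one_of_floor_eq_floor hf
    rw [← mul_sub, abs_mul, abs_of_pos hN'] at this
    rw [x0, y0, le_div_iff₀ hN']
    linarith
  have ax : |x 0| + |x 1| = 1 := by
    rw [x0, x1, abs_div, abs_div, abs_of_pos hk1, ← add_div]
    exact div_self hk1.ne'
  have ay : |y 0| + |y 1| = 1 := by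
    rw [y0, y1, abs_div, abs_div, abs_of_pos hl1, ← add_div]
    exact div_self hl1.ne'
  have d1 : |x 1 - y 1| ≤ |x 0 - y 0| := by
    have t := abs_abs_sub_abs_le (x 0) (y 0)
    have e : |x 0| - |y 0| = |y 1| - |x 1| := by linarith
    rw [e] at t
    refine le_trans (le_of_eq ?_) t
    by_cases h0 : 0 ≤ k 1
    · have h0' := hs.1 h0
      have a1 : 0 ≤ x 1 := by rw [x1]; positivity
      have a2 : 0 ≤ y 1 := by rw [y1]; positivity
      rw [abs_of_nonneg a1, abs_of_nonneg a2, abs_sub_comm]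
    · have h0' : ¬ 0 ≤ l 1 := fun q => h0 (hs.2 q)
      push Not at h0 h0'
      have b1 : (k 1 : ℝ) ≤ 0 := by exact_mod_cast h0.le
      have b2 : (l 1 : ℝ) ≤ 0 := by exact_mod_cast h0'.le
      have a1 : x 1 ≤ 0 := by rw [x1]; exact div_nonpos_of_nonpos_of_nonneg b1 hk1.le
      have a2 : y 1 ≤ 0 := by rw [y1]; exact div_nonpos_of_nonpos_of_nonneg b2 hl1.le
      rw [abs_of_nonpos a1, abs_of_nonpos a2]
      congr 1; ring
  have dxy : ‖x - y‖ ≤ 1 / N := by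
    refine (pi_norm_le_iff_of_nonneg (by positivity)).2 fun i => ?_
    rw [Real.norm_eq_abs]
    fin_cases i
    · exact d0
    · exact d1.trans d0
  have kx : zv k = n1 k • x := by rw [hx, smul_inv_smul₀ hk1.ne']
  have ly : zv l = n1 l • y := by rw [hy, smul_inv_smul₀ hl1.ne']
  have rk : ρ (zv k) = n1 k * ρ x := by rw [kx, h.smul _ _ hk1.le]
  have rl : ρ (zv l) = n1 l * ρ y := by rw [ly, h.smul _ _ hl1.le]
  have nx : ‖x‖ ≤ 1 := by
    refine (pi_norm_le_iff_of_nonneg (by positivity)).2 fun i => ?_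
    rw [Real.norm_eq_abs]
    fin_cases i
    · change |x 0| ≤ 1; linarith [abs_nonneg (x 1)]
    · change |x 1| ≤ 1; linarith [abs_nonneg (x 0)]
  have nx' : 1 / 2 ≤ ‖x‖ := by
    have e0 := norm_le_pi_norm x 0
    have e1 := norm_le_pi_norm x 1
    rw [Real.norm_eq_abs] at e0 e1
    linarith
  have rx : c / 2 ≤ ρ x := by
    have := h.lower x
    nlinarith
  have ρd : |ρ y - ρ x| ≤ C * (1 / N) := by
    refine (h.abs_lip y x).trans ?_
    rw [norm_sub_rev]
    gcongr
  have hn : |n1 k - n1 l| * (c / 2) ≤ δ + 4 * r * (C * (1 / N)) := by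
    calc |n1 k - n1 l| * (c / 2) ≤ |n1 k - n1 l| * ρ x := by gcongr
      _ = |(ρ (zv k) - ρ (zv l)) + n1 l * (ρ y - ρ x)| := by
          rw [← abs_of_nonneg (h.nonneg x), ← abs_mul, abs_of_nonneg (h.nonneg x), rk, rl]
          congr 1; ring
      _ ≤ |ρ (zv k) - ρ (zv l)| + |n1 l * (ρ y - ρ x)| := abs_add_le _ _
      _ ≤ δ + 4 * r * (C * (1 / N)) := by
          rw [abs_mul, abs_of_pos hl1]
          gcongr
  have hn' : |n1 k - n1 l| ≤ 2 / c * δ + 8 * C / c * (r / N) := by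
    have : |n1 k - n1 l| ≤ (δ + 4 * r * (C * (1 / N))) / (c / 2) := by
      rwa [le_div_iff₀ (by positivity)]
    refine this.trans (le_of_eq ?_)
    field_simp; ring
  have hd : zv (k - l) = (n1 k - n1 l) • x + n1 l • (x - y) := by
    have : zv (k - l) = zv k - zv l := by ext i; simp [zv]
    rw [this, smul_sub, sub_smul, ← kx, ← ly]
    abel
  rw [← norm_zv, hd]
  calc ‖(n1 k - n1 l) • x + n1 l • (x - y)‖ ≤ |n1 k - n1 l| * ‖x‖ + n1 l * ‖x - y‖ := by
        refine (norm_add_le _ _).trans (le_of_eq ?_)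
        rw [norm_smul _ x, norm_smul _ (x - y), Real.norm_eq_abs, Real.norm_eq_abs, abs_of_pos hl1]
    _ ≤ (2 / c * δ + 8 * C / c * (r / N)) * 1 + 4 * r * (1 / N) := by gcongr
    _ ≤ (8 * C / c + 4 + 2 / c) * (r / N + δ) := by
        have : 0 ≤ 8 * C / c * δ + 4 * δ + 2 / c * (r / N) := by positivity
        have e : 4 * r * (1 / (N : ℝ)) = 4 * (r / N) := by ring
        rw [e]
        nlinarith

/-- If `ρ` varies little between `k` and `k + j`, then `j` is transversal to `k`. -/
lemma cross_ge (h : Sys ρ S K c C) {k j : Z2} {δ : ℝ} (hj : j ≠ 0) (hjk : ‖j‖ ≤ ‖k‖)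
    (hδ : δ / c ≤ 1 / 2) (hg : |ρ (zv k + zv j) - ρ (zv k)| ≤ δ) :
    ‖k‖ * ‖j‖ ≤ 2 * (C / c + 1) * |(cross k j : ℝ)| := by
  have hcp := h.c_pos
  have hCp := h.C_pos
  have hj1 := one_le_norm hj
  have hk1 : 1 ≤ ‖k‖ := hj1.trans hjk
  -- `j = α k + β` with `β` on a coordinate axis and `‖β‖ = |cross k j| / ‖k‖`
  obtain ⟨α, β, hα, hjab, hβ⟩ : ∃ (α : ℝ) (β : V2), |α| ≤ 1 ∧ zv j = α • zv k + β ∧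
      ‖β‖ * ‖k‖ ≤ |(cross k j : ℝ)| := by
    have key : |(k 0 : ℝ)| = ‖k‖ ∨ |(k 1 : ℝ)| = ‖k‖ := by
      by_contra! hne
      have h0 := lt_of_le_of_ne (norm_apply_Z2 k 0) hne.1
      have h1 := lt_of_le_of_ne (norm_apply_Z2 k 1) hne.2
      have := norm_Z2_le (le_max_left |(k 0 : ℝ)| |(k 1 : ℝ)|) (le_max_right _ _)
      exact absurd this (not_le.2 (max_lt h0 h1))
    rcases key with hk | hk
    · have h0 : (k 0 : ℝ) ≠ 0 := by intro q; rw [q] at hk; simp at hk; linarith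
      refine ⟨j 0 / k 0, ![0, j 1 - j 0 / k 0 * k 1], ?_, ?_, ?_⟩
      · rw [abs_div, hk]
        exact div_le_one_of_le₀ ((norm_apply_Z2 j 0).trans hjk) (norm_nonneg _)
      · ext i
        fin_cases i
        · simp [zv]; field_simp
        · simp [zv]
      · have : ‖(![0, j 1 - j 0 / k 0 * k 1] : V2)‖ ≤ |(j 1 : ℝ) - j 0 / k 0 * k 1| := by
          refine (pi_norm_le_iff_of_nonneg (abs_nonneg _)).2 fun i => ?_
          fin_cases i <;> simp
        refine (mul_le_mul_of_nonneg_right this (norm_nonneg _)).trans (le_of_eq ?_)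
        rw [← hk, ← abs_mul, cross]
        congr 1
        push_cast
        field_simp
    · have h0 : (k 1 : ℝ) ≠ 0 := by intro q; rw [q] at hk; simp at hk; linarith
      refine ⟨j 1 / k 1, ![j 0 - j 1 / k 1 * k 0, 0], ?_, ?_, ?_⟩
      · rw [abs_div, hk]
        exact div_le_one_of_le₀ ((norm_apply_Z2 j 1).trans hjk) (norm_nonneg _)
      · ext i
        fin_cases i
        · simp [zv]
        · simp [zv]; field_simp
      · have : ‖(![j 0 - j 1 / k 1 * k 0, 0] : V2)‖ ≤ |(j 0 : ℝ) - j 1 / k 1 * k 0| := by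
          refine (pi_norm_le_iff_of_nonneg (abs_nonneg _)).2 fun i => ?_
          fin_cases i <;> simp
        refine (mul_le_mul_of_nonneg_right this (norm_nonneg _)).trans (le_of_eq ?_)
        rw [← hk, ← abs_mul, cross, ← abs_neg]
        congr 1
        push_cast
        field_simp
        ring
  have hα' := abs_le.1 hα
  have e1 : zv k + zv j = (1 + α) • zv k + β := by rw [hjab, add_smul, one_smul, add_assoc]
  have e2 : |ρ (zv k + zv j) - (1 + α) * ρ (zv k)| ≤ C * ‖β‖ := by
    rw [← h.smul _ _ (by linarith), e1]
    refine (h.abs_lip _ _).trans (le_of_eq ?_)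
    rw [add_sub_cancel_left]
  have e3 : |α| * ρ (zv k) ≤ δ + C * ‖β‖ := by
    rw [← abs_of_nonneg (h.nonneg (zv k)), ← abs_mul,
      show α * ρ (zv k) = (ρ (zv k + zv j) - ρ (zv k))
        - (ρ (zv k + zv j) - (1 + α) * ρ (zv k)) by ring]
    exact (abs_sub _ _).trans (add_le_add hg e2)
  have e4 : |α| * ‖k‖ ≤ δ / c + C / c * ‖β‖ := by
    have l := h.lower (zv k)
    rw [norm_zv] at l
    have : |α| * ‖k‖ * c ≤ δ + C * ‖β‖ := by nlinarith [abs_nonneg α]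
    rw [← le_div_iff₀ hcp] at this
    refine this.trans (le_of_eq (by field_simp))
  have e5 : ‖j‖ ≤ |α| * ‖k‖ + ‖β‖ := by
    rw [← norm_zv j, hjab]
    refine (norm_add_le _ _).trans (le_of_eq ?_)
    rw [norm_smul, norm_zv, Real.norm_eq_abs]
  have e6 : ‖j‖ ≤ 2 * (C / c + 1) * ‖β‖ := by linarith
  calc ‖k‖ * ‖j‖ ≤ ‖k‖ * (2 * (C / c + 1) * ‖β‖) := by gcongr
    _ = 2 * (C / c + 1) * (‖β‖ * ‖k‖) := by ring
    _ ≤ _ := by gcongr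

end Sys

/-! ### Boxes and telescoping -/

/-- The supremum norm of an integer vector, as a natural number. -/
def nn (k : Z2) : ℕ := max (k 0).natAbs (k 1).natAbs

lemma norm_eq_nn (k : Z2) : ‖k‖ = nn k := by
  have h0 : |(k 0 : ℝ)| = (k 0).natAbs := by rw [Nat.cast_natAbs, Int.cast_abs]
  have h1 : |(k 1 : ℝ)| = (k 1).natAbs := by rw [Nat.cast_natAbs, Int.cast_abs]
  apply le_antisymm
  · apply norm_Z2_le
    · rw [h0]; exact_mod_cast le_max_left _ _
    · rw [h1]; exact_mod_cast le_max_right _ _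
  · unfold nn
    rw [Nat.cast_max]
    exact max_le (h0 ▸ norm_apply_Z2 k 0) (h1 ▸ norm_apply_Z2 k 1)

lemma mem_box_iff {m : ℕ} {k : Z2} : k ∈ box m ↔ ‖k‖ ≤ m := by
  rw [mem_box, norm_eq_nn, nn]
  constructor
  · intro h
    have h0 := h 0
    have h1 := h 1
    rw [Int.abs_eq_natAbs] at h0 h1
    exact_mod_cast max_le (by omega : (k 0).natAbs ≤ m) (by omega)
  · intro h i
    have h' : max (k 0).natAbs (k 1).natAbs ≤ m := by exact_mod_cast h
    rw [max_le_iff] at h'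
    fin_cases i
    · change |k 0| ≤ m; rw [Int.abs_eq_natAbs]; omega
    · change |k 1| ≤ m; rw [Int.abs_eq_natAbs]; omega

lemma card_box (m : ℕ) : (box m).card = (2 * m + 1) ^ 2 := by
  simp only [box, Pi.card_Icc, Int.card_Icc, Fin.prod_univ_two]
  rw [show ((m : ℤ) + 1 - -(m : ℤ)).toNat = 2 * m + 1 by omega]
  ring

/-- Telescoping over a box: only a boundary layer of width `‖j‖` contributes. -/
lemma box_telescope {F : Z2 → ℝ} {b : ℝ} (hF : ∀ k, |F k| ≤ b) {m n : ℕ} (hn : n ≤ m) {j : Z2}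
    (hj : ‖j‖ ≤ n) :
    ∑ k ∈ box m, (F k - F (k - j)) ≤ 8 * b * n * (2 * m + 1) := by
  classical
  have hb : 0 ≤ b := (abs_nonneg _).trans (hF 0)
  have hi : Function.Injective fun k : Z2 => k - j := sub_left_injective
  rw [Finset.sum_sub_distrib, ← Finset.sum_image (f := F) (g := fun k : Z2 => k - j)
    (fun x _ y _ hxy => hi hxy)]
  set T := (box m).image fun k : Z2 => k - j with hT
  have cT : T.card = (box m).card := Finset.card_image_of_injective _ hi
  have cast : ((m - n : ℕ) : ℝ) = m - n := by push_cast [hn]; ring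
  have i1 : box (m - n) ⊆ box m := by
    intro k hk
    rw [mem_box_iff] at hk ⊢
    rw [cast] at hk
    have : (0 : ℝ) ≤ n := by positivity
    linarith
  have i2 : box (m - n) ⊆ T := by
    intro k hk
    rw [mem_box_iff, cast] at hk
    rw [hT, Finset.mem_image]
    refine ⟨k + j, ?_, by simp⟩
    rw [mem_box_iff]
    linarith [norm_add_le k j]
  rw [← Finset.sum_sdiff i1, ← Finset.sum_sdiff i2]
  have bd : ∀ U : Finset Z2, |∑ k ∈ U, F k| ≤ U.card * b := by
    intro U
    refine (Finset.abs_sum_le_sum_abs _ _).trans ?_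
    rw [← nsmul_eq_mul]
    exact Finset.sum_le_card_nsmul _ _ _ fun k _ => hF k
  have c1 : (((box m \ box (m - n)).card : ℕ) : ℝ) ≤ 4 * n * (2 * m + 1) := by
    rw [Finset.cast_card_sdiff i1, card_box, card_box]
    push_cast
    rw [cast]
    nlinarith [sq_nonneg (n : ℝ)]
  have c2 : (((T \ box (m - n)).card : ℕ) : ℝ) ≤ 4 * n * (2 * m + 1) := by
    rw [Finset.cast_card_sdiff i2, cT, card_box, card_box]
    push_cast
    rw [cast]
    nlinarith [sq_nonneg (n : ℝ)]
  have b1 := (abs_le.1 (bd (box m \ box (m - n)))).2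
  have b2 := (abs_le.1 (bd (T \ box (m - n)))).1
  have := mul_le_mul_of_nonneg_right c1 hb
  have := mul_le_mul_of_nonneg_right c2 hb
  linarith

/-! ### Masses near the right end of the profiles -/

/-- The supremum of `S` on `[a, ∞)`. -/
def tau (S : ℝ → ℝ) (a : ℝ) : ℝ := sSup (S '' Ici a)

lemma tau_le {S : ℝ → ℝ} {a b : ℝ} (hb : ∀ u, a ≤ u → S u ≤ b) : tau S a ≤ b :=
  csSup_le ⟨_, a, mem_Ici.2 le_rfl, rfl⟩ (by rintro _ ⟨u, hu, rfl⟩; exact hb u hu)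

lemma le_tau {S : ℝ → ℝ} {a b : ℝ} (hb : ∀ u, a ≤ u → S u ≤ b) {u : ℝ} (hu : a ≤ u) :
    S u ≤ tau S a :=
  le_csSup ⟨b, by rintro _ ⟨u, hu, rfl⟩; exact hb u hu⟩ ⟨u, hu, rfl⟩

/-- The normalised mass of the right part of the second difference of `S k`.  The parameter `Q` is
`R^(1/4)`, and `r` is the dyadic size of `k`. -/
def sig (ρ : V2 → ℝ) (S : Z2 → ℝ → ℝ) (K Q r : ℝ) (k : Z2) : ℝ :=
  2 * Q ^ 2 * (r * √r) * tau (S k) (ρ (zv k) - 1 / Q ^ 4) + K / Q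

namespace Sys
variable {ρ : V2 → ℝ} {S : Z2 → ℝ → ℝ} {K c C : ℝ}

lemma tau_bound (h : Sys ρ S K c C) {k : Z2} (hk : k ≠ 0) {Q r : ℝ} (hQ : 1 ≤ Q) (hr : 1 ≤ r)
    (hrk : r ≤ ‖k‖) : ∀ u, ρ (zv k) - 1 / Q ^ 4 ≤ u → S k u ≤ K / (r * √r) / Q ^ 2 := by
  intro u hu
  have hK := h.K_nonneg
  refine ((h.profile k hk).le_right (p := 1 / Q ^ 4) u hu).trans ?_
  rw [show 1 / Q ^ 4 = (1 / Q ^ 2) ^ 2 by ring, Real.sqrt_sq (by positivity), mul_one_div]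
  gcongr

lemma tau_nonneg (h : Sys ρ S K c C) {k : Z2} (hk : k ≠ 0) {Q r : ℝ} (hQ : 1 ≤ Q) (hr : 1 ≤ r)
    (hrk : r ≤ ‖k‖) : 0 ≤ tau (S k) (ρ (zv k) - 1 / Q ^ 4) :=
  ((h.profile k hk).nonneg _).trans (le_tau (h.tau_bound hk hQ hr hrk) le_rfl)

lemma sig_nonneg (h : Sys ρ S K c C) {k : Z2} (hk : k ≠ 0) {Q r : ℝ} (hQ : 1 ≤ Q) (hr : 1 ≤ r)
    (hrk : r ≤ ‖k‖) : 0 ≤ sig ρ S K Q r k := by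
  have := h.tau_nonneg hk hQ hr hrk
  have := h.K_nonneg
  unfold sig
  positivity

lemma sig_le (h : Sys ρ S K c C) {k : Z2} (hk : k ≠ 0) {Q r : ℝ} (hQ : 1 ≤ Q) (hr : 1 ≤ r)
    (hrk : r ≤ ‖k‖) : sig ρ S K Q r k ≤ 3 * K := by
  have hK := h.K_nonneg
  have h1 := tau_le (h.tau_bound hk hQ hr hrk)
  have h2 : K / Q ≤ K := div_le_self hK hQ
  have hs : 0 < √r := Real.sqrt_pos.2 (by linarith)
  calc sig ρ S K Q r k ≤ 2 * Q ^ 2 * (r * √r) * (K / (r * √r) / Q ^ 2) + K / Q := by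
        unfold sig; gcongr
    _ = 2 * K + K / Q := by field_simp
    _ ≤ 3 * K := by linarith

/-- The right part of the second difference of a profile, with step `1 / (2R)`. -/
lemma right_mass_le (h : Sys ρ S K c C) {k : Z2} (hk : k ≠ 0) {Q r : ℝ} (hQ : 2 ≤ Q) (hr : 1 ≤ r)
    (hrk : r ≤ ‖k‖) (hQc : 1 / Q ^ 2 ≤ c) :
    ∫ u, |(Ioi (ρ (zv k) - 1 / Q ^ 2)).indicator (d2 (S k) (1 / (2 * Q ^ 4))) u|
      ≤ sig ρ S K Q r k / (Q ^ 6 * (r * √r)) := by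
  have hK := h.K_nonneg
  have hQ0 : 0 < Q := by linarith
  have hs : 0 < √r := Real.sqrt_pos.2 (by linarith)
  have hQ2 : 1 ≤ Q ^ 2 := by nlinarith
  have hk1 := one_le_norm hk
  have l1 := h.lower (zv k)
  have l2 := h.lower (-zv k)
  rw [norm_neg] at l2
  rw [norm_zv] at l1 l2
  have hc := h.c_pos
  have hM : K / (‖k‖ * √‖k‖) ≤ K / (r * √r) := by gcongr
  have := (h.profile k hk).right_mass (p := 1 / (2 * Q ^ 4)) (w := 1 / Q ^ 2)
    (τ := tau (S k) (ρ (zv k) - 1 / Q ^ 4)) (by positivity)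
    (by
      rw [show 2 * (1 / (2 * Q ^ 4)) = 1 / Q ^ 2 * (1 / Q ^ 2) by field_simp]
      exact mul_le_of_le_one_right (by positivity) (by rw [div_le_one (by positivity)]; exact hQ2))
    (by nlinarith)
    (by
      intro u hu
      refine le_tau (h.tau_bound hk (by linarith) hr hrk) ?_
      rw [show 2 * (1 / (2 * Q ^ 4)) = 1 / Q ^ 4 by field_simp] at hu
      exact hu)
  refine this.trans ?_
  have hsq : 1 / (2 * Q) ≤ √(1 / Q ^ 2 / 2) := by
    apply Real.le_sqrt_of_sq_le
    rw [div_pow, mul_pow, div_div, one_pow]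
    refine one_div_le_one_div_of_le (by positivity) ?_
    nlinarith
  calc 4 * (1 / (2 * Q ^ 4)) * tau (S k) (ρ (zv k) - 1 / Q ^ 4)
        + (1 / (2 * Q ^ 4)) ^ 2 * (K / (‖k‖ * √‖k‖)) / √(1 / Q ^ 2 / 2)
      ≤ 4 * (1 / (2 * Q ^ 4)) * tau (S k) (ρ (zv k) - 1 / Q ^ 4)
        + (1 / (2 * Q ^ 4)) ^ 2 * (K / (r * √r)) / (1 / (2 * Q)) := by gcongr
    _ ≤ sig ρ S K Q r k / (Q ^ 6 * (r * √r)) := by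
        unfold sig
        have e1 : (1 / (2 * Q ^ 4)) ^ 2 * (K / (r * √r)) / (1 / (2 * Q))
            = K / Q / (Q ^ 6 * (r * √r)) / 2 := by field_simp
        have e2 : 4 * (1 / (2 * Q ^ 4)) * tau (S k) (ρ (zv k) - 1 / Q ^ 4)
            = 2 * Q ^ 2 * (r * √r) * tau (S k) (ρ (zv k) - 1 / Q ^ 4) / (Q ^ 6 * (r * √r)) := by
          field_simp; norm_num
        have e3 : 0 ≤ K / Q / (Q ^ 6 * (r * √r)) := by positivity
        rw [e1, e2, add_div]
        linarith

/-- Second differences of `ρ` are nonnegative. -/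
lemma second_diff_nonneg (h : Sys ρ S K c C) (x y : V2) :
    0 ≤ ρ (x + y) + ρ (x - y) - 2 * ρ x := by
  have h1 := h.add_le (x + y) (x - y)
  rw [show x + y + (x - y) = (2 : ℝ) • x by rw [two_smul]; abel, h.smul _ _ (by norm_num)] at h1
  linarith

/-- The total mass of the frequencies `k` of size `r` with `ρ (k + j)` very close to `ρ k`.  A large
mass at `k` forces a large second difference of `ρ` in the direction `j`, and those telescope. -/
lemma close_sum (h : Sys ρ S K c C) {Q : ℝ} (hQ : 1 ≤ Q) (hw : 3 / Q ^ 2 / c ≤ 1 / 2) {r : ℕ}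
    (hr : 1 ≤ r) (hrQ : (r : ℝ) ≤ Q ^ 2) {j : Z2} (hj : j ≠ 0) (hjr : ‖j‖ ≤ r) (s : Finset Z2)
    (hs : ∀ k ∈ s, r ≤ ‖k‖ ∧ ‖k‖ ≤ 2 * r ∧ |ρ (zv k + zv j) - ρ (zv k)| ≤ 3 / Q ^ 2) :
    ∑ k ∈ s, sig ρ S K Q r k ≤
      240 * K * ‖j‖ * r + (580 * (2 * (C / c + 1)) + 25 * K) * (r * √r) := by
  have hK := h.K_nonneg
  have hcp := h.c_pos
  have hCp := h.C_pos
  have hQ0 : 0 < Q := by linarith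
  have hr' : (1 : ℝ) ≤ r := by exact_mod_cast hr
  have hsr : 0 < √(r : ℝ) := Real.sqrt_pos.2 (by linarith)
  have hsq : √(r : ℝ) ^ 2 = r := Real.sq_sqrt (by linarith)
  have hsQ : √(r : ℝ) ≤ Q := by
    rw [← Real.sqrt_sq hQ0.le]; exact Real.sqrt_le_sqrt hrQ
  have hj1 := one_le_norm hj
  set D := 2 * (C / c + 1) with hD
  have hD0 : 0 < D := by positivity
  set w := 1 / Q ^ 2 with hwdef
  have hw0 : 0 < w := by positivity
  -- The increments of `ρ` are cut off at `6 w`, so that only a small boundary term survives telescoping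
  -- while the increments of interest, of size at most `3 w`, are unchanged.
  set F : Z2 → ℝ := fun k => max (-(6 * w)) (min (6 * w) (ρ (zv k + zv j) - ρ (zv k))) with hF
  have hFb : ∀ k, |F k| ≤ 6 * w := fun k => abs_le.2
    ⟨le_max_left _ _, max_le (by linarith) (min_le_left _ _)⟩
  have hg : ∀ k, ρ (zv (k - j) + zv j) - ρ (zv (k - j)) = ρ (zv k) - ρ (zv k - zv j) := by
    intro k
    have : zv (k - j) = zv k - zv j := by rw [sub_eq_add_neg, zv_add, zv_neg, ← sub_eq_add_neg]
    rw [this, sub_add_cancel]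
  have hmono : ∀ k, 0 ≤ F k - F (k - j) := by
    intro k
    rw [sub_nonneg]
    simp only [hF]
    rw [hg]
    have := h.second_diff_nonneg (zv k) (zv j)
    exact max_le_max le_rfl (min_le_min le_rfl (by linarith))
  -- the contribution of a single frequency
  have hone : ∀ k ∈ s, sig ρ S K Q r k ≤ (K * Q ^ 2 + 2 * D * Q ^ 2 * √r / ‖j‖) * (F k - F (k - j))
      + (4 * D * √r / (Q ^ 2 * ‖j‖) + K / Q) := by
    intro k hk
    obtain ⟨h1, h2, h3⟩ := hs k hk
    have hk0 : k ≠ 0 := by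
      rintro rfl; rw [norm_zero] at h1; linarith
    have hsd := h.second_diff_nonneg (zv k) (zv j)
    rw [show 3 / Q ^ 2 = 3 * w by rw [hwdef]; ring] at h3
    have h3' := abs_le.1 h3
    have hFk : F k = ρ (zv k + zv j) - ρ (zv k) := by
      simp only [hF]
      rw [min_eq_right (by linarith), max_eq_right (by linarith)]
    have hrest : 0 ≤ 4 * D * √r / (Q ^ 2 * ‖j‖) + K / Q := by positivity
    by_cases hcase : -(6 * w) ≤ ρ (zv k) - ρ (zv k - zv j)
    · have hFj : F (k - j) = ρ (zv k) - ρ (zv k - zv j) := by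
        simp only [hF]
        rw [hg, min_eq_right (by linarith), max_eq_right (by linarith)]
      have hcr := h.cross_ge hj (hjr.trans h1) (δ := 3 * w)
        (by rw [show 3 * w = 3 / Q ^ 2 by rw [hwdef]; ring]; exact hw) h3
      have ht := h.tau_nonneg hk0 hQ hr' h1
      have htau : tau (S k) (ρ (zv k) - 1 / Q ^ 4) * (r * ‖j‖) ≤
          D * ((F k - F (k - j)) + 2 / Q ^ 4) := by
        have hcr' : 0 < |(cross k j : ℝ)| := by
          have : 0 < ‖k‖ * ‖j‖ := by positivity
          by_contra hneg
          have : |(cross k j : ℝ)| = 0 := le_antisymm (not_lt.1 hneg) (abs_nonneg _)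
          rw [this] at hcr; linarith
        have h5 : tau (S k) (ρ (zv k) - 1 / Q ^ 4) ≤
            ((F k - F (k - j)) + 2 / Q ^ 4) / |(cross k j : ℝ)| := by
          refine tau_le fun u hu => ?_
          rw [le_div_iff₀ hcr']
          have := h.chord k j u (1 / Q ^ 4) hk0 (by positivity) hu
          rw [hFk, hFj]
          refine this.trans (le_of_eq ?_)
          ring
        calc tau (S k) (ρ (zv k) - 1 / Q ^ 4) * (r * ‖j‖)
            ≤ tau (S k) (ρ (zv k) - 1 / Q ^ 4) * (D * |(cross k j : ℝ)|) := by
              exact mul_le_mul_of_nonneg_left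
                ((mul_le_mul_of_nonneg_right h1 (norm_nonneg _)).trans hcr) ht
          _ ≤ ((F k - F (k - j)) + 2 / Q ^ 4) / |(cross k j : ℝ)| * (D * |(cross k j : ℝ)|) := by
              gcongr
          _ = _ := by field_simp
      have h6 : sig ρ S K Q r k = 2 * Q ^ 2 * √r / ‖j‖ *
          (tau (S k) (ρ (zv k) - 1 / Q ^ 4) * (r * ‖j‖)) + K / Q := by
        unfold sig; field_simp
      have h7 : 2 * Q ^ 2 * √r / ‖j‖ * (tau (S k) (ρ (zv k) - 1 / Q ^ 4) * (r * ‖j‖)) ≤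
          2 * Q ^ 2 * √r / ‖j‖ * (D * ((F k - F (k - j)) + 2 / Q ^ 4)) := by gcongr
      have h8 : 2 * Q ^ 2 * √r / ‖j‖ * (D * ((F k - F (k - j)) + 2 / Q ^ 4))
          = 2 * D * Q ^ 2 * √r / ‖j‖ * (F k - F (k - j)) + 4 * D * √r / (Q ^ 2 * ‖j‖) := by
        field_simp
        ring
      have h9 : 0 ≤ K * Q ^ 2 * (F k - F (k - j)) := mul_nonneg (by positivity) (hmono k)
      rw [h6]
      linarith
    · push Not at hcase
      have hFj : F (k - j) = -(6 * w) := by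
        simp only [hF]
        rw [hg, min_eq_right (by linarith), max_eq_left (by linarith)]
      have h4 : 3 * w ≤ F k - F (k - j) := by rw [hFk, hFj]; linarith
      have h5 : 3 * K ≤ K * Q ^ 2 * (F k - F (k - j)) := by
        calc 3 * K = K * Q ^ 2 * (3 * w) := by rw [hwdef]; field_simp
          _ ≤ _ := by gcongr
      have h6 : 0 ≤ 2 * D * Q ^ 2 * √r / ‖j‖ * (F k - F (k - j)) :=
        mul_nonneg (by positivity) (hmono k)
      have h7 := h.sig_le hk0 hQ hr' h1
      linarith
  have hsb : s ⊆ box (2 * r) := fun k hk => by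
    rw [mem_box_iff]; push_cast; exact (hs k hk).2.1
  have htel := box_telescope hFb (m := 2 * r) (n := nn j) (j := j)
    (by
      have : (nn j : ℝ) ≤ r := by rw [← norm_eq_nn]; exact hjr
      have : nn j ≤ r := by exact_mod_cast this
      omega) (norm_eq_nn j).le
  rw [← norm_eq_nn] at htel
  have hsum : ∑ k ∈ s, (F k - F (k - j)) ≤ 240 * w * ‖j‖ * r := by
    refine (Finset.sum_le_sum_of_subset_of_nonneg hsb fun k _ _ => hmono k).trans
      (htel.trans ?_)
    push_cast
    have : 0 ≤ w * ‖j‖ := by positivity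
    nlinarith
  have hcard : (s.card : ℝ) ≤ 25 * (r : ℝ) ^ 2 := by
    have := Finset.card_le_card hsb
    rw [card_box] at this
    have : (s.card : ℝ) ≤ ((2 * (2 * r) + 1) ^ 2 : ℕ) := by exact_mod_cast this
    refine this.trans ?_
    push_cast
    nlinarith
  calc ∑ k ∈ s, sig ρ S K Q r k
      ≤ ∑ k ∈ s, ((K * Q ^ 2 + 2 * D * Q ^ 2 * √r / ‖j‖) * (F k - F (k - j))
        + (4 * D * √r / (Q ^ 2 * ‖j‖) + K / Q)) := Finset.sum_le_sum hone
    _ = (K * Q ^ 2 + 2 * D * Q ^ 2 * √r / ‖j‖) * ∑ k ∈ s, (F k - F (k - j))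
        + s.card * (4 * D * √r / (Q ^ 2 * ‖j‖) + K / Q) := by
        rw [Finset.sum_add_distrib, Finset.mul_sum, Finset.sum_const, nsmul_eq_mul]
    _ ≤ (K * Q ^ 2 + 2 * D * Q ^ 2 * √r / ‖j‖) * (240 * w * ‖j‖ * r)
        + 25 * (r : ℝ) ^ 2 * (4 * D * √r / (Q ^ 2 * ‖j‖) + K / Q) := by gcongr
    _ = 240 * K * ‖j‖ * r + 480 * D * (r * √r) + 100 * D * (r * √r) * (r / (Q ^ 2 * ‖j‖))
        + 25 * K * (r * (r / Q)) := by
        rw [hwdef]; field_simp; ring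
    _ ≤ 240 * K * ‖j‖ * r + 480 * D * (r * √r) + 100 * D * (r * √r) * 1
        + 25 * K * (r * √r) := by
        gcongr
        · rw [div_le_one (by positivity)]
          nlinarith
        · rw [div_le_iff₀ hQ0]
          nlinarith
    _ = _ := by ring

end Sys

/-! ### The mean square of a dyadic block -/

/-- The conclusion of `large_sieve` for families indexed by integer vectors, with constant `A`. -/
def LargeSieve (A : ℝ) : Prop :=
  ∀ (s : Finset Z2) (a : Z2 → ℂ) (G : Z2 → ℝ → ℝ) (m c : Z2 → ℝ) (w p L T₀ : ℝ),
    (∀ i ∈ s, Integrable (G i)) → (∀ i ∈ s, ∫ u, |G i u| ≤ m i) →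
    (∀ i ∈ s, ∀ u, G i u ≠ 0 → c i - w ≤ u ∧ u ≤ c i + p) → 0 < L →
    ∫ T in (T₀ - L)..(T₀ + L), ‖∑ i ∈ s, a i * ft (G i) T‖ ^ 2
      ≤ A * L * ∑ i ∈ s, ∑ j ∈ s, if |c i - c j| < w + p + 1 / L then
          (‖a i‖ * m i) * (‖a j‖ * m j) else 0

lemma exists_largeSieve : ∃ A, 0 ≤ A ∧ LargeSieve A := by
  obtain ⟨η, A, hA0, _, hi, h0, h1, hA, hz⟩ := exists_majorant
  exact ⟨A, hA0, fun s a G m c w p L T₀ hG hm hs hL =>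
    large_sieve hi h0 h1 hA hz s a G hG m c hm hs hL T₀⟩

/-- Cauchy–Schwarz over the classes of a partition. -/
lemma norm_sum_sq_le_classes {κ β : Type*} [DecidableEq β] (s : Finset κ) (I : Finset β)
    (cl : κ → β) (hcl : ∀ k ∈ s, cl k ∈ I) (f : κ → ℂ) :
    ‖∑ k ∈ s, f k‖ ^ 2 ≤ I.card * ∑ b ∈ I, ‖∑ k ∈ s with cl k = b, f k‖ ^ 2 := by
  rw [← Finset.sum_fiberwise_of_maps_to hcl]
  calc ‖∑ b ∈ I, ∑ k ∈ s with cl k = b, f k‖ ^ 2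
      ≤ (∑ b ∈ I, ‖∑ k ∈ s with cl k = b, f k‖) ^ 2 := by gcongr; exact norm_sum_le _ _
    _ ≤ _ := sq_sum_le_card_mul_sum_sq

/-- The right part of the second difference of the profile of `k`. -/
def gr (ρ : V2 → ℝ) (S : Z2 → ℝ → ℝ) (Q : ℝ) (k : Z2) : ℝ → ℝ :=
  (Ioi (ρ (zv k) - 1 / Q ^ 2)).indicator (d2 (S k) (1 / (2 * Q ^ 4)))

namespace Sys
variable {ρ : V2 → ℝ} {S : Z2 → ℝ → ℝ} {K c C A : ℝ}

lemma integrable_gr (h : Sys ρ S K c C) {k : Z2} (hk : k ≠ 0) (Q : ℝ) : Integrable (gr ρ S Q k) :=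
  (integrable_d2 (h.profile k hk).integrable _).indicator measurableSet_Ioi

lemma gr_support (h : Sys ρ S K c C) {k : Z2} (hk : k ≠ 0) {Q : ℝ} (hQ : 1 ≤ Q) (u : ℝ)
    (hu : gr ρ S Q k u ≠ 0) :
    ρ (zv k) - 1 / Q ^ 2 ≤ u ∧ u ≤ ρ (zv k) + 1 / (2 * Q ^ 4) := by
  have h1 : u ∈ Ioi (ρ (zv k) - 1 / Q ^ 2) := mem_of_indicator_ne_zero hu
  refine ⟨(mem_Ioi.1 h1).le, ?_⟩
  by_contra! hlt
  apply hu
  rw [gr, indicator_of_mem h1, d2]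
  have hp : 0 < 1 / (2 * Q ^ 4) := by positivity
  have hz := (h.profile k hk).zero_right
  rw [hz _ (by linarith), hz _ (by linarith), hz _ (by linarith)]
  ring

/-- The mean square of a block in terms of the masses of pairs of nearby frequencies on which `ρ`
nearly agrees. -/
lemma block (h : Sys ρ S K c C) (hA0 : 0 ≤ A) (hA : LargeSieve A) {Q r γ P : ℝ} (hQ : 2 ≤ Q)
    (hQc : 1 / Q ^ 2 ≤ c) (hr : 1 ≤ r) {N J : ℕ} (hN : 0 < N)
    (hNJ : (8 * C / c + 4 + 2 / c) * (r / N + 3 / Q ^ 2) ≤ J) (s : Finset Z2)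
    (hs : ∀ k ∈ s, r ≤ ‖k‖ ∧ ‖k‖ ≤ 2 * r) (a : Z2 → ℂ) (ha : ∀ k ∈ s, ‖a k‖ ≤ γ)
    (hP : ∑ j ∈ box J, ∑ k ∈ s with k + j ∈ s ∧ |ρ (zv k + zv j) - ρ (zv k)| ≤ 3 / Q ^ 2,
      sig ρ S K Q r k * sig ρ S K Q r (k + j) ≤ P) (T₀ : ℝ) :
    ∫ T in (T₀ - Q ^ 2)..(T₀ + Q ^ 2), ‖∑ k ∈ s, a k * ft (gr ρ S Q k) T‖ ^ 2
      ≤ 2 * (2 * N + 1) * (A * Q ^ 2 * ((γ / (Q ^ 6 * (r * √r))) ^ 2 * P)) := by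
  classical
  have hQ1 : 1 ≤ Q := by linarith
  have hQ0 : 0 < Q := by linarith
  have hk0 : ∀ k ∈ s, k ≠ 0 := by
    rintro k hk rfl
    have := (hs 0 hk).1
    rw [norm_zero] at this; linarith
  set I := (Finset.univ : Finset Bool) ×ˢ Finset.Icc (-(N : ℤ)) N with hI
  have cardI : (I.card : ℝ) = 2 * (2 * N + 1) := by
    rw [hI, Finset.card_product, Int.card_Icc]
    rw [show ((N : ℤ) + 1 - -(N : ℤ)).toNat = 2 * N + 1 by omega]
    simp
  set q := γ / (Q ^ 6 * (r * √r)) with hq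
  set X : Z2 → ℝ := fun k => q * sig ρ S K Q r k with hX
  have hsig : ∀ k ∈ s, 0 ≤ sig ρ S K Q r k := fun k hk =>
    h.sig_nonneg (hk0 k hk) hQ1 hr (hs k hk).1
  have hXm : ∀ k ∈ s, ‖a k‖ * (sig ρ S K Q r k / (Q ^ 6 * (r * √r))) ≤ X k := by
    intro k hk
    have := hsig k hk
    calc ‖a k‖ * (sig ρ S K Q r k / (Q ^ 6 * (r * √r)))
        ≤ γ * (sig ρ S K Q r k / (Q ^ 6 * (r * √r))) := by gcongr; exact ha k hk
      _ = X k := by simp only [hX, hq]; ring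
  have hX0 : ∀ k ∈ s, 0 ≤ X k := fun k hk =>
    le_trans (mul_nonneg (norm_nonneg _) (div_nonneg (hsig k hk) (by positivity))) (hXm k hk)
  have hcont : ∀ U : Finset Z2, U ⊆ s →
      Continuous fun T => ‖∑ k ∈ U, a k * ft (gr ρ S Q k) T‖ ^ 2 := fun U hU =>
    (continuous_finsetSum _ fun k hk => continuous_const.mul
      (continuous_ft (h.integrable_gr (hk0 k (hU hk)) Q))).norm.pow 2
  have hle : T₀ - Q ^ 2 ≤ T₀ + Q ^ 2 := by nlinarith [sq_nonneg Q]
  -- the class of `b`, as seen by the large sieve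
  have hclass : ∀ b ∈ I, ∫ T in (T₀ - Q ^ 2)..(T₀ + Q ^ 2),
      ‖∑ k ∈ s with cls N k = b, a k * ft (gr ρ S Q k) T‖ ^ 2 ≤
      A * Q ^ 2 * ∑ k ∈ s with cls N k = b, ∑ j ∈ box J,
        if k + j ∈ s ∧ |ρ (zv k + zv j) - ρ (zv k)| ≤ 3 / Q ^ 2 then X k * X (k + j) else 0 := by
    intro b _
    have hsub : ∀ k ∈ s.filter (fun k => cls N k = b), k ∈ s := fun k hk =>
      (Finset.mem_filter.1 hk).1
    refine (hA _ a (gr ρ S Q) (fun k => sig ρ S K Q r k / (Q ^ 6 * (r * √r)))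
      (fun k => ρ (zv k)) (1 / Q ^ 2) (1 / (2 * Q ^ 4)) (Q ^ 2) T₀
      (fun k hk => h.integrable_gr (hk0 k (hsub k hk)) Q)
      (fun k hk => h.right_mass_le (hk0 k (hsub k hk)) hQ hr (hs k (hsub k hk)).1 hQc)
      (fun k hk => h.gr_support (hk0 k (hsub k hk)) hQ1) (by positivity)).trans ?_
    refine mul_le_mul_of_nonneg_left ?_ (by positivity)
    refine Finset.sum_le_sum fun k hk => ?_
    have hks := hsub k hk
    have hw : 1 / Q ^ 2 + 1 / (2 * Q ^ 4) + 1 / Q ^ 2 ≤ 3 / Q ^ 2 := by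
      have : 1 / (2 * Q ^ 4) ≤ 1 / Q ^ 2 :=
        one_div_le_one_div_of_le (by positivity)
          (by nlinarith [sq_nonneg (Q ^ 2), one_le_pow₀ hQ1 (n := 2)])
      have e : 3 / Q ^ 2 = 1 / Q ^ 2 + 1 / Q ^ 2 + 1 / Q ^ 2 := by ring
      linarith
    rw [← Finset.sum_filter, ← Finset.sum_filter]
    rw [← Finset.sum_image (f := fun l => X k * X l) (g := fun j => k + j)
      (fun x _ y _ hxy => add_left_cancel hxy)]
    have hstep : ∑ l ∈ (s.filter fun k => cls N k = b).filter (fun l => |ρ (zv k) - ρ (zv l)| <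
        1 / Q ^ 2 + 1 / (2 * Q ^ 4) + 1 / Q ^ 2),
        ‖a k‖ * (sig ρ S K Q r k / (Q ^ 6 * (r * √r))) *
          (‖a l‖ * (sig ρ S K Q r l / (Q ^ 6 * (r * √r)))) ≤
        ∑ l ∈ (s.filter fun k => cls N k = b).filter (fun l => |ρ (zv k) - ρ (zv l)| <
        1 / Q ^ 2 + 1 / (2 * Q ^ 4) + 1 / Q ^ 2), X k * X l := by
      refine Finset.sum_le_sum fun l hl => ?_
      have hls := hsub l (Finset.mem_filter.1 hl).1
      have := hsig l hls
      exact mul_le_mul (hXm k hks) (hXm l hls) (by positivity) (hX0 k hks)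
    refine hstep.trans (Finset.sum_le_sum_of_subset_of_nonneg ?_ ?_)
    · intro l hl
      rw [Finset.mem_filter] at hl
      obtain ⟨hl1, hl2⟩ := hl
      have hls := hsub l hl1
      have hcl : cls N k = cls N l := by
        rw [(Finset.mem_filter.1 hk).2, (Finset.mem_filter.1 hl1).2]
      have hclose : |ρ (zv k) - ρ (zv l)| ≤ 3 / Q ^ 2 := hl2.le.trans hw
      have hkl := h.close_of_cls hN (hk0 k hks) (hk0 l hls) (hs l hls).2 hcl hclose
      have hz : zv k + zv (l - k) = zv l := by rw [← zv_add, add_sub_cancel]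
      refine Finset.mem_image.2 ⟨l - k, Finset.mem_filter.2 ⟨?_, ?_, ?_⟩, add_sub_cancel _ _⟩
      · rw [mem_box_iff, norm_sub_rev]; exact hkl.trans hNJ
      · rwa [add_sub_cancel]
      · rwa [hz, abs_sub_comm]
    · intro l hl _
      obtain ⟨j, hj, rfl⟩ := Finset.mem_image.1 hl
      exact mul_nonneg (hX0 k hks) (hX0 _ (Finset.mem_filter.1 hj).2.1)
  calc ∫ T in (T₀ - Q ^ 2)..(T₀ + Q ^ 2), ‖∑ k ∈ s, a k * ft (gr ρ S Q k) T‖ ^ 2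
      ≤ ∫ T in (T₀ - Q ^ 2)..(T₀ + Q ^ 2), I.card * ∑ b ∈ I,
          ‖∑ k ∈ s with cls N k = b, a k * ft (gr ρ S Q k) T‖ ^ 2 := by
        refine intervalIntegral.integral_mono_on hle
          ((hcont s (Finset.Subset.refl s)).intervalIntegrable _ _) ?_ fun T _ =>
          norm_sum_sq_le_classes s I (cls N) (fun k _ => cls_mem N k) _
        exact (continuous_const.mul (continuous_finsetSum _ fun b _ =>
          hcont _ (Finset.filter_subset _ _))).intervalIntegrable _ _
    _ = I.card * ∑ b ∈ I, ∫ T in (T₀ - Q ^ 2)..(T₀ + Q ^ 2),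
          ‖∑ k ∈ s with cls N k = b, a k * ft (gr ρ S Q k) T‖ ^ 2 := by
        rw [intervalIntegral.integral_const_mul, intervalIntegral.integral_finsetSum]
        exact fun b _ => (hcont _ (Finset.filter_subset _ _)).intervalIntegrable _ _
    _ ≤ I.card * ∑ b ∈ I, A * Q ^ 2 * ∑ k ∈ s with cls N k = b, ∑ j ∈ box J,
        (if k + j ∈ s ∧ |ρ (zv k + zv j) - ρ (zv k)| ≤ 3 / Q ^ 2 then X k * X (k + j) else 0) := by
        gcongr with b hb
        exact hclass b hb
    _ = 2 * (2 * N + 1) * (A * Q ^ 2 * (q ^ 2 * ∑ j ∈ box J,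
        ∑ k ∈ s with k + j ∈ s ∧ |ρ (zv k + zv j) - ρ (zv k)| ≤ 3 / Q ^ 2,
      sig ρ S K Q r k * sig ρ S K Q r (k + j))) := by
        rw [cardI, ← Finset.mul_sum I _ (A * Q ^ 2),
          Finset.sum_fiberwise_of_maps_to (s := s) (t := I) (g := cls N)
            (fun k _ => cls_mem N k) (fun k => ∑ j ∈ box J,
            if k + j ∈ s ∧ |ρ (zv k + zv j) - ρ (zv k)| ≤ 3 / Q ^ 2 then X k * X (k + j) else 0),
          Finset.sum_comm, Finset.mul_sum _ _ (q ^ 2)]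
        congr 2
        refine Finset.sum_congr rfl fun j _ => ?_
        rw [← Finset.sum_filter, Finset.mul_sum]
        refine Finset.sum_congr rfl fun k _ => ?_
        simp only [hX]; ring
    _ ≤ _ := by gcongr

end Sys

/-! ### Sums over pairs of nearby frequencies -/

lemma card_shell_le {r : ℕ} (hr : 1 ≤ r) (s : Finset Z2) (hs : ∀ k ∈ s, ‖k‖ ≤ 2 * r) :
    (s.card : ℝ) ≤ 25 * r ^ 2 := by
  have h1 : s.card ≤ (box (2 * r)).card := Finset.card_le_card fun k hk => by
    rw [mem_box_iff]; push_cast; exact hs k hk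
  rw [card_box] at h1
  have h2 : (2 * (2 * r) + 1) ^ 2 ≤ 25 * r ^ 2 := by nlinarith
  exact_mod_cast h1.trans h2

namespace Sys
variable {ρ : V2 → ℝ} {S : Z2 → ℝ → ℝ} {K c C A : ℝ}

/-- `block` with the number of angular classes adapted to shifts of size `J`, where `r = J * m`. -/
lemma block_core (h : Sys ρ S K c C) (hA0 : 0 ≤ A) (hA : LargeSieve A) {Q γ P₀ : ℝ} (hQ : 2 ≤ Q)
    (hQc : 1 / Q ^ 2 ≤ c) {B J m r : ℕ} (hr : 1 ≤ r) (hrm : r = J * m)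
    (hB1 : 1 ≤ B) (hB : 2 * (8 * C / c + 4 + 2 / c) ≤ B)
    (hQ3 : (8 * C / c + 4 + 2 / c) * (3 / Q ^ 2) ≤ 1 / 2) (s : Finset Z2)
    (hs : ∀ k ∈ s, (r : ℝ) ≤ ‖k‖ ∧ ‖k‖ ≤ 2 * r) (a : Z2 → ℂ) (ha : ∀ k ∈ s, ‖a k‖ ≤ γ)
    (hP0 : 0 ≤ P₀)
    (hP : ∑ j ∈ box J, ∑ k ∈ s with k + j ∈ s ∧ |ρ (zv k + zv j) - ρ (zv k)| ≤ 3 / Q ^ 2,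
      sig ρ S K Q r k * sig ρ S K Q r (k + j) ≤ P₀ * r ^ 2) (T₀ : ℝ) :
    ∫ T in (T₀ - Q ^ 2)..(T₀ + Q ^ 2), ‖∑ k ∈ s, a k * ft (gr ρ S Q k) T‖ ^ 2
      ≤ 6 * B * A * P₀ * γ ^ 2 / (J * Q ^ 10) := by
  have hm : 1 ≤ m := Nat.pos_of_ne_zero (by rintro rfl; simp at hrm; omega)
  have hJ : 1 ≤ J := Nat.pos_of_ne_zero (by rintro rfl; simp at hrm; omega)
  have hm' : (1 : ℝ) ≤ m := by exact_mod_cast hm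
  have hJ' : (1 : ℝ) ≤ J := by exact_mod_cast hJ
  have hB' : (1 : ℝ) ≤ B := by exact_mod_cast hB1
  have hr' : (1 : ℝ) ≤ r := by exact_mod_cast hr
  have hrm' : (r : ℝ) = J * m := by exact_mod_cast hrm
  have hc := h.c_pos
  have hC := h.C_pos
  have hC0 : 0 < 8 * C / c + 4 + 2 / c := by positivity
  set C₀ := 8 * C / c + 4 + 2 / c
  have hNJ : C₀ * ((r : ℝ) / (B * m : ℕ) + 3 / Q ^ 2) ≤ J := by
    have e : (r : ℝ) / (B * m : ℕ) = J / B := by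
      push_cast; rw [hrm']; field_simp
    rw [e, mul_add]
    have : C₀ * (J / B) ≤ J / 2 := by
      rw [← mul_div_assoc, div_le_div_iff₀ (by linarith) (by norm_num)]
      nlinarith
    linarith
  refine (h.block hA0 hA hQ hQc hr' (Nat.mul_pos hB1 hm) hNJ s hs a ha hP T₀).trans ?_
  have hQ0 : 0 < Q := by linarith
  have hsr : √(r : ℝ) ^ 2 = r := Real.sq_sqrt (by linarith)
  have hsr0 : 0 < √(r : ℝ) := Real.sqrt_pos.2 (by linarith)
  have e : (γ / (Q ^ 6 * (r * √r))) ^ 2 * (P₀ * r ^ 2) = γ ^ 2 * P₀ / (Q ^ 12 * r) := by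
    rw [div_pow, mul_pow, mul_pow, hsr]; field_simp
  rw [e]
  have hNle : 2 * (2 * ((B * m : ℕ) : ℝ) + 1) ≤ 6 * (B * m) := by
    push_cast; nlinarith
  calc _ ≤ 6 * (B * m) * (A * Q ^ 2 * (γ ^ 2 * P₀ / (Q ^ 12 * r))) := by gcongr
    _ = _ := by rw [hrm']; field_simp

/-- The trivial bound for a single shift `j`: all masses are at most `3 K`. -/
lemma pair_le (h : Sys ρ S K c C) {Q : ℝ} (hQ : 1 ≤ Q) {r : ℕ} (hr : 1 ≤ r) (s : Finset Z2)
    (hs : ∀ k ∈ s, (r : ℝ) ≤ ‖k‖ ∧ ‖k‖ ≤ 2 * r) (j : Z2) :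
    ∑ k ∈ s with k + j ∈ s ∧ |ρ (zv k + zv j) - ρ (zv k)| ≤ 3 / Q ^ 2,
      sig ρ S K Q r k * sig ρ S K Q r (k + j) ≤ 225 * K ^ 2 * r ^ 2 := by
  have hr' : (1 : ℝ) ≤ r := by exact_mod_cast hr
  have hK := h.K_nonneg
  have hk0 : ∀ k ∈ s, k ≠ 0 := by
    rintro k hk rfl
    have := (hs 0 hk).1
    rw [norm_zero] at this; linarith
  refine (Finset.sum_le_card_nsmul _ _ (9 * K ^ 2) fun k hk => ?_).trans ?_
  · obtain ⟨h1, h2, -⟩ := Finset.mem_filter.1 hk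
    have a1 := h.sig_le (hk0 _ h1) hQ hr' (hs _ h1).1
    have a2 := h.sig_le (hk0 _ h2) hQ hr' (hs _ h2).1
    have a3 := h.sig_nonneg (hk0 _ h2) hQ hr' (hs _ h2).1
    calc _ ≤ 3 * K * (3 * K) := mul_le_mul a1 a2 a3 (by positivity)
      _ = _ := by ring
  · rw [nsmul_eq_mul]
    have := card_shell_le hr _ (fun k hk => (hs k (Finset.mem_filter.1 hk).1).2 :
      ∀ k ∈ s.filter (fun k => k + j ∈ s ∧ |ρ (zv k + zv j) - ρ (zv k)| ≤ 3 / Q ^ 2), _)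
    nlinarith [sq_nonneg K]

/-- For arbitrary `r` only shifts of size at most `1` are admitted, and the trivial bound suffices. -/
lemma pairs_large (h : Sys ρ S K c C) {Q : ℝ} (hQ : 1 ≤ Q) {r : ℕ} (hr : 1 ≤ r) (s : Finset Z2)
    (hs : ∀ k ∈ s, (r : ℝ) ≤ ‖k‖ ∧ ‖k‖ ≤ 2 * r) :
    ∑ j ∈ box 1, ∑ k ∈ s with k + j ∈ s ∧ |ρ (zv k + zv j) - ρ (zv k)| ≤ 3 / Q ^ 2,
      sig ρ S K Q r k * sig ρ S K Q r (k + j) ≤ 2025 * K ^ 2 * r ^ 2 := by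
  refine (Finset.sum_le_card_nsmul _ _ _ fun j _ => h.pair_le hQ hr s hs j).trans ?_
  rw [card_box, nsmul_eq_mul]; push_cast
  exact le_of_eq (by ring)

/-- The constant of `pairs_small`. -/
def P0 (K c C : ℝ) : ℝ :=
  2025 * K ^ 2 + 27 * K * (240 * K + (580 * (2 * (C / c + 1)) + 25 * K))

lemma P0_nonneg (h : Sys ρ S K c C) : 0 ≤ P0 K c C := by
  have hK := h.K_nonneg
  have hc := h.c_pos
  have hC := h.C_pos
  unfold P0; positivity

/-- For `‖k‖ ~ r ≤ √R` the pairs with shifts up to `J ≤ r^(1/4)` contribute no more than the diagonal,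
thanks to `close_sum`. -/
lemma pairs_small (h : Sys ρ S K c C) {Q : ℝ} (hQ : 1 ≤ Q) (hw : 3 / Q ^ 2 / c ≤ 1 / 2) {r J : ℕ}
    (hr : 1 ≤ r) (hrQ : (r : ℝ) ≤ Q ^ 2) (hJ : 1 ≤ J) (hJr : J ^ 4 ≤ r) (s : Finset Z2)
    (hs : ∀ k ∈ s, (r : ℝ) ≤ ‖k‖ ∧ ‖k‖ ≤ 2 * r) :
    ∑ j ∈ box J, ∑ k ∈ s with k + j ∈ s ∧ |ρ (zv k + zv j) - ρ (zv k)| ≤ 3 / Q ^ 2,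
      sig ρ S K Q r k * sig ρ S K Q r (k + j) ≤ P0 K c C * r ^ 2 := by
  have hr' : (1 : ℝ) ≤ r := by exact_mod_cast hr
  have hJ' : (1 : ℝ) ≤ J := by exact_mod_cast hJ
  have hJr' : (J : ℝ) ^ 4 ≤ r := by exact_mod_cast hJr
  have hK := h.K_nonneg
  have hc := h.c_pos
  have hC := h.C_pos
  have hk0 : ∀ k ∈ s, k ≠ 0 := by
    rintro k hk rfl
    have := (hs 0 hk).1
    rw [norm_zero] at this; linarith
  have h0 : (0 : Z2) ∈ box J := by rw [mem_box_iff, norm_zero]; positivity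
  rw [← Finset.add_sum_erase _ _ h0]
  set C₅ := 580 * (2 * (C / c + 1)) + 25 * K with hC₅
  have hC50 : 0 ≤ C₅ := by positivity
  have hJle : (J : ℝ) ≤ (J : ℝ) ^ 4 := le_self_pow₀ hJ' (by norm_num)
  have hJ3 : (J : ℝ) ^ 3 ≤ r := (pow_le_pow_right₀ hJ' (by norm_num)).trans hJr'
  have hJ2 : (J : ℝ) ^ 2 ≤ √r := Real.le_sqrt_of_sq_le (by rw [← pow_mul]; exact hJr')
  have hsr : √(r : ℝ) * √r = r := Real.mul_self_sqrt (by linarith)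
  have hrest : ∀ j ∈ (box J).erase 0,
      ∑ k ∈ s with k + j ∈ s ∧ |ρ (zv k + zv j) - ρ (zv k)| ≤ 3 / Q ^ 2,
        sig ρ S K Q r k * sig ρ S K Q r (k + j) ≤
      3 * K * (240 * K * J * r + C₅ * (r * √r)) := by
    intro j hj
    obtain ⟨hj0, hjJ⟩ := Finset.mem_erase.1 hj
    rw [mem_box_iff] at hjJ
    have hcs := h.close_sum hQ hw hr hrQ hj0 (hjJ.trans (hJle.trans hJr'))
      (s.filter fun k => k + j ∈ s ∧ |ρ (zv k + zv j) - ρ (zv k)| ≤ 3 / Q ^ 2)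
      (fun k hk => ⟨(hs k (Finset.mem_filter.1 hk).1).1, (hs k (Finset.mem_filter.1 hk).1).2,
        (Finset.mem_filter.1 hk).2.2⟩)
    calc _ ≤ ∑ k ∈ s with k + j ∈ s ∧ |ρ (zv k + zv j) - ρ (zv k)| ≤ 3 / Q ^ 2,
          3 * K * sig ρ S K Q r k := by
          refine Finset.sum_le_sum fun k hk => ?_
          obtain ⟨h1, h2, -⟩ := Finset.mem_filter.1 hk
          rw [mul_comm]
          exact mul_le_mul_of_nonneg_right (h.sig_le (hk0 _ h2) hQ hr' (hs _ h2).1)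
            (h.sig_nonneg (hk0 _ h1) hQ hr' (hs _ h1).1)
      _ = 3 * K * ∑ k ∈ s with k + j ∈ s ∧ |ρ (zv k + zv j) - ρ (zv k)| ≤ 3 / Q ^ 2,
          sig ρ S K Q r k := by rw [Finset.mul_sum]
      _ ≤ 3 * K * (240 * K * ‖j‖ * r + C₅ * (r * √r)) := by gcongr
      _ ≤ _ := by gcongr
  have hcard : (((box J).erase 0).card : ℝ) ≤ 9 * J ^ 2 := by
    have : ((box J).erase 0).card ≤ (2 * J + 1) ^ 2 := by
      rw [← card_box]; exact Finset.card_le_card (Finset.erase_subset _ _)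
    have h2 : (2 * J + 1) ^ 2 ≤ 9 * J ^ 2 := by nlinarith
    exact_mod_cast this.trans h2
  have hsum := Finset.sum_le_card_nsmul _ _ _ hrest
  rw [nsmul_eq_mul] at hsum
  have hpos : 0 ≤ 3 * K * (240 * K * J * r + C₅ * (r * √r)) := by positivity
  have h1 : 9 * (J : ℝ) ^ 2 * (3 * K * (240 * K * J * r + C₅ * (r * √r))) ≤
      27 * K * (240 * K + C₅) * r ^ 2 := by
    have e1 : (J : ℝ) ^ 3 * r ≤ r ^ 2 := by nlinarith
    have e2 : (J : ℝ) ^ 2 * (r * √r) ≤ r ^ 2 := by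
      calc (J : ℝ) ^ 2 * (r * √r) ≤ √r * (r * √r) := by gcongr
        _ = √r * √r * r := by ring
        _ = r ^ 2 := by rw [hsr]; ring
    calc _ = 27 * K * (240 * K * ((J : ℝ) ^ 3 * r) + C₅ * ((J : ℝ) ^ 2 * (r * √r))) := by ring
      _ ≤ 27 * K * (240 * K * r ^ 2 + C₅ * r ^ 2) := by gcongr
      _ = _ := by ring
  have h2 := h.pair_le hQ hr s hs 0
  have h3 : 225 * K ^ 2 * (r : ℝ) ^ 2 ≤ 2025 * K ^ 2 * r ^ 2 := by gcongr; norm_num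
  have h4 := mul_le_mul_of_nonneg_right hcard hpos
  have h5 : P0 K c C * (r : ℝ) ^ 2 = 2025 * K ^ 2 * r ^ 2 + 27 * K * (240 * K + C₅) * r ^ 2 := by
    unfold P0; ring
  linarith

end Sys

/-! ### Summation over dyadic blocks -/

/-- The dyadic level of an integer vector: `2 ^ lev k ≤ ‖k‖ < 2 ^ (lev k + 1)` for `k ≠ 0`. -/
def lev (k : Z2) : ℕ := Nat.log 2 (nn k)

lemma lev_bounds {k : Z2} (hk : k ≠ 0) :
    ((2 ^ lev k : ℕ) : ℝ) ≤ ‖k‖ ∧ ‖k‖ ≤ 2 * ((2 ^ lev k : ℕ) : ℝ) := by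
  have h1 := one_le_norm hk
  rw [norm_eq_nn] at h1 ⊢
  have h0 : nn k ≠ 0 := by rintro h; rw [h] at h1; norm_num at h1
  constructor
  · exact_mod_cast Nat.pow_log_le_self 2 h0
  · have := Nat.lt_pow_succ_log_self (b := 2) one_lt_two (nn k)
    rw [Nat.pow_succ, mul_comm] at this
    exact_mod_cast this.le

/-- The weight of the `i`-th dyadic block, for cut-off parameter `X`. -/
def wt (X : ℝ) (i : ℕ) : ℝ := 2 * (15 / 16) ^ i + if X < 2 ^ i then X / 2 ^ i else 0

lemma half_pow_le (i : ℕ) : ((1 : ℝ) / 2) ^ (i / 8) ≤ 2 * (15 / 16) ^ i := by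
  conv_rhs => rw [← Nat.div_add_mod i 8, pow_add, pow_mul]
  have h1 : ((1 : ℝ) / 2) ^ (i / 8) ≤ ((15 / 16) ^ 8) ^ (i / 8) := by gcongr; norm_num
  have h2 : ((15 : ℝ) / 16) ^ 8 ≤ (15 / 16) ^ (i % 8) :=
    pow_le_pow_of_le_one (by norm_num) (by norm_num) (Nat.mod_lt _ (by norm_num)).le
  have h3 : (1 : ℝ) / 2 ≤ (15 / 16) ^ 8 := by norm_num
  have h4 : (0 : ℝ) ≤ ((15 / 16) ^ 8) ^ (i / 8) := by positivity
  nlinarith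

lemma wt_pos {X : ℝ} (hX : 0 < X) (i : ℕ) : 0 < wt X i := by
  unfold wt
  have : (0 : ℝ) ≤ if X < 2 ^ i then X / 2 ^ i else 0 := by split_ifs <;> positivity
  positivity

lemma sum_tail_le {X : ℝ} (n : ℕ) :
    (X < 2 ^ n → ∑ i ∈ Finset.range n, (if X < 2 ^ i then X / 2 ^ i else 0) ≤ 2 - 2 * X / 2 ^ n) ∧
    (2 ^ n ≤ X → ∑ i ∈ Finset.range n, (if X < 2 ^ i then X / 2 ^ i else 0) = 0) := by
  induction n with
  | zero =>
    refine ⟨fun h => ?_, fun _ => by simp⟩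
    simp only [pow_zero] at h
    simp; linarith
  | succ n ih =>
    have hpos : (0 : ℝ) < 2 ^ n := by positivity
    rw [Finset.sum_range_succ]
    refine ⟨fun h => ?_, fun h => ?_⟩
    · rw [pow_succ] at h ⊢
      have e : 2 * X / (2 ^ n * 2) = X / 2 ^ n := by field_simp
      rw [e]
      rcases lt_or_ge X (2 ^ n) with h1 | h1
      · rw [if_pos h1]
        have := ih.1 h1
        have e2 : 2 * X / 2 ^ n = X / 2 ^ n + X / 2 ^ n := by ring
        linarith
      · rw [if_neg (not_lt.2 h1), ih.2 h1]
        have : X / 2 ^ n ≤ 2 := by rw [div_le_iff₀ hpos]; linarith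
        linarith
    · rw [pow_succ] at h
      have h1 : 2 ^ n ≤ X := by linarith
      rw [ih.2 h1, if_neg (not_lt.2 h1), add_zero]

lemma sum_wt_le {X : ℝ} (hX : 0 < X) (n : ℕ) : ∑ i ∈ Finset.range n, wt X i ≤ 34 := by
  unfold wt
  rw [Finset.sum_add_distrib, ← Finset.mul_sum]
  have h1 : ∑ i ∈ Finset.range n, ((15 : ℝ) / 16) ^ i ≤ 16 := by
    rw [geom_sum_eq (by norm_num)]
    have : (0 : ℝ) ≤ (15 / 16) ^ n := by positivity
    rw [div_le_iff_of_neg (by norm_num)]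
    linarith
  have h2 : ∑ i ∈ Finset.range n, (if X < 2 ^ i then X / 2 ^ i else 0) ≤ 2 := by
    rcases lt_or_ge X (2 ^ n) with h | h
    · have := (sum_tail_le n).1 h
      have : 0 ≤ 2 * X / 2 ^ n := by positivity
      linarith
    · rw [(sum_tail_le n).2 h]; norm_num
  linarith

/-- The weighted Cauchy–Schwarz inequality over dyadic blocks. -/
lemma norm_sum_sq_le_dyadic {X : ℝ} (hX : 0 < X) (s : Finset Z2) (f : Z2 → ℂ) {n : ℕ}
    (hn : ∀ k ∈ s, lev k < n) :
    ‖∑ k ∈ s, f k‖ ^ 2 ≤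
      34 * ∑ i ∈ Finset.range n, ‖∑ k ∈ s with lev k = i, f k‖ ^ 2 / wt X i := by
  rw [← Finset.sum_fiberwise_of_maps_to (fun k hk => Finset.mem_range.2 (hn k hk))]
  have h1 := Finset.sq_sum_div_le_sum_sq_div (Finset.range n)
    (fun i => ‖∑ k ∈ s with lev k = i, f k‖) (g := wt X) (fun i _ => wt_pos hX i)
  have h2 := sum_wt_le hX n
  rcases (Finset.sum_nonneg fun i (_ : i ∈ Finset.range n) => (wt_pos hX i).le).eq_or_lt with h0 | h0
  · have : Finset.range n = ∅ := by
      by_contra hne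
      have := Finset.sum_pos (fun i (_ : i ∈ Finset.range n) => wt_pos hX i)
        (Finset.nonempty_iff_ne_empty.2 hne)
      linarith
    rw [this]; simp
  rw [div_le_iff₀ h0] at h1
  have h3 : 0 ≤ ∑ i ∈ Finset.range n, ‖∑ k ∈ s with lev k = i, f k‖ ^ 2 / wt X i :=
    Finset.sum_nonneg fun i _ => div_nonneg (sq_nonneg _) (wt_pos hX i).le
  calc ‖∑ i ∈ Finset.range n, ∑ k ∈ s with lev k = i, f k‖ ^ 2
      ≤ (∑ i ∈ Finset.range n, ‖∑ k ∈ s with lev k = i, f k‖) ^ 2 := by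
        gcongr; exact norm_sum_le _ _
    _ ≤ _ := h1
    _ ≤ _ := by rw [mul_comm]; gcongr

namespace Sys
variable {ρ : V2 → ℝ} {S : Z2 → ℝ → ℝ} {K c C A : ℝ}

/-- Each dyadic block is controlled by the square of its weight. -/
lemma block_wt (h : Sys ρ S K c C) (hA0 : 0 ≤ A) (hA : LargeSieve A) {Q Cc : ℝ} (hQ : 2 ≤ Q)
    (hQc : 1 / Q ^ 2 ≤ c) (hw : 3 / Q ^ 2 / c ≤ 1 / 2) {B : ℕ}
    (hB1 : 1 ≤ B) (hB : 2 * (8 * C / c + 4 + 2 / c) ≤ B)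
    (hQ3 : (8 * C / c + 4 + 2 / c) * (3 / Q ^ 2) ≤ 1 / 2) (s : Finset Z2) (hCc : 1 ≤ Cc) {i : ℕ}
    (hs : ∀ k ∈ s, ((2 ^ i : ℕ) : ℝ) ≤ ‖k‖ ∧ ‖k‖ ≤ 2 * ((2 ^ i : ℕ) : ℝ))
    (a : Z2 → ℂ) (ha : ∀ k ∈ s, ‖a k‖ ≤ 1)
    (ha' : ∀ k ∈ s, ‖a k‖ ≤ Cc * Q ^ 2 / ‖k‖) (T₀ : ℝ) :
    ∫ T in (T₀ - Q ^ 2)..(T₀ + Q ^ 2), ‖∑ k ∈ s, a k * ft (gr ρ S Q k) T‖ ^ 2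
      ≤ 6 * B * A * P0 K c C * Cc ^ 2 / Q ^ 10 * wt (Q ^ 2) i ^ 2 := by
  have hP0 := h.P0_nonneg
  have hQ0 : 0 < Q := by linarith
  have hr1 : 1 ≤ 2 ^ i := Nat.one_le_two_pow
  -- Above `√R` the decay of the coefficients suffices; below, shifts up to `J = 4 ^ (i / 8)` are allowed.
  rcases lt_or_ge (Q ^ 2) (2 ^ i) with hX | hX
  · have hP : 2025 * K ^ 2 ≤ P0 K c C := by
      have hK := h.K_nonneg
      have hc := h.c_pos
      have hC := h.C_pos
      unfold P0
      have : 0 ≤ 27 * K * (240 * K + (580 * (2 * (C / c + 1)) + 25 * K)) := by positivity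
      linarith
    have hb := h.block_core hA0 hA hQ hQc hr1 (one_mul (2 ^ i)).symm hB1 hB hQ3 s hs a
      (γ := Cc * Q ^ 2 / 2 ^ i) (fun k hk => (ha' k hk).trans (by
        have := (hs k hk).1
        push_cast at this
        gcongr)) hP0 ((h.pairs_large (by linarith) hr1 s hs).trans
          (mul_le_mul_of_nonneg_right hP (sq_nonneg _))) T₀
    refine hb.trans ?_
    have hq : Q ^ 2 / 2 ^ i ≤ wt (Q ^ 2) i := by
      unfold wt; rw [if_pos hX]
      have : (0 : ℝ) ≤ 2 * (15 / 16) ^ i := by positivity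
      linarith
    calc _ = 6 * B * A * P0 K c C * Cc ^ 2 / Q ^ 10 * (Q ^ 2 / 2 ^ i) ^ 2 := by
          push_cast; field_simp
      _ ≤ _ := by gcongr
  · set m := i / 8 with hm
    have h8 : 8 * m ≤ i := Nat.mul_div_le i 8
    have hJ : (4 ^ m) ^ 4 ≤ 2 ^ i := by
      rw [← pow_mul, show (4 : ℕ) = 2 ^ 2 by norm_num, ← pow_mul]
      exact Nat.pow_le_pow_right (by norm_num) (by omega)
    have hd : 2 ^ i = 4 ^ m * 2 ^ (i - 2 * m) := by
      rw [show (4 : ℕ) = 2 ^ 2 by norm_num, ← pow_mul, ← pow_add]; congr 1; omega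
    have hb := h.block_core hA0 hA hQ hQc hr1 hd hB1 hB hQ3 s hs a ha hP0
      (h.pairs_small (by linarith) hw hr1 (by push_cast; exact hX) (Nat.one_le_pow _ _ (by norm_num))
        hJ s hs) T₀
    refine hb.trans ?_
    have hq : (1 / 2 : ℝ) ^ m ≤ wt (Q ^ 2) i := by
      unfold wt; rw [if_neg (not_lt.2 hX), add_zero]; exact half_pow_le i
    calc _ = 6 * B * A * P0 K c C * 1 ^ 2 / Q ^ 10 * ((1 / 2) ^ m) ^ 2 := by
          push_cast
          rw [← pow_mul, mul_comm m 2, pow_mul, show ((1 : ℝ) / 2) ^ 2 = 1 / 4 by norm_num,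
            one_div_pow]
          field_simp
      _ ≤ _ := by gcongr

/-- Lower bound on `Q` which makes all the smallness conditions hold. -/
def Qmin (c C : ℝ) : ℝ := 2 + 6 * (8 * C / c + 4 + 2 / c) + 6 / c

lemma Qmin_spec (h : Sys ρ S K c C) {Q : ℝ} (hQ : Qmin c C ≤ Q) :
    2 ≤ Q ∧ 1 / Q ^ 2 ≤ c ∧ 3 / Q ^ 2 / c ≤ 1 / 2 ∧
      (8 * C / c + 4 + 2 / c) * (3 / Q ^ 2) ≤ 1 / 2 := by
  have hc := h.c_pos
  have hC := h.C_pos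
  have hC0 : 0 < 8 * C / c + 4 + 2 / c := by positivity
  unfold Qmin at hQ
  set C₀ := 8 * C / c + 4 + 2 / c
  have h6 : 0 < 6 / c := by positivity
  have h2 : 2 ≤ Q := by linarith
  have hQQ : Q ≤ Q ^ 2 := by nlinarith
  have hc6 : 6 / c ≤ Q ^ 2 := by linarith
  rw [div_le_iff₀ hc] at hc6
  have hQ0 : 0 < Q ^ 2 := by positivity
  refine ⟨h2, ?_, ?_, ?_⟩
  · rw [div_le_iff₀ hQ0]; linarith
  · rw [div_div, div_le_div_iff₀ (by positivity) (by norm_num)]; linarith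
  · rw [← mul_div_assoc, div_le_div_iff₀ hQ0 (by norm_num)]; linarith

/-- The mean square of the sum of the right parts, over any interval of length `2 √R`. -/
theorem right_bound (h : Sys ρ S K c C) {Cc : ℝ} (hCc : 1 ≤ Cc) :
    ∃ D : ℝ, 0 ≤ D ∧ ∀ Q, Qmin c C ≤ Q → ∀ s : Finset Z2, (∀ k ∈ s, k ≠ 0) → ∀ a : Z2 → ℂ,
      (∀ k ∈ s, ‖a k‖ ≤ 1) → (∀ k ∈ s, ‖a k‖ ≤ Cc * Q ^ 2 / ‖k‖) → ∀ T₀ : ℝ,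
      ∫ T in (T₀ - Q ^ 2)..(T₀ + Q ^ 2), ‖∑ k ∈ s, a k * ft (gr ρ S Q k) T‖ ^ 2 ≤ D / Q ^ 10 := by
  obtain ⟨A, hA0, hA⟩ := exists_largeSieve
  have hP0 := h.P0_nonneg
  obtain ⟨B', hB'⟩ := exists_nat_ge (2 * (8 * C / c + 4 + 2 / c))
  obtain ⟨B, hB1, hB⟩ : ∃ B : ℕ, 1 ≤ B ∧ 2 * (8 * C / c + 4 + 2 / c) ≤ (B : ℝ) :=
    ⟨B' + 1, by omega, by push_cast; linarith⟩
  set D₀ := 6 * B * A * P0 K c C * Cc ^ 2 with hD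
  have hD0 : 0 ≤ D₀ := by positivity
  refine ⟨34 * (D₀ * 34), by positivity, fun Q hQ s hs a ha ha' T₀ => ?_⟩
  obtain ⟨hQ2, hQc, hw, hQ3⟩ := h.Qmin_spec hQ
  have hX : 0 < Q ^ 2 := by positivity
  have hcont : ∀ U : Finset Z2, U ⊆ s →
      Continuous fun T => ‖∑ k ∈ U, a k * ft (gr ρ S Q k) T‖ ^ 2 := fun U hU =>
    (continuous_finsetSum _ fun k hk => continuous_const.mul
      (continuous_ft (h.integrable_gr (hs k (hU hk)) Q))).norm.pow 2
  have hn : ∀ k ∈ s, lev k < s.sup lev + 1 := fun k hk => Nat.lt_succ_of_le (Finset.le_sup hk)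
  set n := s.sup lev + 1
  calc ∫ T in (T₀ - Q ^ 2)..(T₀ + Q ^ 2), ‖∑ k ∈ s, a k * ft (gr ρ S Q k) T‖ ^ 2
      ≤ ∫ T in (T₀ - Q ^ 2)..(T₀ + Q ^ 2), 34 * ∑ i ∈ Finset.range n,
          ‖∑ k ∈ s with lev k = i, a k * ft (gr ρ S Q k) T‖ ^ 2 / wt (Q ^ 2) i := by
        refine intervalIntegral.integral_mono_on (by linarith)
          ((hcont s (Finset.Subset.refl s)).intervalIntegrable _ _) ?_ fun T _ =>
          norm_sum_sq_le_dyadic hX s _ hn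
        exact (continuous_const.mul (continuous_finsetSum _ fun b _ =>
          (hcont _ (Finset.filter_subset _ _)).div_const _)).intervalIntegrable _ _
    _ = 34 * ∑ i ∈ Finset.range n, (∫ T in (T₀ - Q ^ 2)..(T₀ + Q ^ 2),
          ‖∑ k ∈ s with lev k = i, a k * ft (gr ρ S Q k) T‖ ^ 2) / wt (Q ^ 2) i := by
        rw [intervalIntegral.integral_const_mul, intervalIntegral.integral_finsetSum]
        · simp_rw [intervalIntegral.integral_div]
        · exact fun b _ => ((hcont _ (Finset.filter_subset _ _)).div_const _).intervalIntegrable _ _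
    _ ≤ 34 * ∑ i ∈ Finset.range n, D₀ / Q ^ 10 * wt (Q ^ 2) i := by
        gcongr with i _
        rw [div_le_iff₀ (wt_pos hX i), mul_assoc, ← sq]
        have hsub : ∀ k ∈ s.filter (fun k => lev k = i), k ∈ s := fun k hk =>
          (Finset.mem_filter.1 hk).1
        refine h.block_wt hA0 hA hQ2 hQc hw hB1 hB hQ3 _ hCc (fun k hk => ?_) a
          (fun k hk => ha k (hsub k hk)) (fun k hk => ha' k (hsub k hk)) T₀
        rw [← (Finset.mem_filter.1 hk).2]
        exact lev_bounds (hs k (hsub k hk))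
    _ ≤ 34 * (D₀ / Q ^ 10 * 34) := by
        rw [← Finset.mul_sum]; gcongr; exact sum_wt_le hX n
    _ = _ := by ring

end Sys

/-! ### Finite exponential sums over the frequencies -/

lemma sum_sqrt_le {X : ℝ} (hX : 1 ≤ X) (n : ℕ) :
    ((2 : ℝ) ^ n ≤ 2 * X → ∑ i ∈ Finset.range n,
      (if (2 : ℝ) ^ i ≤ X then √(2 ^ i) else X / √(2 ^ i)) ≤ 3 * √(2 ^ n)) ∧
    (X < 2 ^ n → ∑ i ∈ Finset.range n,
      (if (2 : ℝ) ^ i ≤ X then √(2 ^ i) else X / √(2 ^ i)) ≤ 9 * √X - 4 * X / √(2 ^ n)) := by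
  induction n with
  | zero =>
    refine ⟨fun _ => by simp, fun h => ?_⟩
    simp only [pow_zero] at h; linarith
  | succ n ih =>
    have hb : 0 < √((2 : ℝ) ^ n) := Real.sqrt_pos.2 (by positivity)
    have hb2 : √((2 : ℝ) ^ n) ^ 2 = 2 ^ n := Real.sq_sqrt (by positivity)
    have hx : 0 < √X := Real.sqrt_pos.2 (by linarith)
    have hx2 : √X ^ 2 = X := Real.sq_sqrt (by linarith)
    have hs : √((2 : ℝ) ^ (n + 1)) = √2 * √(2 ^ n) := by
      rw [pow_succ, mul_comm, Real.sqrt_mul (by norm_num)]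
    have ht2 : √(2 : ℝ) ^ 2 = 2 := Real.sq_sqrt (by norm_num)
    have ht : 4 / 3 ≤ √(2 : ℝ) := Real.le_sqrt_of_sq_le (by norm_num)
    rw [Finset.sum_range_succ, hs]
    refine ⟨fun h => ?_, fun h => ?_⟩
    · rw [pow_succ] at h
      have h1 : (2 : ℝ) ^ n ≤ X := by linarith
      rw [if_pos h1]
      have := ih.1 (by linarith)
      nlinarith
    · rw [pow_succ] at h
      rcases le_or_gt ((2 : ℝ) ^ n) X with h1 | h1
      · rw [if_pos h1]
        have h2 := ih.1 (by linarith)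
        have h3 : √((2 : ℝ) ^ n) ≤ √X := Real.sqrt_le_sqrt h1
        have h4 : √X ≤ √2 * √(2 ^ n) := by
          rw [← Real.sqrt_mul (by norm_num)]; exact Real.sqrt_le_sqrt (by linarith)
        have h5 : 4 * X / (√2 * √(2 ^ n)) ≤ 4 * √X := by
          rw [div_le_iff₀ (by positivity)]
          nlinarith
        linarith
      · rw [if_neg (not_le.2 h1)]
        have h2 := ih.2 h1
        have h3 : 4 * X / (√2 * √(2 ^ n)) ≤ 3 * (X / √(2 ^ n)) := by
          rw [← mul_div_assoc, div_le_div_iff₀ (by positivity) hb]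
          have : 0 ≤ X * √(2 ^ n) := by positivity
          nlinarith
        have h4 : 4 * X / √(2 ^ n) = 4 * (X / √(2 ^ n)) := by ring
        linarith

/-- Absolute sum of the coefficients against `‖k‖ ^ (-3/2)`. -/
lemma sum_coeff_le {Q Cc : ℝ} (hQ : 1 ≤ Q) (hCc : 1 ≤ Cc) (s : Finset Z2) (hs : ∀ k ∈ s, k ≠ 0)
    (a : Z2 → ℂ) (ha : ∀ k ∈ s, ‖a k‖ ≤ 1) (ha' : ∀ k ∈ s, ‖a k‖ ≤ Cc * Q ^ 2 / ‖k‖) :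
    ∑ k ∈ s, ‖a k‖ / (‖k‖ * √‖k‖) ≤ 225 * Cc * Q := by
  have hn : ∀ k ∈ s, lev k < s.sup lev + 1 := fun k hk => Nat.lt_succ_of_le (Finset.le_sup hk)
  set n := s.sup lev + 1
  rw [← Finset.sum_fiberwise_of_maps_to (fun k hk => Finset.mem_range.2 (hn k hk))]
  have hblock : ∀ i ∈ Finset.range n, ∑ k ∈ s with lev k = i, ‖a k‖ / (‖k‖ * √‖k‖) ≤
      25 * Cc * (if (2 : ℝ) ^ i ≤ Q ^ 2 then √(2 ^ i) else Q ^ 2 / √(2 ^ i)) := by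
    intro i _
    have hlev : ∀ k ∈ s.filter (fun k => lev k = i), k ∈ s ∧ (2 : ℝ) ^ i ≤ ‖k‖ ∧
        ‖k‖ ≤ 2 * ((2 ^ i : ℕ) : ℝ) := by
      intro k hk
      obtain ⟨h1, rfl⟩ := Finset.mem_filter.1 hk
      have := lev_bounds (hs k h1)
      exact ⟨h1, by exact_mod_cast this.1, this.2⟩
    have hcard := card_shell_le Nat.one_le_two_pow _ fun k hk => (hlev k hk).2.2
    push_cast at hcard
    have hb : 0 < √((2 : ℝ) ^ i) := Real.sqrt_pos.2 (by positivity)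
    have hb2 : √((2 : ℝ) ^ i) ^ 2 = 2 ^ i := Real.sq_sqrt (by positivity)
    have hterm : ∀ k ∈ s.filter (fun k => lev k = i), ‖a k‖ / (‖k‖ * √‖k‖) ≤
        Cc * (if (2 : ℝ) ^ i ≤ Q ^ 2 then √(2 ^ i) else Q ^ 2 / √(2 ^ i)) / (2 ^ i) ^ 2 := by
      intro k hk
      obtain ⟨h1, h2, -⟩ := hlev k hk
      have hp : (0 : ℝ) < 2 ^ i := by positivity
      split_ifs with hX
      · calc ‖a k‖ / (‖k‖ * √‖k‖) ≤ Cc / (2 ^ i * √(2 ^ i)) := by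
              gcongr; exact (ha k h1).trans hCc
          _ = Cc * √(2 ^ i) / (2 ^ i) ^ 2 := by
              rw [div_eq_div_iff (by positivity) (by positivity)]
              calc Cc * (2 ^ i) ^ 2 = Cc * 2 ^ i * 2 ^ i := by ring
                _ = Cc * 2 ^ i * √(2 ^ i) ^ 2 := by rw [hb2]
                _ = _ := by ring
      · calc ‖a k‖ / (‖k‖ * √‖k‖) ≤ (Cc * Q ^ 2 / 2 ^ i) / (2 ^ i * √(2 ^ i)) := by
              gcongr; exact (ha' k h1).trans (by gcongr)
          _ = _ := by field_simp
    refine (Finset.sum_le_card_nsmul _ _ _ hterm).trans ?_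
    rw [nsmul_eq_mul]
    have hnn : 0 ≤ Cc * (if (2 : ℝ) ^ i ≤ Q ^ 2 then √(2 ^ i) else Q ^ 2 / √(2 ^ i)) := by
      split_ifs <;> positivity
    refine (mul_le_mul_of_nonneg_right hcard (by positivity)).trans (le_of_eq ?_)
    field_simp
  refine (Finset.sum_le_sum hblock).trans ?_
  rw [← Finset.mul_sum]
  have hX : 1 ≤ Q ^ 2 := one_le_pow₀ hQ
  have hsX : √(Q ^ 2) = Q := Real.sqrt_sq (by linarith)
  have : ∑ i ∈ Finset.range n, (if (2 : ℝ) ^ i ≤ Q ^ 2 then √(2 ^ i) else Q ^ 2 / √(2 ^ i)) ≤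
      9 * Q := by
    rcases lt_or_ge (Q ^ 2) (2 ^ n) with h1 | h1
    · have h2 := (sum_sqrt_le hX n).2 h1
      have : 0 ≤ 4 * Q ^ 2 / √(2 ^ n) := by positivity
      rw [hsX] at h2; linarith
    · have h2 := (sum_sqrt_le hX n).1 (by linarith)
      have h3 := Real.sqrt_le_sqrt h1
      rw [hsX] at h3; linarith
  calc _ ≤ 25 * Cc * (9 * Q) := by gcongr
    _ = _ := by ring

lemma ft_comp_neg (G : ℝ → ℝ) (T : ℝ) : ft (fun u => G (-u)) T = (starRingEnd ℂ) (ft G T) := by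
  unfold ft
  rw [← integral_conj, ← integral_neg_eq_self]
  congr 1
  ext u
  simp [conj_ee]

namespace Sys
variable {ρ : V2 → ℝ} {S : Z2 → ℝ → ℝ} {K c C A : ℝ}

/-- The middle part of the second difference of the profile of `k`. -/
def gm (ρ : V2 → ℝ) (S : Z2 → ℝ → ℝ) (Q : ℝ) (k : Z2) : ℝ → ℝ :=
  (Icc (-ρ (-zv k) + 1 / Q ^ 2) (ρ (zv k) - 1 / Q ^ 2)).indicator (d2 (S k) (1 / (2 * Q ^ 4)))

lemma integrable_gm (h : Sys ρ S K c C) {k : Z2} (hk : k ≠ 0) (Q : ℝ) :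
    Integrable (gm ρ S Q k) :=
  (integrable_d2 (h.profile k hk).integrable _).indicator measurableSet_Icc

lemma two_w_le (h : Sys ρ S K c C) {k : Z2} (hk : k ≠ 0) {w : ℝ} (hw : w ≤ c) :
    2 * w ≤ ρ (zv k) - -ρ (-zv k) := by
  have h1 := h.lower (zv k)
  have h2 := h.lower (-zv k)
  rw [norm_neg] at h2
  rw [norm_zv] at h1 h2
  have := one_le_norm hk
  have := h.c_pos
  nlinarith

/-- The second difference splits into a right, a middle and a left part; the left part is the
reflection of the right part of `-k`. -/
lemma d2_split (h : Sys ρ S K c C) {k : Z2} (hk : k ≠ 0) {Q : ℝ} (hQ : 0 < Q)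
    (hQc : 1 / Q ^ 2 ≤ c) (u : ℝ) :
    d2 (S k) (1 / (2 * Q ^ 4)) u = gr ρ S Q k u + gm ρ S Q k u + gr ρ S Q (-k) (-u) := by
  have h1 := h.two_w_le hk hQc
  have hw : 0 < 1 / Q ^ 2 := by positivity
  have e : d2 (S (-k)) (1 / (2 * Q ^ 4)) (-u) = d2 (S k) (1 / (2 * Q ^ 4)) u := by
    simp only [d2, h.neg]
    rw [show -(-u + 1 / (2 * Q ^ 4)) = u - 1 / (2 * Q ^ 4) by ring,
      show -(-u - 1 / (2 * Q ^ 4)) = u + 1 / (2 * Q ^ 4) by ring, neg_neg]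
    ring
  unfold gr gm
  simp only [indicator_apply, mem_Ioi, mem_Icc, e, zv_neg]
  by_cases a1 : ρ (zv k) - 1 / Q ^ 2 < u
  · rw [if_pos a1, if_neg (by intro hh; linarith [hh.2]), if_neg (by linarith)]; ring
  · rw [if_neg a1]
    by_cases a2 : -ρ (-zv k) + 1 / Q ^ 2 ≤ u
    · rw [if_pos ⟨a2, by linarith⟩, if_neg (by linarith)]; ring
    · rw [if_neg (by intro hh; exact a2 hh.1), if_pos (by linarith)]; ring

lemma norm_ft_gm_le (h : Sys ρ S K c C) {k : Z2} (hk : k ≠ 0) {Q : ℝ} (hQ : 2 ≤ Q)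
    (hQc : 1 / Q ^ 2 ≤ c) (T : ℝ) : ‖ft (gm ρ S Q k) T‖ ≤ K / Q ^ 7 * (1 / (‖k‖ * √‖k‖)) := by
  have hQ0 : 0 < Q := by linarith
  have hK := h.K_nonneg
  have hk1 := one_le_norm hk
  have hm := (h.profile k hk).mid_mass (p := 1 / (2 * Q ^ 4)) (w := 1 / Q ^ 2) (by positivity) (by
    rw [← mul_div_assoc, div_le_div_iff₀ (by positivity) (by positivity)]
    nlinarith [sq_nonneg (Q ^ 2), one_le_pow₀ (by linarith : 1 ≤ Q) (n := 2)])
    (h.two_w_le hk hQc)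
  refine (norm_ft_le _ T).trans (hm.trans ?_)
  have hs : 1 / (2 * Q) ≤ √(1 / Q ^ 2 / 2) := by
    apply Real.le_sqrt_of_sq_le
    rw [div_pow, div_div, div_le_div_iff₀ (by positivity) (by positivity)]
    nlinarith [sq_nonneg Q]
  calc 2 * ((1 / (2 * Q ^ 4)) ^ 2 * (K / (‖k‖ * √‖k‖)) / √(1 / Q ^ 2 / 2))
      ≤ 2 * ((1 / (2 * Q ^ 4)) ^ 2 * (K / (‖k‖ * √‖k‖)) / (1 / (2 * Q))) := by
        have : 0 < 1 / (2 * Q) := by positivity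
        gcongr
    _ = _ := by field_simp

lemma ft_split (h : Sys ρ S K c C) {k : Z2} (hk : k ≠ 0) {Q : ℝ} (hQ : 0 < Q)
    (hQc : 1 / Q ^ 2 ≤ c) (T : ℝ) :
    ft (d2 (S k) (1 / (2 * Q ^ 4))) T = ft (gr ρ S Q k) T + ft (gm ρ S Q k) T +
      (starRingEnd ℂ) (ft (gr ρ S Q (-k)) T) := by
  rw [← ft_comp_neg, ← ft_add (h.integrable_gr hk Q) (h.integrable_gm hk Q),
    ← ft_add (G₁ := fun u => gr ρ S Q k u + gm ρ S Q k u)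
      ((h.integrable_gr hk Q).add (h.integrable_gm hk Q)) ((h.integrable_gr (neg_ne_zero.2 hk) Q).comp_neg)]
  congr 1
  ext u
  exact h.d2_split hk hQ hQc u

/-- The mean square of the exponential sum attached to a finite set of frequencies, over an
interval of length `2 √R` containing `[R, R + √R]` with a margin, where `R = Q ^ 4`. -/
theorem main_bound (h : Sys ρ S K c C) {Cc : ℝ} (hCc : 1 ≤ Cc) :
    ∃ D : ℝ, 0 ≤ D ∧ ∀ Q, Qmin c C ≤ Q → ∀ s : Finset Z2, (∀ k ∈ s, k ≠ 0) → ∀ a : Z2 → ℂ,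
      (∀ k ∈ s, ‖a k‖ ≤ 1) → (∀ k ∈ s, ‖a k‖ ≤ Cc * Q ^ 2 / ‖k‖) →
      ∫ T in (Q ^ 4 + Q ^ 2 / 2 - Q ^ 2)..(Q ^ 4 + Q ^ 2 / 2 + Q ^ 2),
        ‖∑ k ∈ s, a k * ft (S k) T‖ ^ 2 ≤ D / Q ^ 10 := by
  obtain ⟨D, hD0, hD⟩ := h.right_bound hCc
  have hK := h.K_nonneg
  refine ⟨3 * (D + D + 2 * (K * (225 * Cc)) ^ 2), by positivity, fun Q hQ s hs a ha ha' => ?_⟩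
  obtain ⟨hQ2, hQc, -, -⟩ := h.Qmin_spec hQ
  have hQ0 : 0 < Q := by linarith
  have hQsq : 4 ≤ Q ^ 2 := by nlinarith
  set T₀ := Q ^ 4 + Q ^ 2 / 2 with hT₀
  -- the left parts form the conjugate of a right sum over the opposite frequencies
  set s' : Finset Z2 := s.map (Equiv.neg Z2).toEmbedding with hs'
  set a' : Z2 → ℂ := fun k => (starRingEnd ℂ) (a (-k)) with haa
  have hmem : ∀ k ∈ s', -k ∈ s := by
    intro k hk
    obtain ⟨l, hl, rfl⟩ := Finset.mem_map.1 hk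
    simpa using hl
  have hleft : ∀ T, ∑ k ∈ s, a k * (starRingEnd ℂ) (ft (gr ρ S Q (-k)) T) =
      (starRingEnd ℂ) (∑ k ∈ s', a' k * ft (gr ρ S Q k) T) := by
    intro T
    rw [hs', Finset.sum_map, map_sum]
    refine Finset.sum_congr rfl fun k _ => ?_
    simp [haa]
  have hR := hD Q hQ s hs a ha ha' T₀
  have hL := hD Q hQ s' (fun k hk => neg_ne_zero.1 (hs _ (hmem k hk))) a'
    (fun k hk => by simpa [haa] using ha _ (hmem k hk))
    (fun k hk => by simpa [haa] using ha' _ (hmem k hk)) T₀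
  have hmid : ∀ T, ‖∑ k ∈ s, a k * ft (gm ρ S Q k) T‖ ^ 2 ≤ (K * (225 * Cc)) ^ 2 / Q ^ 12 := by
    intro T
    have h1 : ‖∑ k ∈ s, a k * ft (gm ρ S Q k) T‖ ≤ K / Q ^ 7 * (225 * Cc * Q) := by
      calc _ ≤ ∑ k ∈ s, ‖a k * ft (gm ρ S Q k) T‖ := norm_sum_le _ _
        _ ≤ ∑ k ∈ s, K / Q ^ 7 * (‖a k‖ / (‖k‖ * √‖k‖)) := by
          refine Finset.sum_le_sum fun k hk => ?_
          rw [norm_mul]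
          calc _ ≤ ‖a k‖ * (K / Q ^ 7 * (1 / (‖k‖ * √‖k‖))) := by
                gcongr; exact h.norm_ft_gm_le (hs k hk) hQ2 hQc T
            _ = _ := by ring
        _ ≤ _ := by
          rw [← Finset.mul_sum]; gcongr
          exact sum_coeff_le (by linarith) hCc s hs a ha ha'
    calc _ ≤ (K / Q ^ 7 * (225 * Cc * Q)) ^ 2 := by gcongr
      _ = _ := by field_simp
  have hpt : ∀ T ∈ Icc (T₀ - Q ^ 2) (T₀ + Q ^ 2), ‖∑ k ∈ s, a k * ft (S k) T‖ ^ 2 ≤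
      3 * (‖∑ k ∈ s, a k * ft (gr ρ S Q k) T‖ ^ 2 + ‖∑ k ∈ s', a' k * ft (gr ρ S Q k) T‖ ^ 2 +
        (K * (225 * Cc)) ^ 2 / Q ^ 12) := by
    intro T hT
    set κ : ℝ := 2 * Real.cos (2 * Real.pi * (1 / (2 * Q ^ 4) * T)) - 2 with hκ
    have hcos : Real.cos (2 * Real.pi * (1 / (2 * Q ^ 4) * T)) ≤ 0 := by
      have e : 2 * Real.pi * (1 / (2 * Q ^ 4) * T) = Real.pi * (T / Q ^ 4) := by field_simp
      rw [e]
      have hpi := Real.pi_pos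
      have hq4 : (0 : ℝ) < Q ^ 4 := by positivity
      have h44 : 4 * Q ^ 2 ≤ Q ^ 4 := by nlinarith
      have b1 : 1 / 2 ≤ T / Q ^ 4 := by
        rw [le_div_iff₀ hq4]; have := hT.1; rw [hT₀] at this; linarith
      have b2 : T / Q ^ 4 ≤ 3 / 2 := by
        rw [div_le_iff₀ hq4]; have := hT.2; rw [hT₀] at this; linarith
      exact Real.cos_nonpos_of_pi_div_two_le_of_le (by nlinarith) (by nlinarith)
    have hsum : (κ : ℂ) * ∑ k ∈ s, a k * ft (S k) T =
        ∑ k ∈ s, a k * ft (gr ρ S Q k) T + ∑ k ∈ s, a k * ft (gm ρ S Q k) T +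
          (starRingEnd ℂ) (∑ k ∈ s', a' k * ft (gr ρ S Q k) T) := by
      rw [← hleft, Finset.mul_sum, ← Finset.sum_add_distrib, ← Finset.sum_add_distrib]
      refine Finset.sum_congr rfl fun k hk => ?_
      have h1 := ft_d2 (h.profile k (hs k hk)).integrable (1 / (2 * Q ^ 4)) T
      rw [h.ft_split (hs k hk) hQ0 hQc T] at h1
      rw [← mul_add, ← mul_add, h1]; ring
    have hnorm := congrArg norm hsum
    rw [norm_mul, Complex.norm_real, Real.norm_eq_abs] at hnorm
    have hκ1 : 1 ≤ |κ| := by rw [abs_of_nonpos (by linarith)]; linarith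
    have htri := norm_add₃_le (a := ∑ k ∈ s, a k * ft (gr ρ S Q k) T)
      (b := ∑ k ∈ s, a k * ft (gm ρ S Q k) T)
      (c := (starRingEnd ℂ) (∑ k ∈ s', a' k * ft (gr ρ S Q k) T))
    rw [← hnorm, RCLike.norm_conj] at htri
    have hm := hmid T
    set x := ‖∑ k ∈ s, a k * ft (gr ρ S Q k) T‖
    set y := ‖∑ k ∈ s, a k * ft (gm ρ S Q k) T‖
    set z := ‖∑ k ∈ s', a' k * ft (gr ρ S Q k) T‖
    have hx : ‖∑ k ∈ s, a k * ft (S k) T‖ ≤ x + y + z :=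
      (le_mul_of_one_le_left (norm_nonneg _) hκ1).trans htri
    calc _ ≤ (x + y + z) ^ 2 := by gcongr
      _ ≤ 3 * (x ^ 2 + z ^ 2 + y ^ 2) := by
        nlinarith [sq_nonneg (x - y), sq_nonneg (y - z), sq_nonneg (x - z)]
      _ ≤ _ := by gcongr
  have hc1 : Continuous fun T => ‖∑ k ∈ s, a k * ft (gr ρ S Q k) T‖ ^ 2 :=
    (continuous_finsetSum _ fun k hk => continuous_const.mul
      (continuous_ft (h.integrable_gr (hs k hk) Q))).norm.pow 2
  have hc2 : Continuous fun T => ‖∑ k ∈ s', a' k * ft (gr ρ S Q k) T‖ ^ 2 :=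
    (continuous_finsetSum _ fun k hk => continuous_const.mul
      (continuous_ft (h.integrable_gr (neg_ne_zero.1 (hs _ (hmem k hk))) Q))).norm.pow 2
  have hc3 : Continuous fun T => ‖∑ k ∈ s, a k * ft (S k) T‖ ^ 2 :=
    (continuous_finsetSum _ fun k hk => continuous_const.mul
      (continuous_ft (h.profile k (hs k hk)).integrable)).norm.pow 2
  refine (intervalIntegral.integral_mono_on (by linarith) (hc3.intervalIntegrable _ _)
    ((continuous_const.mul ((hc1.add hc2).add continuous_const)).intervalIntegrable _ _)
    hpt).trans ?_
  simp only [Pi.mul_apply, Pi.add_apply]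
  rw [intervalIntegral.integral_const_mul, intervalIntegral.integral_add
      (f := fun T => ‖∑ k ∈ s, a k * ft (gr ρ S Q k) T‖ ^ 2 +
        ‖∑ k ∈ s', a' k * ft (gr ρ S Q k) T‖ ^ 2)
      ((hc1.add hc2).intervalIntegrable _ _) (continuous_const.intervalIntegrable _ _),
    intervalIntegral.integral_add (hc1.intervalIntegrable _ _) (hc2.intervalIntegrable _ _),
    intervalIntegral.integral_const]
  have e : (T₀ + Q ^ 2 - (T₀ - Q ^ 2)) • ((K * (225 * Cc)) ^ 2 / Q ^ 12) =
      2 * (K * (225 * Cc)) ^ 2 / Q ^ 10 := by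
    rw [smul_eq_mul]; field_simp; ring
  rw [e]
  calc _ ≤ 3 * (D / Q ^ 10 + D / Q ^ 10 + 2 * (K * (225 * Cc)) ^ 2 / Q ^ 10) := by gcongr
    _ = _ := by ring

end Sys

/-! ### From exponential sums to the lattice rest -/

/-- If the majorant `b` has total mass at most `1` outside `s`, then the sum of the series is within
`1` of its partial sum over `s ∪ {0}`.  The term at `0`, where no majorant is assumed, is kept
separate. -/
lemma hasSum_near {f : Z2 → ℂ} {a : ℂ} (hf : HasSum f a) {b : Z2 → ℝ}
    (hb : ∀ k, k ≠ 0 → ‖f k‖ ≤ b k) {s : Finset Z2}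
    (hs : ∀ t : Finset Z2, Disjoint t s → ∑ k ∈ t, b k ≤ 1) :
    ‖a - (f 0 + ∑ k ∈ s.erase 0, f k)‖ ≤ 1 := by
  have h0 : (0 : Z2) ∉ s.erase 0 := Finset.notMem_erase _ _
  rw [← Finset.sum_insert h0]
  refine le_of_tendsto ((Filter.Tendsto.sub_const hf _).norm) ?_
  filter_upwards [Filter.eventually_ge_atTop (insert 0 (s.erase 0))] with u hu
  rw [← Finset.sum_sdiff hu, add_sub_cancel_right]
  refine (norm_sum_le _ _).trans ((Finset.sum_le_sum fun k hk => hb k ?_).trans (hs _ ?_))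
  · rintro rfl
    exact (Finset.mem_sdiff.1 hk).2 (Finset.mem_insert_self _ _)
  · rw [Finset.disjoint_left]
    intro k hk hks
    have := (Finset.mem_sdiff.1 hk).2
    rw [Finset.mem_insert, Finset.mem_erase] at this
    push Not at this
    exact this.2 this.1 hks

lemma exists_finset_tail (M : ℝ) : ∃ s : Finset Z2, ∀ t : Finset Z2, Disjoint t s →
    ∑ k ∈ t, M / ‖k‖ ^ 3 ≤ 1 := by
  have h1 : Summable fun k : Z2 => M / ‖k‖ ^ 3 := by
    have := (EisensteinSeries.summable_one_div_norm_rpow (k := 3) (by norm_num)).mul_left M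
    refine this.congr fun k => ?_
    rw [Real.rpow_neg (norm_nonneg _), div_eq_mul_inv]
    rw [show (3 : ℝ) = ((3 : ℕ) : ℝ) by norm_num, Real.rpow_natCast]
  obtain ⟨s, hs⟩ := summable_iff_vanishing_norm.1 h1 1 one_pos
  exact ⟨s, fun t ht => (le_abs_self _).trans (hs t ht).le⟩

namespace Body
variable {Ω : Set E2}

lemma latticeCount_finite (h : Body Ω) (t : ℝ) : {k : Fin 2 → ℤ | ek k ∈ t • Ω}.Finite := by
  have := finite_translates (h.bdd.smul₀ t) 0
  simpa using this

lemma smul_mono (h : Body Ω) {t t' : ℝ} (ht : 0 < t) (htt : t ≤ t') : t • Ω ⊆ t' • Ω := by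
  rintro _ ⟨x, hx, rfl⟩
  have ht' : 0 < t' := ht.trans_le htt
  refine ⟨(t / t') • x, ?_, ?_⟩
  · have := h.conv.smul_mem_of_zero_mem h.zero_mem hx (t := t / t')
      ⟨by positivity, (div_le_one ht').2 htt⟩
    exact this
  · simp only [smul_smul]
    rw [mul_div_cancel₀ _ ht'.ne']

lemma count_mono (h : Body Ω) {t t' : ℝ} (ht : 0 < t) (htt : t ≤ t') :
    latticeCount (t • Ω) ≤ latticeCount (t' • Ω) :=
  Nat.card_mono (h.latticeCount_finite t') fun _ hk => h.smul_mono ht htt hk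

lemma rest_integrable (h : Body Ω) {x y : ℝ} (hx : 0 < x) (hxy : x ≤ y) :
    IntervalIntegrable (fun t => latticeRest Ω t ^ 2) volume x y := by
  have hm : MonotoneOn (fun t : ℝ => (latticeCount (t • Ω) : ℝ)) (uIcc x y) := by
    rw [uIcc_of_le hxy]
    intro t ht t' _ htt
    exact Nat.cast_le.2 (h.count_mono (hx.trans_le ht.1) htt)
  have hm2 : MonotoneOn (fun t : ℝ => (latticeCount (t • Ω) : ℝ) ^ 2) (uIcc x y) :=
    fun t ht t' ht' htt => pow_le_pow_left₀ (Nat.cast_nonneg _) (hm ht ht' htt) 2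
  have h1 := hm.intervalIntegrable (μ := volume)
  have h2 := hm2.intervalIntegrable (μ := volume)
  have h3 := h1.mul_continuousOn
    (g := fun t => 2 * (t ^ 2 * (volume Ω).toReal)) (by fun_prop)
  have h4 : IntervalIntegrable (fun t : ℝ => (t ^ 2 * (volume Ω).toReal) ^ 2) volume x y :=
    Continuous.intervalIntegrable (by fun_prop) _ _
  refine ((h2.sub h3).add h4).congr ?_
  intro t _
  simp only [latticeRest]
  ring

end Body

namespace Sys
variable {Ω : Set E2} {K c C : ℝ}

lemma norm_J_le (h : Body Ω)
    (H : Sys (fun x => suppFn Ω (WithLp.toLp 2 x)) (fun k => chordLen Ω (ek k)) K c C)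
    {k : Z2} (hk : k ≠ 0) {T : ℝ} (hT : 0 < T) :
    ‖J Ω (ek k) T‖ ≤ K / (‖k‖ * √‖k‖) / (T * √T) := by
  rw [h.J_eq_ft (ek_ne_zero hk)]
  exact (H.profile k hk).norm_ft_le hT

/-- Decay of the coefficients coming from smoothing at scale `1 / Q ^ 2`. -/
lemma coeff_le (h : Body Ω)
    (H : Sys (fun x => suppFn Ω (WithLp.toLp 2 x)) (fun k => chordLen Ω (ek k)) K c C)
    {k : Z2} (hk : k ≠ 0) {Q : ℝ} (hQ : 1 ≤ Q) :
    ‖J Ω (ek k) (1 / Q ^ 2)‖ / Body.area Ω ≤ 1 ∧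
    ‖J Ω (ek k) (1 / Q ^ 2)‖ / Body.area Ω ≤
      K / Body.area Ω * Q ^ 3 / (‖k‖ * √‖k‖) ∧
    ‖J Ω (ek k) (1 / Q ^ 2)‖ / Body.area Ω ≤
      (1 + K / Body.area Ω) * Q ^ 2 / ‖k‖ := by
  have hA := h.area_pos
  have hK := H.K_nonneg
  have hQ0 : 0 < Q := by linarith
  have hk1 := one_le_norm hk
  have hs0 : 0 < √‖k‖ := Real.sqrt_pos.2 (by linarith)
  have h1 : ‖J Ω (ek k) (1 / Q ^ 2)‖ / Body.area Ω ≤ 1 :=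
    (div_le_one hA).2 (Body.norm_J_le Ω _ _)
  have h2 : ‖J Ω (ek k) (1 / Q ^ 2)‖ / Body.area Ω ≤
      K / Body.area Ω * Q ^ 3 / (‖k‖ * √‖k‖) := by
    have h3 := norm_J_le h H hk (T := 1 / Q ^ 2) (by positivity)
    have e : √(1 / Q ^ 2) = 1 / Q := by
      rw [Real.sqrt_div zero_le_one, Real.sqrt_one, Real.sqrt_sq hQ0.le]
    rw [e] at h3
    calc _ ≤ K / (‖k‖ * √‖k‖) / (1 / Q ^ 2 * (1 / Q)) / Body.area Ω := by gcongr
      _ = _ := by field_simp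
  refine ⟨h1, h2, ?_⟩
  rcases le_or_gt (Q ^ 2) ‖k‖ with hc | hc
  · have hsq : Q ≤ √‖k‖ := Real.le_sqrt_of_sq_le hc
    refine h2.trans ?_
    calc K / Body.area Ω * Q ^ 3 / (‖k‖ * √‖k‖) ≤ K / Body.area Ω * Q ^ 3 / (‖k‖ * Q) := by
          gcongr
      _ = K / Body.area Ω * Q ^ 2 / ‖k‖ := by field_simp
      _ ≤ _ := by gcongr; linarith
  · refine h1.trans ?_
    rw [le_div_iff₀ (by linarith)]
    have : 0 ≤ K / Body.area Ω := by positivity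
    nlinarith

/-- Truncation of the Poisson series to finitely many frequencies. -/
lemma truncate (h : Body Ω)
    (H : Sys (fun x => suppFn Ω (WithLp.toLp 2 x)) (fun k => chordLen Ω (ek k)) K c C)
    {Q : ℝ} (hQ : 1 ≤ Q) : ∃ s : Finset Z2, (∀ k ∈ s, k ≠ 0) ∧ ∀ (a : Z2 → ℂ),
      a 0 = 1 → (∀ k, k ≠ 0 → ‖a k‖ ≤ K / Body.area Ω * Q ^ 3 / (‖k‖ * √‖k‖)) →
      ∀ T : ℝ, 1 ≤ T → T ≤ 3 * Q ^ 4 → ∀ x : ℝ,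
        HasSum (fun k : Z2 => (T : ℂ) ^ 2 * J Ω (ek k) T * a k) (x : ℂ) →
        |x - T ^ 2 * Body.area Ω| ≤ 1 + T ^ 2 * ‖∑ k ∈ s, a k * ft (chordLen Ω (ek k)) T‖ := by
  have hA := h.area_pos
  have hK := H.K_nonneg
  have hQ0 : 0 < Q := by linarith
  set M := 3 * Q ^ 4 * K * (K / Body.area Ω * Q ^ 3) with hM
  obtain ⟨s, hs⟩ := exists_finset_tail M
  refine ⟨s.erase 0, fun k hk => Finset.ne_of_mem_erase hk, fun a ha0 ha T hT1 hT x hx => ?_⟩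
  have hT0 : 0 < T := by linarith
  have hn := hasSum_near hx (b := fun k => M / ‖k‖ ^ 3) (fun k hk => ?_) hs
  · have e0 : ek (0 : Z2) = 0 := by ext i; simp [ek]
    rw [ha0, e0, Body.J_zero, mul_one] at hn
    have e1 : ∑ k ∈ s.erase 0, (T : ℂ) ^ 2 * J Ω (ek k) T * a k =
        (T : ℂ) ^ 2 * ∑ k ∈ s.erase 0, a k * ft (chordLen Ω (ek k)) T := by
      rw [Finset.mul_sum]
      refine Finset.sum_congr rfl fun k hk => ?_
      rw [h.J_eq_ft (ek_ne_zero (Finset.ne_of_mem_erase hk))]; ring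
    rw [e1] at hn
    set Z := ∑ k ∈ s.erase 0, a k * ft (chordLen Ω (ek k)) T
    have e2 : ((x - T ^ 2 * Body.area Ω : ℝ) : ℂ) =
        (x - ((T : ℂ) ^ 2 * Body.area Ω + (T : ℂ) ^ 2 * Z)) + (T : ℂ) ^ 2 * Z := by
      push_cast; ring
    have e3 := congrArg norm e2
    rw [Complex.norm_real, Real.norm_eq_abs] at e3
    rw [e3]
    refine (norm_add_le _ _).trans (add_le_add hn (le_of_eq ?_))
    rw [norm_mul, norm_pow, Complex.norm_real, Real.norm_eq_abs, sq_abs]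
  · have hk1 := one_le_norm hk
    have hs0 : 0 < √‖k‖ := Real.sqrt_pos.2 (by linarith)
    have hsq : √‖k‖ ^ 2 = ‖k‖ := Real.sq_sqrt (by linarith)
    have hsT0 : 0 < √T := Real.sqrt_pos.2 hT0
    have hsT1 : 1 ≤ √T := Real.one_le_sqrt.2 hT1
    rw [norm_mul, norm_mul, norm_pow, Complex.norm_real, Real.norm_eq_abs, sq_abs]
    calc T ^ 2 * ‖J Ω (ek k) T‖ * ‖a k‖
        ≤ T ^ 2 * (K / (‖k‖ * √‖k‖) / (T * √T)) *
          (K / Body.area Ω * Q ^ 3 / (‖k‖ * √‖k‖)) := by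
          gcongr
          · exact norm_J_le h H hk hT0
          · exact ha k hk
      _ ≤ T ^ 2 * (K / (‖k‖ * √‖k‖) / (T * 1)) *
          (K / Body.area Ω * Q ^ 3 / (‖k‖ * √‖k‖)) := by gcongr
      _ = T * K * (K / Body.area Ω * Q ^ 3) / (‖k‖ ^ 2 * √‖k‖ ^ 2) := by field_simp
      _ = T * K * (K / Body.area Ω * Q ^ 3) / ‖k‖ ^ 3 := by rw [hsq]; ring
      _ ≤ M / ‖k‖ ^ 3 := by rw [hM]; gcongr

/-- Passage from the one-sided bounds for the count to the square of the rest. -/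
lemma sq_rest_le {N x₁ x₂ t e A Q y₁ y₂ : ℝ} (hA : 0 < A) (hQ : 1 ≤ Q) (he0 : 0 < e) (he1 : e ≤ 1)
    (het : e ≤ t) (ht : t + e ≤ 2 * Q ^ 4) (hte : t * e ≤ 5 / 4 * Q ^ 2)
    (h1 : N ≤ x₁) (h2 : x₂ ≤ N) (hy₁0 : 0 ≤ y₁) (hy₂0 : 0 ≤ y₂)
    (t1 : x₁ - (t + e) ^ 2 * A ≤ 1 + (t + e) ^ 2 * y₁)
    (t2 : -(1 + (t - e) ^ 2 * y₂) ≤ x₂ - (t - e) ^ 2 * A) :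
    (N - t ^ 2 * A) ^ 2 ≤ 3 * (((4 * A + 1) * Q ^ 2) ^ 2 + 16 * Q ^ 16 * y₁ ^ 2 +
      16 * Q ^ 16 * y₂ ^ 2) := by
  have hQ2 : 1 ≤ Q ^ 2 := one_le_pow₀ hQ
  have hte0 : 0 < t * e := mul_pos (by linarith) he0
  have hee : e ^ 2 ≤ 1 := pow_le_one₀ he0.le he1
  have q1 : (t + e) ^ 2 * y₁ ≤ 4 * Q ^ 8 * y₁ := by
    refine mul_le_mul_of_nonneg_right ?_ hy₁0
    calc (t + e) ^ 2 ≤ (2 * Q ^ 4) ^ 2 := pow_le_pow_left₀ (by linarith) ht 2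
      _ = _ := by ring
  have q2 : (t - e) ^ 2 * y₂ ≤ 4 * Q ^ 8 * y₂ := by
    refine mul_le_mul_of_nonneg_right ?_ hy₂0
    calc (t - e) ^ 2 ≤ (2 * Q ^ 4) ^ 2 := pow_le_pow_left₀ (by linarith) (by linarith) 2
      _ = _ := by ring
  have p1 : 0 ≤ 4 * Q ^ 8 * y₁ := by positivity
  have p2 : 0 ≤ 4 * Q ^ 8 * y₂ := by positivity
  have m1 : (2 * (t * e) + e ^ 2) * A ≤ 4 * Q ^ 2 * A :=
    mul_le_mul_of_nonneg_right (by linarith) hA.le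
  have m2 : 2 * (t * e) * A ≤ 4 * Q ^ 2 * A :=
    mul_le_mul_of_nonneg_right (by linarith) hA.le
  have m3 : 0 ≤ e ^ 2 * A := by positivity
  set X := (4 * A + 1) * Q ^ 2 with hX
  have hE : |N - t ^ 2 * A| ≤ X + 4 * Q ^ 8 * y₁ + 4 * Q ^ 8 * y₂ := by
    rw [abs_le]
    constructor <;> linarith
  rw [← sq_abs]
  calc |N - t ^ 2 * A| ^ 2 ≤ (X + 4 * Q ^ 8 * y₁ + 4 * Q ^ 8 * y₂) ^ 2 :=
        pow_le_pow_left₀ (abs_nonneg _) hE 2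
    _ ≤ 3 * (X ^ 2 + (4 * Q ^ 8 * y₁) ^ 2 + (4 * Q ^ 8 * y₂) ^ 2) := by
        linarith [sq_nonneg (X - 4 * Q ^ 8 * y₁), sq_nonneg (X - 4 * Q ^ 8 * y₂),
          sq_nonneg (4 * Q ^ 8 * y₁ - 4 * Q ^ 8 * y₂)]
    _ = _ := by ring

set_option maxHeartbeats 1000000 in
/-- The short-interval estimate, for `R = Q ^ 4` large. -/
theorem short_bound (h : Body Ω)
    (H : Sys (fun x => suppFn Ω (WithLp.toLp 2 x)) (fun k => chordLen Ω (ek k)) K c C) :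
    ∃ D : ℝ, 0 ≤ D ∧ ∀ Q, Qmin c C ≤ Q →
      ∫ t in (Q ^ 4)..(Q ^ 4 + Q ^ 2), latticeRest Ω t ^ 2 ≤ D * Q ^ 6 := by
  have hA := h.area_pos
  have hK := H.K_nonneg
  obtain ⟨D, hD0, hD⟩ := H.main_bound (Cc := 1 + K / Body.area Ω)
    (by have : 0 ≤ K / Body.area Ω := by positivity
        linarith)
  refine ⟨3 * ((4 * Body.area Ω + 1) ^ 2 + 16 * D + 16 * D), by positivity, fun Q hQ => ?_⟩
  obtain ⟨hQ2, hQc, -, -⟩ := H.Qmin_spec hQ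
  have hQ0 : 0 < Q := by linarith
  have hQ1 : 1 ≤ Q := by linarith
  have hQsq : 4 ≤ Q ^ 2 := by nlinarith
  have hQ4 : 4 * Q ^ 2 ≤ Q ^ 4 := by nlinarith
  obtain ⟨s, hs0, hs⟩ := truncate h H hQ1
  set e := 1 / Q ^ 2 with he
  have he0 : 0 < e := by positivity
  have he1 : e ≤ 1 := by rw [he, div_le_one (by positivity)]; linarith
  have heQ : e * Q ^ 2 = 1 := by rw [he]; field_simp
  have hJ0 : J Ω (ek 0) e = Body.area Ω := by
    rw [show ek (0 : Z2) = 0 by ext i; simp [ek], Body.J_zero]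
  set a₁ : Z2 → ℂ := fun k => (starRingEnd ℂ) (J Ω (ek k) e) / Body.area Ω with ha₁
  set a₂ : Z2 → ℂ := fun k => J Ω (ek k) e / Body.area Ω with ha₂
  have hAne : (Body.area Ω : ℂ) ≠ 0 := by exact_mod_cast hA.ne'
  have n1 : ∀ k, ‖a₁ k‖ = ‖J Ω (ek k) e‖ / Body.area Ω := fun k => by
    rw [ha₁]; simp only [norm_div, RCLike.norm_conj, Complex.norm_real, Real.norm_eq_abs,
      abs_of_pos hA]
  have n2 : ∀ k, ‖a₂ k‖ = ‖J Ω (ek k) e‖ / Body.area Ω := fun k => by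
    rw [ha₂]; simp only [norm_div, Complex.norm_real, Real.norm_eq_abs, abs_of_pos hA]
  have z1 : a₁ 0 = 1 := by
    simp only [ha₁, hJ0, Complex.conj_ofReal]; exact div_self hAne
  have z2 : a₂ 0 = 1 := by simp only [ha₂, hJ0]; exact div_self hAne
  set F₁ : ℝ → ℝ := fun T => ‖∑ k ∈ s, a₁ k * ft (chordLen Ω (ek k)) T‖ ^ 2 with hF₁
  set F₂ : ℝ → ℝ := fun T => ‖∑ k ∈ s, a₂ k * ft (chordLen Ω (ek k)) T‖ ^ 2 with hF₂
  have b1 := hD Q hQ s hs0 a₁ (fun k hk => by rw [n1]; exact (coeff_le h H (hs0 k hk) hQ1).1)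
    (fun k hk => by rw [n1]; exact (coeff_le h H (hs0 k hk) hQ1).2.2)
  have b2 := hD Q hQ s hs0 a₂ (fun k hk => by rw [n2]; exact (coeff_le h H (hs0 k hk) hQ1).1)
    (fun k hk => by rw [n2]; exact (coeff_le h H (hs0 k hk) hQ1).2.2)
  have hcF : ∀ a : Z2 → ℂ, Continuous fun T => ‖∑ k ∈ s, a k * ft (chordLen Ω (ek k)) T‖ ^ 2 :=
    fun a => (continuous_finsetSum _ fun k hk => continuous_const.mul
      (continuous_ft (H.profile k (hs0 k hk)).integrable)).norm.pow 2
  have hsub : ∀ a : Z2 → ℂ, ∀ d, |d| ≤ 1 →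
      ∫ T in (Q ^ 4 + Q ^ 2 / 2 - Q ^ 2)..(Q ^ 4 + Q ^ 2 / 2 + Q ^ 2),
        ‖∑ k ∈ s, a k * ft (chordLen Ω (ek k)) T‖ ^ 2 ≤ D / Q ^ 10 →
      ∫ t in (Q ^ 4)..(Q ^ 4 + Q ^ 2),
        ‖∑ k ∈ s, a k * ft (chordLen Ω (ek k)) (t + d)‖ ^ 2 ≤ D / Q ^ 10 := by
    intro a d hd hle
    obtain ⟨hd1, hd2⟩ := abs_le.1 hd
    rw [intervalIntegral.integral_comp_add_right
      (fun T => ‖∑ k ∈ s, a k * ft (chordLen Ω (ek k)) T‖ ^ 2)]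
    refine (intervalIntegral.integral_mono_interval (by linarith) (by linarith) (by linarith) ?_
      ((hcF a).intervalIntegrable _ _)).trans hle
    filter_upwards with T using sq_nonneg _
  have c1 := hsub a₁ e (by rw [abs_of_pos he0]; exact he1) b1
  have c2 := hsub a₂ (-e) (by rw [abs_neg, abs_of_pos he0]; exact he1) b2
  have hpt : ∀ t ∈ Icc (Q ^ 4) (Q ^ 4 + Q ^ 2), latticeRest Ω t ^ 2 ≤
      3 * (((4 * Body.area Ω + 1) * Q ^ 2) ^ 2 + 16 * Q ^ 16 * F₁ (t + e) +
        16 * Q ^ 16 * F₂ (t + -e)) := by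
    intro t ht
    obtain ⟨ht1, ht2⟩ := ht
    obtain ⟨x₁, hx₁, hsum₁⟩ := h.count_le (t := t) (e := e) (by linarith) he0
    obtain ⟨x₂, hx₂, hsum₂⟩ := h.le_count (t := t) (e := e) he0 (by linarith)
    have t1 := hs a₁ z1 (fun k hk => by rw [n1]; exact (coeff_le h H hk hQ1).2.1) (t + e)
      (by linarith) (by linarith) x₁ hsum₁
    have t2 := hs a₂ z2 (fun k hk => by rw [n2]; exact (coeff_le h H hk hQ1).2.1) (t - e)
      (by linarith) (by linarith) x₂ hsum₂
    have t1' := (abs_le.1 t1).2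
    have t2' := (abs_le.1 t2).1
    have hte : t * e ≤ 5 / 4 * Q ^ 2 := by
      calc t * e ≤ (5 / 4 * Q ^ 4) * e := by gcongr; linarith
        _ = 5 / 4 * Q ^ 2 * (e * Q ^ 2) := by ring
        _ = _ := by rw [heQ, mul_one]
    have hF1 : F₁ (t + e) = ‖∑ k ∈ s, a₁ k * ft (chordLen Ω (ek k)) (t + e)‖ ^ 2 := rfl
    have hF2 : F₂ (t + -e) = ‖∑ k ∈ s, a₂ k * ft (chordLen Ω (ek k)) (t - e)‖ ^ 2 := by
      rw [← sub_eq_add_neg]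
    rw [hF1, hF2]
    exact sq_rest_le hA hQ1 he0 he1 (by linarith) (by linarith) hte hx₁ hx₂
      (norm_nonneg _) (norm_nonneg _) t1' t2'
  have hc1 : Continuous fun t => F₁ (t + e) := (hcF a₁).comp (by fun_prop)
  have hc2 : Continuous fun t => F₂ (t + -e) := (hcF a₂).comp (by fun_prop)
  refine (intervalIntegral.integral_mono_on (by linarith)
    (h.rest_integrable (by positivity) (by linarith))
    (Continuous.intervalIntegrable (by fun_prop) _ _) hpt).trans ?_
  rw [intervalIntegral.integral_const_mul, intervalIntegral.integral_add
      (Continuous.intervalIntegrable (by fun_prop) _ _)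
      (Continuous.intervalIntegrable (by fun_prop) _ _),
    intervalIntegral.integral_add (Continuous.intervalIntegrable (by fun_prop) _ _)
      (Continuous.intervalIntegrable (by fun_prop) _ _),
    intervalIntegral.integral_const, intervalIntegral.integral_const_mul,
    intervalIntegral.integral_const_mul, add_sub_cancel_left, smul_eq_mul]
  calc _ ≤ 3 * (Q ^ 2 * ((4 * Body.area Ω + 1) * Q ^ 2) ^ 2 + 16 * Q ^ 16 * (D / Q ^ 10) +
        16 * Q ^ 16 * (D / Q ^ 10)) := by gcongr
    _ = _ := by field_simp

end Sys

/-! ### From short intervals to all intervals -/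

namespace Body
variable {Ω : Set E2}

lemma abs_rest_le (h : Body Ω) {t T : ℝ} (ht : 0 < t) (htT : t ≤ T) :
    |latticeRest Ω t| ≤ latticeCount (T • Ω) + T ^ 2 * (volume Ω).toReal := by
  have h1 : (latticeCount (t • Ω) : ℝ) ≤ latticeCount (T • Ω) :=
    Nat.cast_le.2 (h.count_mono ht htT)
  have h2 : t ^ 2 * (volume Ω).toReal ≤ T ^ 2 * (volume Ω).toReal := by gcongr
  have h3 : 0 ≤ t ^ 2 * (volume Ω).toReal := by positivity
  have h4 : (0 : ℝ) ≤ latticeCount (t • Ω) := Nat.cast_nonneg _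
  simp only [latticeRest]
  rw [abs_le]
  constructor <;> linarith

/-- The short-interval estimate for every `R ≥ 2`: bounded `R` is covered by the trivial bound. -/
lemma short_all (h : Body Ω) (hc : CurvBddBelow Ω) :
    ∃ D : ℝ, 0 ≤ D ∧ ∀ R, 2 ≤ R →
      ∫ t in R..(R + √R), latticeRest Ω t ^ 2 ≤ D * (R * √R) := by
  obtain ⟨K, c, C, H⟩ := h.exists_sys hc
  obtain ⟨D, hD0, hD⟩ := H.short_bound h
  set R₀ := 2 + Sys.Qmin c C ^ 4 with hR₀
  set M := latticeCount ((2 * R₀) • Ω) + (2 * R₀) ^ 2 * (volume Ω).toReal with hM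
  have hsq : ∀ R : ℝ, 2 ≤ R → 1 ≤ √R ∧ √R ≤ R := fun R hR =>
    ⟨Real.one_le_sqrt.2 (by linarith), by
      rw [Real.sqrt_le_left (by linarith)]; nlinarith⟩
  refine ⟨max D (M ^ 2), le_max_of_le_left hD0, fun R hR => ?_⟩
  obtain ⟨hs1, hsR⟩ := hsq R hR
  rcases le_or_gt (Sys.Qmin c C ^ 4) R with hb | hb
  · have e1 : √(√R) ^ 2 = √R := Real.sq_sqrt (Real.sqrt_nonneg _)
    have e2 : √(√R) ^ 4 = R := by
      rw [show (4 : ℕ) = 2 * 2 by norm_num, pow_mul, e1, Real.sq_sqrt (by linarith)]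
    have e3 : √(√R) ^ 6 = R * √R := by
      rw [show (6 : ℕ) = 4 + 2 by norm_num, pow_add, e1, e2]
    have hQ : Sys.Qmin c C ≤ √(√R) := by
      refine le_of_pow_le_pow_left₀ (n := 4) (by norm_num) (Real.sqrt_nonneg _) ?_
      rwa [e2]
    have := hD _ hQ
    rw [e1, e2, e3] at this
    refine this.trans ?_
    gcongr
    exact le_max_left _ _
  · have h1 : ∫ t in R..(R + √R), latticeRest Ω t ^ 2 ≤ ∫ _t in R..(R + √R), M ^ 2 := by
      refine intervalIntegral.integral_mono_on (by linarith)
        (h.rest_integrable (by linarith) (by linarith)) (by simp) fun t ht => ?_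
      rw [← sq_abs]
      exact pow_le_pow_left₀ (abs_nonneg _)
        (h.abs_rest_le (by linarith [ht.1]) (by linarith [ht.2])) 2
    rw [intervalIntegral.integral_const, add_sub_cancel_left, smul_eq_mul] at h1
    refine h1.trans ?_
    calc √R * M ^ 2 ≤ R * √R * M ^ 2 := by
          refine mul_le_mul_of_nonneg_right ?_ (sq_nonneg M)
          nlinarith
      _ ≤ R * √R * max D (M ^ 2) := by
          gcongr
          exact le_max_right _ _
      _ = _ := by ring

/-- Cutting `[R, R + h]` into pieces of length `√R`. -/
lemma long_bound (hB : Body Ω) {D : ℝ} (hD0 : 0 ≤ D)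
    (hD : ∀ R, 2 ≤ R → ∫ t in R..(R + √R), latticeRest Ω t ^ 2 ≤ D * (R * √R))
    {R h : ℝ} (hR : 2 ≤ R) (h1 : √R ≤ h) (h2 : h ≤ R) :
    ∫ t in R..(R + h), latticeRest Ω t ^ 2 ≤ 12 * D * h * R := by
  have hs0 : 0 < √R := Real.sqrt_pos.2 (by linarith)
  have hss : √R * √R = R := Real.mul_self_sqrt (by linarith)
  set n := ⌈h / √R⌉₊ with hn
  have hn1 : h ≤ n * √R := (div_le_iff₀ hs0).1 (Nat.le_ceil _)
  have hn2 : n * √R ≤ h + √R := by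
    have : (n : ℝ) ≤ h / √R + 1 := (Nat.ceil_lt_add_one (div_nonneg (hs0.le.trans h1) hs0.le)).le
    calc n * √R ≤ (h / √R + 1) * √R := by gcongr
      _ = _ := by field_simp
  have hnn : ∀ᵐ t, 0 ≤ latticeRest Ω t ^ 2 := Filter.Eventually.of_forall fun t => sq_nonneg _
  have hInt : ∀ x y : ℝ, 0 < x → x ≤ y →
      IntervalIntegrable (fun t => latticeRest Ω t ^ 2) volume x y := fun x y => hB.rest_integrable
  set a : ℕ → ℝ := fun i => R + i * √R with ha
  have hmono : ∀ i, a i ≤ a (i + 1) := fun i => by simp only [ha]; push_cast; linarith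
  have haR : ∀ i, R ≤ a i := fun i => by
    have : 0 ≤ (i : ℝ) * √R := by positivity
    simp only [ha]; linarith
  have hstep : ∀ i < n, ∫ t in (a i)..(a (i + 1)), latticeRest Ω t ^ 2 ≤ 6 * D * (R * √R) := by
    intro i hi
    have hRi := haR i
    have hi3 : a i ≤ 3 * R := by
      have : (i : ℝ) * √R ≤ n * √R := by gcongr
      simp only [ha]; linarith
    have hsi : √R ≤ √(a i) := Real.sqrt_le_sqrt hRi
    have hs3 : √(a i) ≤ 2 * √R := by
      rw [Real.sqrt_le_left (by positivity), mul_pow, Real.sq_sqrt (by linarith)]; linarith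
    have e : a (i + 1) = a i + √R := by simp only [ha]; push_cast; ring
    calc ∫ t in (a i)..(a (i + 1)), latticeRest Ω t ^ 2
        ≤ ∫ t in (a i)..(a i + √(a i)), latticeRest Ω t ^ 2 :=
          intervalIntegral.integral_mono_interval le_rfl (hmono i) (by linarith)
            (ae_restrict_of_ae hnn) (hInt _ _ (by linarith) (by linarith))
      _ ≤ D * (a i * √(a i)) := hD _ (by linarith)
      _ ≤ D * (3 * R * (2 * √R)) := by gcongr
      _ = _ := by ring
  have e0 : a 0 = R := by simp [ha]
  calc ∫ t in R..(R + h), latticeRest Ω t ^ 2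
      ≤ ∫ t in (a 0)..(a n), latticeRest Ω t ^ 2 := by
        rw [e0]
        have : R + h ≤ a n := by simp only [ha]; linarith
        exact intervalIntegral.integral_mono_interval le_rfl (by linarith) this
          (ae_restrict_of_ae hnn) (hInt _ _ (by linarith) (haR n))
    _ = ∑ i ∈ Finset.range n, ∫ t in (a i)..(a (i + 1)), latticeRest Ω t ^ 2 :=
        (intervalIntegral.sum_integral_adjacent_intervals fun i _ =>
          hInt _ _ (by linarith [haR i]) (hmono i)).symm
    _ ≤ ∑ _i ∈ Finset.range n, 6 * D * (R * √R) :=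
        Finset.sum_le_sum fun i hi => hstep i (Finset.mem_range.1 hi)
    _ = 6 * D * R * (n * √R) := by
        rw [Finset.sum_const, Finset.card_range, nsmul_eq_mul]; ring
    _ ≤ 6 * D * R * (2 * h) := mul_le_mul_of_nonneg_left (by linarith) (by positivity)
    _ = _ := by ring

end Body

/-- Theorem 1.2: if `Ω` is a bounded open convex planar domain containing the
origin, with curvature bounded below in the generalized sense
`sup_{θ∈S¹} sup_{δ>0} δ^{-1/2} μ(θ,δ) < ∞`, then `𝒢_Ω(R,h) ≤ C_Ω √R` for `√R ≤ h ≤ R`,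
`R ≥ 2`. -/
theorem statement1 (Ω : Set E2) (hconv : Convex ℝ Ω) (hopen : IsOpen Ω)
    (hbdd : Bornology.IsBounded Ω) (h0 : (0 : E2) ∈ Ω) (hcurv : CurvBddBelow Ω) :
    ∃ C : ℝ, ∀ R h : ℝ, 2 ≤ R → Real.sqrt R ≤ h → h ≤ R →
      meanSquare Ω R h ≤ C * Real.sqrt R := by
  have hB : Body Ω := ⟨hconv, hopen, hbdd, h0⟩
  obtain ⟨D, hD0, hD⟩ := hB.short_all hcurv
  refine ⟨√(12 * D), fun R h hR h1 h2 => ?_⟩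
  have hh : 0 < h := (Real.sqrt_pos.2 (by linarith)).trans_le h1
  rw [meanSquare, ← Real.sqrt_mul (by positivity)]
  refine Real.sqrt_le_sqrt ?_
  calc (1 / h) * ∫ t in R..(R + h), (latticeRest Ω t) ^ 2 ≤ (1 / h) * (12 * D * h * R) := by
        gcongr
        exact hB.long_bound hD0 hD hR h1 h2
    _ = _ := by field_simp

end
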